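/- arXiv:1509.07908 — 6 statements merged into one kernel-verified Lean document; each statement's English description precedes it below -/
import Mathlib

section
/- Let d be a positive integer, let p ≥ q ≥ 2d be positive integers, and let 0 < δ < 1. Then there exists a positive integer c = c(p,q,d,δ) such that the following holds: for any finite family 𝓕 of at least p compact convex sets in ℝ^d, each of diameter at least one, if among every p sets of 𝓕 there are q whose intersection has diameter at least one, then there exist c convex sets K₁, K₂, …, K_c in ℝ^d, each of diameter at least 1 − δ, such that every set in 𝓕 contains at least one K_i. -/
/-!
A finite norming net of functionals fixes, up to the loss `δ`, the direction `f` of a long segment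
inside an intersection of members of `F`. For a fixed `f`, the pairs `(x, y) ∈ E × E` with
`f (x - y) = 1 - δ` form an affine hyperplane of dimension `2d - 1`, where `d = dim E`, and a convex
set `A` contains the segment `[x, y]` iff the trace of `A × A` on that hyperplane contains `(x, y)`.
Helly's theorem there has Helly number `2d`, which is where `q ≥ 2d` enters.

It remains to pierce the traces by boundedly many points, one hyperplane for each `f`, where each
large tuple of members of `F` is only known to have many intersecting traces in *some* hyperplane.
The Alon–Kleitman scheme carries over to such colours: a fractional Helly theorem yields, for every
weighting of `F`, a point in a positive fraction of the traces; the minimax theorem turns this into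
a measure on points charging every trace; weak `ε`-nets discretise the measure. Since `F` carries
real weights, fractional Helly is proved by averaging over random tuples: a point minimising the
norm over an intersection of more than `dim` sets stays minimal when a suitable set is dropped, so
resampling that set alone shows that one such point lies in many sets.
-/

namespace PQDiameter

open Module Set

section Mass

variable {ι T : Type*} [Fintype ι] [Fintype T]

/-- The total weight of a set `s` under a weight function `w` on a finite type: a finitely
supported measure, encoded by its density so that events need neither measurability nor
decidability. -/
noncomputable def mass (w : ι → ℝ) (s : Set ι) : ℝ := ∑ a, s.indicator w a

@[simp] lemma mass_univ (w : ι → ℝ) : mass w univ = ∑ a, w a := by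
  simp only [mass, indicator_univ]

lemma mass_eq_sum_mul_indicator_one (w : ι → ℝ) (s : Set ι) :
    mass w s = ∑ a, w a * s.indicator 1 a :=
  Finset.sum_congr rfl fun a _ => by by_cases ha : a ∈ s <;> simp [ha]

lemma mass_nonneg {w : ι → ℝ} (hw : 0 ≤ w) (s : Set ι) : 0 ≤ mass w s :=
  Finset.sum_nonneg fun a _ => indicator_nonneg (fun _ _ => hw _) a

lemma mass_mono {w : ι → ℝ} (hw : 0 ≤ w) {s t : Set ι} (h : s ⊆ t) : mass w s ≤ mass w t :=
  Finset.sum_le_sum fun a _ => indicator_le_indicator_of_subset h hw a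

lemma mass_le_sum {w : ι → ℝ} (hw : 0 ≤ w) (s : Set ι) : mass w s ≤ ∑ a, w a :=
  mass_univ w ▸ mass_mono hw (subset_univ s)

lemma mass_smul (r : ℝ) (w : ι → ℝ) (s : Set ι) : mass (r • w) s = r * mass w s := by
  simp only [mass, Finset.mul_sum]
  exact Finset.sum_congr rfl fun a _ => indicator_const_smul_apply s r w a

lemma mass_indicator (w : ι → ℝ) (s t : Set ι) : mass (s.indicator w) t = mass w (t ∩ s) := by
  simp only [mass, indicator_indicator]

lemma mass_union_of_disjoint (w : ι → ℝ) {s t : Set ι} (h : Disjoint s t) :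
    mass w (s ∪ t) = mass w s + mass w t := by
  simp only [mass, indicator_union_of_disjoint h, Finset.sum_add_distrib]

lemma nonempty_of_mass_pos {w : ι → ℝ} {s : Set ι} (h : 0 < mass w s) : s.Nonempty := by
  by_contra! hs
  simp [mass, hs] at h

lemma mass_le_sum_mass {w : ι → ℝ} (hw : 0 ≤ w) {s : Set ι} {Q : T → Set ι}
    (hs : s ⊆ ⋃ t, Q t) : mass w s ≤ ∑ t, mass w (Q t) := by
  simp only [mass]
  rw [Finset.sum_comm]
  refine Finset.sum_le_sum fun a _ => ?_
  have hQ (t : T) : 0 ≤ (Q t).indicator w a := indicator_nonneg (fun _ _ => hw _) a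
  by_cases ha : a ∈ s
  · obtain ⟨t, ht⟩ := mem_iUnion.1 (hs ha)
    calc s.indicator w a = (Q t).indicator w a := by
          rw [indicator_of_mem ha, indicator_of_mem ht]
      _ ≤ ∑ t, (Q t).indicator w a :=
          Finset.single_le_sum (fun t _ => hQ t) (Finset.mem_univ t)
  · rw [indicator_of_notMem ha]
    exact Finset.sum_nonneg fun t _ => hQ t

lemma exists_mass_le_card_mul {w : ι → ℝ} (hw : 0 ≤ w) {s : Set ι} {Q : T → Set ι}
    (hs : s ⊆ ⋃ t, Q t) (hpos : 0 < mass w s) :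
    ∃ t, mass w s ≤ Fintype.card T * mass w (Q t) := by
  obtain ⟨a, ha⟩ := nonempty_of_mass_pos hpos
  obtain ⟨t₀, -⟩ := mem_iUnion.1 (hs ha)
  have hsum : ∑ _t : T, mass w s ≤ ∑ t, Fintype.card T * mass w (Q t) := by
    rw [Finset.sum_const, Finset.card_univ, nsmul_eq_mul, ← Finset.mul_sum]
    gcongr
    exact mass_le_sum_mass hw hs
  obtain ⟨t, -, ht⟩ := Finset.exists_le_of_sum_le ⟨t₀, Finset.mem_univ t₀⟩ hsum
  exact ⟨t, ht⟩

lemma exists_le_of_mem_stdSimplex {w : ι → ℝ} (hw : w ∈ stdSimplex ℝ ι) (f : ι → ℝ) :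
    ∃ a, ∑ b, w b * f b ≤ f a := by
  have : Nonempty ι := by
    by_contra! h
    simpa using hw.2
  obtain ⟨a, ha⟩ := Finite.exists_max f
  refine ⟨a, ?_⟩
  calc ∑ b, w b * f b ≤ ∑ b, w b * f a := by gcongr with b; exacts [hw.1 b, ha b]
    _ = f a := by rw [← Finset.sum_mul, hw.2, one_mul]

end Mass

section TupleWeight

variable {ι J : Type*} [Fintype J]

/-- The product weight on `J`-tuples: the density of independent samples drawn from `w`. -/
def tupleWeight (w : ι → ℝ) (i : J → ι) : ℝ := ∏ j, w (i j)

lemma tupleWeight_nonneg {w : ι → ℝ} (hw : 0 ≤ w) : 0 ≤ tupleWeight (J := J) w :=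
  fun _ => Finset.prod_nonneg fun _ _ => hw _

lemma tupleWeight_smul (r : ℝ) (w : ι → ℝ) :
    tupleWeight (J := J) (r • w) = r ^ Fintype.card J • tupleWeight w := by
  ext i
  simp only [tupleWeight, Pi.smul_apply, smul_eq_mul, Finset.prod_mul_distrib, Finset.prod_const,
    Finset.card_univ]

lemma prod_indicator_eq_indicator_tupleWeight (w : ι → ℝ) (s : J → Set ι) (i : J → ι) :
    ∏ j, (s j).indicator w (i j) = (univ.pi s).indicator (tupleWeight w) i := by
  classical
  simp only [indicator_apply, Finset.prod_ite_zero, mem_univ_pi, Finset.mem_univ, forall_const,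
    tupleWeight]

lemma tupleWeight_indicator (w : ι → ℝ) (s : Set ι) :
    tupleWeight (J := J) (s.indicator w) = (univ.pi fun _ => s).indicator (tupleWeight w) :=
  funext fun i => prod_indicator_eq_indicator_tupleWeight w (fun _ => s) i

variable [Fintype ι] [DecidableEq J]

lemma mass_tupleWeight_pi (w : ι → ℝ) (s : J → Set ι) :
    mass (tupleWeight w) (univ.pi s) = ∏ j, mass w (s j) := by
  simp only [mass, ← prod_indicator_eq_indicator_tupleWeight, Finset.prod_univ_sum,
    Fintype.piFinset_univ]

lemma sum_tupleWeight (w : ι → ℝ) :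
    ∑ i : J → ι, tupleWeight w i = (∑ a, w a) ^ Fintype.card J := by
  simpa using mass_tupleWeight_pi w fun _ : J => univ

lemma tupleWeight_mem_stdSimplex {w : ι → ℝ} (hw : w ∈ stdSimplex ℝ ι) :
    tupleWeight w ∈ stdSimplex ℝ (J → ι) :=
  ⟨tupleWeight_nonneg hw.1, by rw [sum_tupleWeight, hw.2, one_pow]⟩

lemma mass_tupleWeight_eval {w : ι → ℝ} (hw : w ∈ stdSimplex ℝ ι) (j : J) (s : Set ι) :
    mass (tupleWeight w) {i : J → ι | i j ∈ s} = mass w s := by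
  have hpi : {i : J → ι | i j ∈ s} = univ.pi (Function.update (fun _ => univ) j s) := by
    ext i
    simp [Function.update_apply]
  rw [hpi, mass_tupleWeight_pi, Finset.prod_eq_single j]
  · rw [Function.update_self]
  · intro k _ hk
    rw [Function.update_of_ne hk, mass_univ, hw.2]
  · simp

lemma mass_tupleWeight_eq_sum_piecewise {w : ι → ℝ} (hw : w ∈ stdSimplex ℝ ι) (S : Finset J)
    (A : Set (J → ι)) :
    mass (tupleWeight w) A =
      ∑ i, tupleWeight w i * mass (tupleWeight w) {i' | S.piecewise i' i ∈ A} := by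
  -- Exchanging the `S`-coordinates of two independent samples preserves their joint weight.
  have hswap : Function.Involutive fun x : (J → ι) × (J → ι) =>
      (S.piecewise x.2 x.1, S.piecewise x.1 x.2) := by
    intro x
    ext j <;> by_cases hj : j ∈ S <;> simp [hj]
  have hweight (i i' : J → ι) : tupleWeight w (S.piecewise i' i) *
      tupleWeight w (S.piecewise i i') = tupleWeight w i * tupleWeight w i' := by
    simp only [tupleWeight, ← Finset.prod_mul_distrib]
    refine Finset.prod_congr rfl fun j _ => ?_
    by_cases hj : j ∈ S <;> simp [hj, mul_comm]
  calc mass (tupleWeight w) A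
      = ∑ x : (J → ι) × (J → ι),
          tupleWeight w x.1 * tupleWeight w x.2 * A.indicator 1 x.1 := by
        simp only [Fintype.sum_prod_type, ← Finset.sum_mul, ← Finset.mul_sum,
          (tupleWeight_mem_stdSimplex hw).2, mul_one, mass_eq_sum_mul_indicator_one]
    _ = ∑ x : (J → ι) × (J → ι),
          tupleWeight w x.1 * tupleWeight w x.2 * A.indicator 1 (S.piecewise x.2 x.1) := by
        rw [← Equiv.sum_comp hswap.toPerm]
        simp only [Function.Involutive.coe_toPerm, hweight]
    _ = _ := by
        simp only [Fintype.sum_prod_type, mul_assoc, ← Finset.mul_sum,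
          mass_eq_sum_mul_indicator_one]
        rfl

variable {T : Type*} [Fintype T]

/- Pigeonhole over `T` makes one event likely; averaging then fixes the coordinates outside its
block. -/
lemma exists_one_le_card_mul_mass_piecewise {w : ι → ℝ} (hw : w ∈ stdSimplex ℝ ι)
    (S : T → Finset J) {Q : T → Set (J → ι)} (hQ : ⋃ t, Q t = univ) :
    ∃ t i, 1 ≤ Fintype.card T *
      mass (tupleWeight w) {i' | (S t).piecewise i' i ∈ Q t} := by
  have hW : tupleWeight w ∈ stdSimplex ℝ (J → ι) := tupleWeight_mem_stdSimplex hw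
  have hone : mass (tupleWeight w) (univ : Set (J → ι)) = 1 := by rw [mass_univ, hW.2]
  obtain ⟨t, ht⟩ := exists_mass_le_card_mul hW.1 hQ.ge (hone ▸ one_pos)
  obtain ⟨i, hi⟩ := exists_le_of_mem_stdSimplex hW
    fun i => mass (tupleWeight w) {i' | (S t).piecewise i' i ∈ Q t}
  rw [← mass_tupleWeight_eq_sum_piecewise hw (S t)] at hi
  refine ⟨t, i, ?_⟩
  rw [hone] at ht
  exact ht.trans (by gcongr)

end TupleWeight

section Selector

variable {V : Type*} [AddCommGroup V] [Module ℝ V]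

/- Helly's theorem for the sets `K k` together with the sublevel set `{y | f y < f x}`. -/
lemma exists_isMinOn_biInter_erase [FiniteDimensional ℝ V] {κ : Type*} [DecidableEq κ]
    {s : Finset κ} (hs : finrank ℝ V < s.card) {K : κ → Set V} (hK : ∀ k ∈ s, Convex ℝ (K k))
    {f : V → ℝ} (hf : QuasiconvexOn ℝ univ f) {x : V} (hx : x ∈ ⋂ k ∈ s, K k)
    (hmin : IsMinOn f (⋂ k ∈ s, K k) x) : ∃ k ∈ s, IsMinOn f (⋂ j ∈ s.erase k, K j) x := by
  by_contra! hlt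
  let K' : Option κ → Set V := fun o => o.elim {y | f y < f x} K
  have hconv : ∀ o ∈ s.insertNone, Convex ℝ (K' o) := by
    rintro (_ | k) hk
    · simpa [K'] using hf.convex_lt (f x)
    · exact hK k (Finset.some_mem_insertNone.1 hk)
  have hinter : ∀ I ⊆ s.insertNone, I.card = finrank ℝ V + 1 → (⋂ o ∈ I, K' o).Nonempty := by
    intro I hI hcard
    by_cases hnone : none ∈ I
    · obtain ⟨k, hk, hkI⟩ : ∃ k ∈ s, k ∉ I.eraseNone := by
        refine Finset.exists_mem_notMem_of_card_lt_card ?_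
        rw [Finset.card_eraseNone_of_mem hnone, hcard]
        omega
      obtain ⟨y, hy, hyx⟩ : ∃ y ∈ ⋂ j ∈ s.erase k, K j, f y < f x := by
        simpa [isMinOn_iff] using hlt k hk
      refine ⟨y, mem_iInter₂.2 ?_⟩
      rintro (_ | j) hj
      · exact hyx
      · refine mem_iInter₂.1 hy j (Finset.mem_erase.2 ⟨?_, Finset.some_mem_insertNone.1 (hI hj)⟩)
        rintro rfl
        exact hkI (Finset.mem_eraseNone.2 hj)
    · refine ⟨x, mem_iInter₂.2 ?_⟩
      rintro (_ | j) hj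
      exacts [absurd hj hnone, mem_iInter₂.1 hx j (Finset.some_mem_insertNone.1 (hI hj))]
  obtain ⟨y, hy⟩ := Convex.helly_theorem (by simp; omega) hconv hinter
  rw [mem_iInter₂] at hy
  have hyx : f y < f x := hy none (by simp)
  exact hyx.not_ge
    (hmin (mem_iInter₂.2 fun k hk => hy (some k) (Finset.some_mem_insertNone.2 hk)))

lemma eq_of_isMinOn_norm {E : Type*} [NormedAddCommGroup E] [NormedSpace ℝ E]
    [StrictConvexSpace ℝ E] {e : V →ₗ[ℝ] E} (he : Function.Injective e) {S : Set V}
    (hS : Convex ℝ S) {x y : V} (hxS : x ∈ S) (hyS : y ∈ S) (hx : IsMinOn (‖e ·‖) S x)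
    (hy : IsMinOn (‖e ·‖) S y) : x = y := by
  by_contra hxy
  have hlt := (norm_midpoint_lt_iff (le_antisymm (hx hyS) (hy hxS))).2 (he.ne hxy)
  rw [← map_add, ← map_smul] at hlt
  refine (hx (?_ : (1 / 2 : ℝ) • (x + y) ∈ S)).not_gt hlt
  rw [smul_add]
  exact hS hxS hyS (by norm_num) (by norm_num) (by norm_num)

lemma exists_isMinOn_norm_biInter_convexHull {E : Type*} [NormedAddCommGroup E]
    [NormedSpace ℝ E] [ProperSpace E] (e : V ≃ₗ[ℝ] E) {κ : Type*} {s : Finset κ}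
    {t : κ → Set V} (ht : ∀ k ∈ s, (t k).Finite) (hne : (⋂ k ∈ s, convexHull ℝ (t k)).Nonempty) :
    ∃ x ∈ ⋂ k ∈ s, convexHull ℝ (t k), IsMinOn (‖e ·‖) (⋂ k ∈ s, convexHull ℝ (t k)) x := by
  have hclosed : IsClosed (e '' ⋂ k ∈ s, convexHull ℝ (t k)) := by
    simp only [image_iInter e.bijective]
    refine isClosed_biInter fun k hk => ?_
    rw [← e.coe_toLinearMap, LinearMap.image_convexHull]
    exact ((ht k hk).image e).isClosed_convexHull ℝ
  obtain ⟨_, ⟨x, hx, rfl⟩, hdist⟩ := hclosed.exists_infDist_eq_dist (hne.image e) 0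
  refine ⟨x, hx, fun y hy => ?_⟩
  simpa [hdist] using Metric.infDist_le_dist_of_mem (x := (0 : E)) (mem_image_of_mem e hy)

/- The selector picks the point of least Euclidean norm: if that point minimises over the whole
intersection, it already minimises after deleting one of the sets. -/
lemma exists_selector (V : Type*) [AddCommGroup V] [Module ℝ V] [FiniteDimensional ℝ V]
    (κ : Type*) [DecidableEq κ] :
    ∃ σ : Set V → V, ∀ (s : Finset κ) (t : κ → Set V), finrank ℝ V < s.card →
      (∀ k ∈ s, (t k).Finite) → (⋂ k ∈ s, convexHull ℝ (t k)).Nonempty →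
        ∃ k ∈ s, σ (⋂ j ∈ s.erase k, convexHull ℝ (t j)) ∈ convexHull ℝ (t k) := by
  classical
  obtain ⟨e⟩ : Nonempty (V ≃ₗ[ℝ] EuclideanSpace ℝ (Fin (finrank ℝ V))) :=
    FiniteDimensional.nonempty_linearEquiv_of_finrank_eq (by simp)
  let σ : Set V → V := fun S => Classical.epsilon fun x => x ∈ S ∧ IsMinOn (‖e ·‖) S x
  refine ⟨σ, fun s t hs ht hne => ?_⟩
  obtain ⟨x, hx, hmin⟩ := exists_isMinOn_norm_biInter_convexHull e ht hne
  have hquasi : QuasiconvexOn ℝ univ (‖e ·‖) :=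
    (convexOn_univ_norm.comp_linearMap e.toLinearMap).quasiconvexOn
  obtain ⟨k, hk, hmin'⟩ :=
    exists_isMinOn_biInter_erase hs (fun k _ => convex_convexHull ℝ (t k)) hquasi hx hmin
  have hx' : x ∈ ⋂ j ∈ s.erase k, convexHull ℝ (t j) :=
    mem_iInter₂.2 fun j hj => mem_iInter₂.1 hx j (Finset.mem_of_mem_erase hj)
  obtain ⟨hσ, hσmin⟩ := Classical.epsilon_spec
    (p := fun x => x ∈ ⋂ j ∈ s.erase k, convexHull ℝ (t j) ∧ IsMinOn (‖e ·‖) _ x) ⟨x, hx', hmin'⟩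
  have hconv : Convex ℝ (⋂ j ∈ s.erase k, convexHull ℝ (t j)) :=
    convex_iInter₂ fun j _ => convex_convexHull ℝ (t j)
  have hσx : σ (⋂ j ∈ s.erase k, convexHull ℝ (t j)) = x :=
    eq_of_isMinOn_norm (e := e.toLinearMap) e.injective hconv hσ hx' hσmin hmin'
  exact ⟨k, hk, hσx ▸ mem_iInter₂.1 hx k hk⟩

end Selector

section PinnedHelly

variable {V ι J T κ : Type*} [AddCommGroup V] [Module ℝ V] [FiniteDimensional ℝ V]
  [Fintype ι] [Fintype J] [DecidableEq J] [Fintype T] [Fintype κ]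

/- After pinning all samples outside the block `B t k`, the selected point of the other sets no
longer moves, so it is a single point that lies in `K t k` with positive probability. The sets are
first shrunk to polytopes so that the selector applies. -/
lemma exists_one_le_card_mul_mass_mem {w : ι → ℝ} (hw : w ∈ stdSimplex ℝ ι) (s : T → Finset κ)
    (B : T → κ → Finset J) (hB : ∀ t, Pairwise (Function.onFun Disjoint (B t)))
    {K : T → κ → (J → ι) → Set V} (hconv : ∀ t k i, Convex ℝ (K t k i))
    (hdep : ∀ t k, DependsOn (K t k) (B t k))
    (hne : ∀ i, ∃ t, finrank ℝ V < (s t).card ∧ (⋂ k ∈ s t, K t k i).Nonempty) :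
    ∃ t k x, 1 ≤ Fintype.card (T × κ) * mass (tupleWeight w) {i | x ∈ K t k i} := by
  classical
  obtain ⟨σ, hσ⟩ := exists_selector V κ
  choose τ hcard x hx using hne
  let P (t : T) (k : κ) (i : J → ι) : Set V := x '' {i' | τ i' = t ∧ EqOn i' i (B t k)}
  have hPK {t k i} (hk : k ∈ s t) : convexHull ℝ (P t k i) ⊆ K t k i := by
    refine convexHull_min ?_ (hconv t k i)
    rintro _ ⟨i', ⟨rfl, hi'⟩, rfl⟩
    exact hdep _ k hi' ▸ mem_iInter₂.1 (hx i') k hk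
  have hPdep {t k i i'} (h : EqOn i i' (B t k)) : P t k i = P t k i' := by
    have hEqOn (i'' : J → ι) : EqOn i'' i (B t k) ↔ EqOn i'' i' (B t k) :=
      ⟨fun h' => h'.trans h, fun h' => h'.trans h.symm⟩
    simp only [P, hEqOn]
  let Q (tk : T × κ) : Set (J → ι) := {i | tk.2 ∈ s tk.1 ∧
    σ (⋂ j ∈ (s tk.1).erase tk.2, convexHull ℝ (P tk.1 j i)) ∈ convexHull ℝ (P tk.1 tk.2 i)}
  have hQ : ⋃ tk, Q tk = univ := by
    refine eq_univ_of_forall fun i => ?_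
    have hxi : x i ∈ ⋂ k ∈ s (τ i), convexHull ℝ (P (τ i) k i) := mem_iInter₂.2 fun k _ =>
      subset_convexHull ℝ _ (mem_image_of_mem x ⟨rfl, fun _ _ => rfl⟩)
    obtain ⟨k, hk, hσk⟩ := hσ (s (τ i)) _ (hcard i) (fun k _ => toFinite (P (τ i) k i)) ⟨_, hxi⟩
    exact mem_iUnion.2 ⟨(τ i, k), hk, hσk⟩
  obtain ⟨⟨t, k⟩, i, hi⟩ := exists_one_le_card_mul_mass_piecewise hw (fun tk => B tk.1 tk.2) hQ
  refine ⟨t, k, σ (⋂ j ∈ (s t).erase k, convexHull ℝ (P t j i)), hi.trans ?_⟩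
  gcongr
  refine mass_mono (tupleWeight_nonneg hw.1) fun i' ⟨hk, hi'⟩ => hPK hk ?_
  have hPk : P t k ((B t k).piecewise i' i) = P t k i' :=
    hPdep fun j hj => Finset.piecewise_eq_of_mem _ _ _ hj
  have hPj : ∀ j ∈ (s t).erase k, P t j ((B t k).piecewise i' i) = P t j i := fun j hj =>
    hPdep fun l hl => Finset.piecewise_eq_of_notMem _ _ _
      (Finset.disjoint_left.1 (hB t (Finset.ne_of_mem_erase hj)) hl)
  rwa [hPk, iInter₂_congr fun j hj => congrArg (convexHull ℝ) (hPj j hj)] at hi'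

end PinnedHelly

section WeakNet

/- Radon's theorem, applied to the `r + 1`-fold intersection points of `finrank ℝ V + 2` copies,
yields one more colour. -/
lemma exists_weak_tverberg (V : Type*) [AddCommGroup V] [Module ℝ V] [FiniteDimensional ℝ V]
    (r : ℕ) : ∃ n : ℕ, ∀ z : Fin n → V, ∃ c : Fin n → Fin (r + 1),
      (⋂ a, convexHull ℝ (z '' (c ⁻¹' {a}))).Nonempty := by
  induction r with
  | zero => exact ⟨1, fun z => ⟨0, z 0, mem_iInter.2 fun a => subset_convexHull ℝ _
      ⟨0, Subsingleton.elim (α := Fin 1) _ _, rfl⟩⟩⟩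
  | succ r ih =>
    classical
    obtain ⟨n, hn⟩ := ih
    refine ⟨(finrank ℝ V + 2) * n, fun z => ?_⟩
    choose c x hx using fun m : Fin (finrank ℝ V + 2) => hn fun l => z (finProdFinEquiv (m, l))
    have hdep : ¬ AffineIndependent ℝ x := by
      rw [← finrank_vectorSpan_le_iff_not_affineIndependent ℝ x (Fintype.card_fin _)]
      exact Submodule.finrank_le _
    obtain ⟨I, y, hyI, hyI'⟩ := Convex.radon_partition hdep
    let c' (ml : Fin (finrank ℝ V + 2) × Fin n) : Fin (r + 2) :=
      if ml.1 ∈ I then (c ml.1 ml.2).castSucc else Fin.last _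
    have hxc' (m a b) (hc' : ∀ l, c m l = a → c' (m, l) = b) :
        x m ∈ convexHull ℝ (z '' ((c' ∘ finProdFinEquiv.symm) ⁻¹' {b})) := by
      refine convexHull_mono ?_ (mem_iInter.1 (hx m) a)
      rintro _ ⟨l, hl, rfl⟩
      exact ⟨finProdFinEquiv (m, l), by simpa using hc' l hl, rfl⟩
    refine ⟨c' ∘ finProdFinEquiv.symm, y, mem_iInter.2 fun b => ?_⟩
    induction b using Fin.lastCases with
    | last =>
      refine convexHull_min ?_ (convex_convexHull ℝ _) hyI'
      rintro _ ⟨m, hm, rfl⟩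
      exact hxc' m 0 _ fun _ _ => if_neg hm
    | cast a =>
      refine convexHull_min ?_ (convex_convexHull ℝ _) hyI
      rintro _ ⟨m, hm, rfl⟩
      exact hxc' m a _ fun l hl => hl ▸ if_pos hm

lemma exists_le_mass_tupleWeight_mem_convexHull_of_mem_stdSimplex (V : Type*) [AddCommGroup V]
    [Module ℝ V] [FiniteDimensional ℝ V] :
    ∃ n : ℕ, ∃ c > (0 : ℝ), ∀ {ι : Type*} [Fintype ι] {w : ι → ℝ}, w ∈ stdSimplex ℝ ι →
      ∀ z : ι → V, ∃ x,
        c ≤ mass (tupleWeight w) {i : Fin n → ι | x ∈ convexHull ℝ (range (z ∘ i))} := by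
  obtain ⟨n, hn⟩ := exists_weak_tverberg V (finrank ℝ V)
  let T := (Fin n → Fin (finrank ℝ V + 1)) × Fin (finrank ℝ V + 1)
  have hT : (0 : ℝ) < Fintype.card T := Nat.cast_pos.2 Fintype.card_pos
  refine ⟨n, (Fintype.card T : ℝ)⁻¹, inv_pos.2 hT, fun {ι} _ w hw z => ?_⟩
  obtain ⟨c, a, x, hx⟩ := exists_one_le_card_mul_mass_mem hw (fun _ => Finset.univ)
    (fun (c : Fin n → Fin (finrank ℝ V + 1)) a => Finset.univ.filter (c · = a))
    (fun c a b hab => Finset.disjoint_filter.2 fun l _ hla hlb => hab (hla.symm.trans hlb))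
    (K := fun c a i => convexHull ℝ ((z ∘ i) '' (c ⁻¹' {a})))
    (fun _ _ _ => convex_convexHull ℝ _)
    (fun c a i i' hi => congrArg (convexHull ℝ)
      (image_congr fun l hl => congrArg z (hi l (by simpa using hl))))
    (fun i => (hn (z ∘ i)).imp fun c hc => ⟨by simp, by simpa using hc⟩)
  refine ⟨x, ((inv_le_iff_one_le_mul₀' hT).2 hx).trans ?_⟩
  exact mass_mono (tupleWeight_nonneg hw.1) fun i hi => convexHull_mono (image_subset_range _ _) hi

lemma exists_le_mass_tupleWeight_mem_convexHull (V : Type*) [AddCommGroup V] [Module ℝ V]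
    [FiniteDimensional ℝ V] :
    ∃ n : ℕ, ∃ c > (0 : ℝ), ∀ {ι : Type*} [Fintype ι] {w : ι → ℝ}, 0 ≤ w → 0 < ∑ a, w a →
      ∀ z : ι → V, ∃ x, c * (∑ a, w a) ^ n ≤
        mass (tupleWeight w) {i : Fin n → ι | x ∈ convexHull ℝ (range (z ∘ i))} := by
  obtain ⟨n, c, hc, h⟩ := exists_le_mass_tupleWeight_mem_convexHull_of_mem_stdSimplex V
  refine ⟨n, c, hc, fun {ι} _ w hw hpos z => ?_⟩
  have hw' : (∑ a, w a)⁻¹ • w ∈ stdSimplex ℝ ι := by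
    refine ⟨fun a => mul_nonneg (inv_nonneg.2 hpos.le) (hw a), ?_⟩
    simp only [Pi.smul_apply, smul_eq_mul, ← Finset.mul_sum, inv_mul_cancel₀ hpos.ne']
  obtain ⟨x, hx⟩ := h hw' z
  rw [tupleWeight_smul, mass_smul, Fintype.card_fin, inv_pow, ← div_eq_inv_mul,
    le_div_iff₀ (by positivity)] at hx
  exact ⟨x, hx⟩

variable {X Y : Type*} [Fintype Y]

/- Greedy choice: as long as some `C` is missed, it provides a point `x` for which a further mass
`η` of `Y` lies in `E x` but in no earlier `E x'`. -/
lemma exists_finset_inter_nonempty {W : Y → ℝ} (hW : 0 ≤ W) {η : ℝ} (hη : 0 < η)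
    {E : X → Set Y} {𝒞 : Set (Set X)}
    (h : ∀ C ∈ 𝒞, ∃ x, η ≤ mass W {y | y ∈ E x ∧ ∀ x', y ∈ E x' → x' ∈ C}) :
    ∃ N : Finset X, N.card * η ≤ ∑ y, W y ∧ ∀ C ∈ 𝒞, ∃ x ∈ N, x ∈ C := by
  classical
  by_contra! hN
  have hgreedy (n : ℕ) : ∃ N : Finset X, N.card = n ∧ n * η ≤ mass W (⋃ x ∈ N, E x) := by
    induction n with
    | zero => exact ⟨∅, by simp [mass]⟩
    | succ n ih =>
      obtain ⟨N, rfl, hmass⟩ := ih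
      obtain ⟨C, hC, hNC⟩ := hN N (hmass.trans (mass_le_sum hW _))
      obtain ⟨x, hx⟩ := h C hC
      set S := {y | y ∈ E x ∧ ∀ x', y ∈ E x' → x' ∈ C}
      have hxN : x ∉ N := by
        obtain ⟨y, hyx, hyC⟩ := nonempty_of_mass_pos (hη.trans_le hx)
        exact fun hxN => hNC x hxN (hyC x hyx)
      have hdisj : Disjoint S (⋃ x' ∈ N, E x') := by
        refine disjoint_left.2 fun y hyS hyN => ?_
        obtain ⟨x', hx'N, hyx'⟩ := mem_iUnion₂.1 hyN
        exact hNC x' hx'N (hyS.2 x' hyx')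
      refine ⟨insert x N, Finset.card_insert_of_notMem hxN, ?_⟩
      calc ((N.card + 1 : ℕ) : ℝ) * η = η + N.card * η := by push_cast; ring
        _ ≤ mass W S + mass W (⋃ x' ∈ N, E x') := add_le_add hx hmass
        _ = mass W (S ∪ ⋃ x' ∈ N, E x') := (mass_union_of_disjoint W hdisj).symm
        _ ≤ mass W (⋃ x' ∈ insert x N, E x') := by
          refine mass_mono hW ?_
          rw [Finset.set_biUnion_insert]
          exact union_subset_union_left _ fun y hy => hy.1
  obtain ⟨n, hn⟩ := exists_nat_gt ((∑ y, W y) / η)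
  obtain ⟨N, -, hmass⟩ := hgreedy n
  rw [div_lt_iff₀ hη] at hn
  exact (hn.trans_le hmass).not_ge (mass_le_sum hW _)

lemma exists_weak_net (V : Type*) [AddCommGroup V] [Module ℝ V] [FiniteDimensional ℝ V] {ε : ℝ}
    (hε : 0 < ε) :
    ∃ m : ℕ, ∀ {ι : Type*} [Fintype ι] {μ : ι → ℝ}, 0 ≤ μ → ∑ a, μ a ≤ 1 → ∀ z : ι → V,
      ∃ N : Finset V, N.card ≤ m ∧
        ∀ C, Convex ℝ C → ε ≤ mass μ (z ⁻¹' C) → ∃ x ∈ N, x ∈ C := by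
  obtain ⟨n, c, hc, hsel⟩ := exists_le_mass_tupleWeight_mem_convexHull V
  have hη : 0 < c * ε ^ n := by positivity
  refine ⟨⌊(c * ε ^ n)⁻¹⌋₊, fun {ι} _ μ hμ hsum z => ?_⟩
  let E (x : V) : Set (Fin n → ι) := {i | x ∈ convexHull ℝ (range (z ∘ i))}
  have hheavy : ∀ C ∈ {C | Convex ℝ C ∧ ε ≤ mass μ (z ⁻¹' C)},
      ∃ x, c * ε ^ n ≤ mass (tupleWeight μ) {i | i ∈ E x ∧ ∀ x', i ∈ E x' → x' ∈ C} := by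
    rintro C ⟨hconv, hC⟩
    have hμC : 0 ≤ (z ⁻¹' C).indicator μ := indicator_nonneg fun a _ => hμ a
    obtain ⟨x, hx⟩ := hsel hμC (hε.trans_le hC) z
    rw [tupleWeight_indicator, mass_indicator] at hx
    refine ⟨x, (?_ : _ ≤ _).trans (hx.trans ?_)⟩
    · gcongr
      exact hC
    · refine mass_mono (tupleWeight_nonneg hμ) fun i hi => ⟨hi.1, fun x' hx' => ?_⟩
      refine convexHull_min ?_ hconv hx'
      rintro _ ⟨l, rfl⟩
      exact hi.2 l trivial
  obtain ⟨N, hN, hNC⟩ := exists_finset_inter_nonempty (tupleWeight_nonneg hμ) hη hheavy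
  refine ⟨N, Nat.le_floor ?_, fun C hC hε => hNC C ⟨hC, hε⟩⟩
  rw [← one_div, le_div_iff₀ hη]
  calc N.card * (c * ε ^ n) ≤ (∑ a, μ a) ^ n := by simpa [sum_tupleWeight] using hN
    _ ≤ 1 := pow_le_one₀ (Finset.sum_nonneg fun a _ => hμ a) hsum

end WeakNet

section AbstractPQ

lemma colored_fractional_helly (V C J : Type*) [AddCommGroup V] [Module ℝ V]
    [FiniteDimensional ℝ V] [Finite C] [Finite J] :
    ∃ β > (0 : ℝ), ∀ {ι : Type*} [Fintype ι] {w : ι → ℝ}, w ∈ stdSimplex ℝ ι →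
      ∀ {K : C → ι → Set V}, (∀ v a, Convex ℝ (K v a)) →
        (∀ i : J → ι, ∃ v, ∃ s : Finset J, finrank ℝ V < s.card ∧
          (⋂ j ∈ s, K v (i j)).Nonempty) →
        ∃ v x, β ≤ mass w {a | x ∈ K v a} := by
  classical
  have := Fintype.ofFinite C
  have := Fintype.ofFinite J
  refine ⟨((Fintype.card ((C × Finset J) × J) : ℝ) + 1)⁻¹, by positivity,
    fun {ι} _ w hw K hK h => ?_⟩
  obtain ⟨⟨v, s⟩, j, x, hx⟩ := exists_one_le_card_mul_mass_mem hw (T := C × Finset J) (κ := J)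
    (fun vs => vs.2) (fun _ j => {j}) (fun _ j k hjk => Finset.disjoint_singleton.2 hjk)
    (K := fun vs j i => K vs.1 (i j)) (fun vs j i => hK vs.1 (i j))
    (fun vs j i i' hi => congrArg (K vs.1) (hi j (Finset.mem_singleton_self j)))
    (fun i => let ⟨v, s, hs⟩ := h i; ⟨(v, s), hs⟩)
  have hmass : mass (tupleWeight w) {i : J → ι | x ∈ K v (i j)} = mass w {a | x ∈ K v a} :=
    mass_tupleWeight_eval hw j {a | x ∈ K v a}
  rw [hmass] at hx
  refine ⟨v, x, (inv_le_iff_one_le_mul₀' (by positivity)).2 (hx.trans ?_)⟩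
  gcongr
  exacts [mass_nonneg hw.1 _, le_add_of_nonneg_right zero_le_one]

lemma exists_mem_forall_le_of_forall_stdSimplex {ι : Type*} [Fintype ι] [Nonempty ι]
    {S : Set (ι → ℝ)} (hconv : Convex ℝ S) (hS : IsCompact S) {β : ℝ}
    (h : ∀ w ∈ stdSimplex ℝ ι, ∃ y ∈ S, β ≤ w ⬝ᵥ y) : ∃ y ∈ S, ∀ a, β ≤ y a := by
  classical
  have hne : S.Nonempty := by
    obtain ⟨a⟩ := ‹Nonempty ι›
    obtain ⟨y, hy, -⟩ := h _ (single_mem_stdSimplex ℝ a)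
    exact ⟨y, hy⟩
  obtain ⟨w, hw, y, hy, hsaddle⟩ := Sion.exists_isSaddlePointOn
    (f := fun w y : ι → ℝ => w ⬝ᵥ y) ⟨_, single_mem_stdSimplex ℝ (Classical.arbitrary ι)⟩
    (convex_stdSimplex ℝ ι) (isCompact_stdSimplex ℝ ι)
    (fun y _ => (by fun_prop : ContinuousOn (· ⬝ᵥ y) _).lowerSemicontinuousOn)
    (fun y _ => (((dotProductBilin ℝ ℝ).flip y).convexOn (convex_stdSimplex ℝ ι)).quasiconvexOn)
    hconv hne hS
    (fun w _ => (by fun_prop : ContinuousOn (w ⬝ᵥ ·) _).upperSemicontinuousOn)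
    (fun w _ => ((dotProductBilin ℝ ℝ w).concaveOn hconv).quasiconcaveOn)
  refine ⟨y, hy, fun a => ?_⟩
  obtain ⟨y', hy', hβ⟩ := h w hw
  calc β ≤ w ⬝ᵥ y' := hβ
    _ ≤ Pi.single a 1 ⬝ᵥ y := hsaddle _ (single_mem_stdSimplex ℝ a) y' hy'
    _ = y a := by simp

lemma exists_stdSimplex_forall_le_mass {X ι : Type*} [Fintype ι] [Nonempty ι] {R : X → Set ι}
    {β : ℝ} (h : ∀ w ∈ stdSimplex ℝ ι, ∃ x, β ≤ mass w (R x)) :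
    ∃ (κ : Type) (_ : Fintype κ) (μ : κ → ℝ) (x : κ → X), μ ∈ stdSimplex ℝ κ ∧
      ∀ a, β ≤ mass μ {k | a ∈ R (x k)} := by
  let χ (S : Set ι) : ι → ℝ := S.indicator 1
  have hfin : (range fun x => χ (R x)).Finite :=
    (finite_range χ).subset (range_comp_subset_range R χ)
  obtain ⟨y, hy, hβ⟩ := exists_mem_forall_le_of_forall_stdSimplex (convex_convexHull ℝ _)
    (hfin.isCompact_convexHull ℝ) fun w hw => (h w hw).imp' (fun x => χ (R x)) fun x hx =>
      ⟨subset_convexHull ℝ _ (mem_range_self x), by rwa [mass_eq_sum_mul_indicator_one] at hx⟩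
  obtain ⟨κ, _, μ, z, hμ, hμ1, hz, rfl⟩ := mem_convexHull_iff_exists_fintype.1 hy
  choose x hx using hz
  refine ⟨κ, inferInstance, μ, x, ⟨hμ, hμ1⟩, fun a => (hβ a).trans_eq ?_⟩
  simp only [mass_eq_sum_mul_indicator_one, Finset.sum_apply, Pi.smul_apply, smul_eq_mul, ← hx]
  rfl

lemma colored_pq_theorem (V C J : Type*) [AddCommGroup V] [Module ℝ V]
    [FiniteDimensional ℝ V] [Finite C] [Finite J] :
    ∃ m : ℕ, ∀ {ι : Type*} [Fintype ι] {K : C → ι → Set V}, (∀ v a, Convex ℝ (K v a)) →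
      (∀ i : J → ι, ∃ v, ∃ s : Finset J, finrank ℝ V < s.card ∧ (⋂ j ∈ s, K v (i j)).Nonempty) →
      ∃ N : C → Finset V, (∀ v, (N v).card ≤ m) ∧ ∀ a, ∃ v, ∃ x ∈ N v, x ∈ K v a := by
  have := Fintype.ofFinite C
  obtain ⟨β, hβ, hhelly⟩ := colored_fractional_helly V C J
  have hε : 0 < β / (Fintype.card C + 1) := by positivity
  obtain ⟨m, hnet⟩ := exists_weak_net V hε
  refine ⟨m, fun {ι} _ K hK h => ?_⟩
  rcases isEmpty_or_nonempty ι with _ | _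
  · exact ⟨fun _ => ∅, by simp, isEmptyElim⟩
  obtain ⟨κ, _, μ, x, hμ, hx⟩ := exists_stdSimplex_forall_le_mass (X := C × V)
    (R := fun vx => {a | vx.2 ∈ K vx.1 a}) fun w hw =>
      let ⟨v, x, hvx⟩ := hhelly hw hK h; ⟨(v, x), hvx⟩
  choose N hcard hN using fun v => hnet (indicator_nonneg fun k _ => hμ.1 k)
    ((mass_le_sum hμ.1 {k | (x k).1 = v}).trans_eq hμ.2) fun k => (x k).2
  refine ⟨N, hcard, fun a => ?_⟩
  have hcover : {k | (x k).2 ∈ K (x k).1 a} ⊆ ⋃ v, {k | (x k).2 ∈ K v a} ∩ {k | (x k).1 = v} :=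
    fun k hk => mem_iUnion.2 ⟨(x k).1, hk, rfl⟩
  obtain ⟨v, hv⟩ := exists_mass_le_card_mul hμ.1 hcover (hβ.trans_le (hx a))
  refine ⟨v, hN v (K v a) (hK v a) ((div_le_iff₀' (by positivity)).2 ((hx a).trans ?_))⟩
  rw [mass_indicator]
  exact hv.trans (mul_le_mul_of_nonneg_right (le_add_of_nonneg_right zero_le_one)
    (mass_nonneg hμ.1 _))

end AbstractPQ

section Diameter

lemma exists_affineMap_range_eq {𝕜 G W : Type*} [Field 𝕜] [AddCommGroup G] [Module 𝕜 G]
    [FiniteDimensional 𝕜 G] [AddCommGroup W] [Module 𝕜 W] [FiniteDimensional 𝕜 W]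
    (hG : finrank 𝕜 G + 1 = finrank 𝕜 W) {φ : Dual 𝕜 W} (hφ : φ ≠ 0) (t : 𝕜) :
    ∃ L : G →ᵃ[𝕜] W, range L = {w | φ w = t} := by
  obtain ⟨w₀, hw₀⟩ := LinearMap.surjective hφ t
  have hker := Dual.finrank_ker_add_one_of_ne_zero hφ
  let e : G ≃ₗ[𝕜] LinearMap.ker φ := LinearEquiv.ofFinrankEq _ _ (by omega)
  refine ⟨(φ.ker.subtype ∘ₗ e.toLinearMap).toAffineMap + AffineMap.const 𝕜 G w₀, ?_⟩
  ext w
  constructor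
  · rintro ⟨g, rfl⟩
    simp [hw₀]
  · intro hw
    have hwker : w - w₀ ∈ LinearMap.ker φ := by
      rw [LinearMap.mem_ker, map_sub, hw₀, sub_eq_zero]
      exact hw
    exact ⟨e.symm ⟨w - w₀, hwker⟩, by simp⟩

lemma exists_lt_dist_of_lt_diam {X : Type*} [PseudoMetricSpace X] {S : Set X} {r : ℝ} (hr : 0 ≤ r)
    (h : r < Metric.diam S) : ∃ x ∈ S, ∃ y ∈ S, r < dist x y := by
  contrapose! h
  exact Metric.diam_le_of_forall_dist_le hr h

section Norming

variable (E : Type*) [NormedAddCommGroup E] [NormedSpace ℝ E]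

lemma exists_finset_forall_mul_norm_le_apply [FiniteDimensional ℝ E] [Nontrivial E] {r : ℝ}
    (hr : r < 1) :
    ∃ N : Finset (StrongDual ℝ E), (∀ f ∈ N, ‖f‖ = 1) ∧ ∀ u, ∃ f ∈ N, r * ‖u‖ ≤ f u := by
  have : ProperSpace (StrongDual ℝ E) := FiniteDimensional.proper_real _
  obtain ⟨N, hNsphere, hNfin, hcover⟩ :=
    (isCompact_sphere (0 : StrongDual ℝ E) 1).finite_cover_balls (sub_pos.2 hr)
  refine ⟨hNfin.toFinset, fun f hf => by simpa using hNsphere (hNfin.mem_toFinset.1 hf),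
    fun u => ?_⟩
  obtain ⟨g, hg, hgu⟩ := exists_dual_vector' ℝ u
  obtain ⟨f, hf, hfg⟩ := mem_iUnion₂.1 (hcover (mem_sphere_zero_iff_norm.2 hg))
  refine ⟨f, hNfin.mem_toFinset.2 hf, ?_⟩
  have hle : (g - f) u ≤ (1 - r) * ‖u‖ :=
    (g - f).le_of_opNorm_le (mem_ball_iff_norm.1 hfg).le u |> (le_abs_self _).trans
  have hgu' : g u = ‖u‖ := hgu
  rw [sub_apply, hgu'] at hle
  linarith

variable {E}

lemma exists_mem_apply_sub_eq {S : Set E} (hS : Convex ℝ S) {N : Finset (StrongDual ℝ E)} {r t : ℝ}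
    (hN : ∀ u, ∃ f ∈ N, r * ‖u‖ ≤ f u) (hr : 0 ≤ r) (ht : 0 ≤ t) (htr : t ≤ r * r) {x y : E}
    (hx : x ∈ S) (hy : y ∈ S) (hxy : r ≤ dist x y) : ∃ f ∈ N, ∃ x' ∈ S, f (x' - y) = t := by
  obtain ⟨f, hf, hfxy⟩ := hN (x - y)
  have hle : t ≤ f (x - y) := by
    calc t ≤ r * r := htr
      _ ≤ r * ‖x - y‖ := by rw [← dist_eq_norm]; gcongr
      _ ≤ f (x - y) := hfxy
  refine ⟨f, hf, y + (t / f (x - y)) • (x - y), ?_, ?_⟩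
  · exact hS.add_smul_sub_mem hy hx
      ⟨div_nonneg ht (ht.trans hle), div_le_one_of_le₀ hle (ht.trans hle)⟩
  · rw [add_sub_cancel_left, map_smul, smul_eq_mul]
    exact div_mul_cancel_of_imp fun h => le_antisymm (h ▸ hle) ht

end Norming

lemma exists_le_card_biInter_nonempty {α β J : Type*} [Fintype J] {R : α → Set β} {F : Finset α}
    {p q : ℕ} (hq : 0 < q) (hR : ∀ A ∈ F, (R A).Nonempty)
    (hF : ∀ P ⊆ F, P.card = p → ∃ Q ⊆ P, q ≤ Q.card ∧ (⋂ A ∈ Q, R A).Nonempty) {i : J → α}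
    (hi : ∀ j, i j ∈ F) (hJ : p * q ≤ Fintype.card J) :
    ∃ s : Finset J, q ≤ s.card ∧ (⋂ j ∈ s, R (i j)).Nonempty := by
  classical
  have himage : Finset.univ.image i ⊆ F := Finset.image_subset_iff.2 fun j _ => hi j
  rcases le_or_gt p (Finset.univ.image i).card with hp | hp
  · obtain ⟨P, hP, hPcard⟩ := Finset.exists_subset_card_eq hp
    obtain ⟨Q, hQP, hQcard, x, hx⟩ := hF P (hP.trans himage) hPcard
    have hQ : Q ⊆ (Finset.univ.filter (i · ∈ Q)).image i := fun A hA => by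
      obtain ⟨j, -, rfl⟩ := Finset.mem_image.1 (hP (hQP hA))
      exact Finset.mem_image_of_mem i (Finset.mem_filter.2 ⟨Finset.mem_univ j, hA⟩)
    refine ⟨_, hQcard.trans ((Finset.card_le_card hQ).trans Finset.card_image_le), x, ?_⟩
    exact mem_iInter₂.2 fun j hj => mem_iInter₂.1 hx _ (Finset.mem_filter.1 hj).2
  · have hJpos : 0 < Fintype.card J := (Nat.mul_pos (by omega) hq).trans_le hJ
    have : Nonempty J := Fintype.card_pos_iff.1 hJpos
    obtain ⟨A, hA, hcard⟩ := Finset.exists_le_card_fiber_of_mul_le_card_of_maps_to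
      (fun j _ => Finset.mem_image_of_mem i (Finset.mem_univ j)) (Finset.univ_nonempty.image i)
      ((Nat.mul_le_mul_right q hp.le).trans hJ)
    obtain ⟨x, hx⟩ := hR A (himage hA)
    refine ⟨_, hcard, x, mem_iInter₂.2 fun j hj => ?_⟩
    rwa [(Finset.mem_filter.1 hj).2]

lemma exists_fin_range_superset {X : Type*} [Nonempty X] {s : Finset X} {n : ℕ} (h : s.card ≤ n) :
    ∃ g : Fin n → X, (s : Set X) ⊆ range g := by
  obtain ⟨e⟩ : Nonempty (s ↪ Fin n) := Function.Embedding.nonempty_of_card_le (by simpa using h)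
  exact ⟨Function.extend e (↑) fun _ => Classical.arbitrary X,
    fun x hx => ⟨e ⟨x, hx⟩, e.injective.extend_apply _ _ _⟩⟩

lemma exists_mem_tuple_dist_lt {E J : Type*} [PseudoMetricSpace E] [Fintype J] {F : Finset (Set E)}
    {p q : ℕ} (hq : 0 < q) (hF : ∀ A ∈ F, 1 ≤ Metric.diam A)
    (hpq : ∀ P ⊆ F, P.card = p →
      ∃ Q ⊆ P, Q.card = q ∧ 1 ≤ Metric.diam (⋂₀ (Q : Set (Set E))))
    {r : ℝ} (hr : 0 ≤ r) (hr1 : r < 1) {i : J → Set E} (hi : ∀ j, i j ∈ F)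
    (hJ : p * q ≤ Fintype.card J) :
    ∃ s : Finset J, q ≤ s.card ∧ ∃ x ∈ ⋂ j ∈ s, i j, ∃ y ∈ ⋂ j ∈ s, i j, r < dist x y := by
  let R (A : Set E) : Set (E × E) := {z | z.1 ∈ A ∧ z.2 ∈ A ∧ r < dist z.1 z.2}
  have hR {A : Set E} (hA : 1 ≤ Metric.diam A) : (R A).Nonempty := by
    obtain ⟨x, hx, y, hy, hxy⟩ := exists_lt_dist_of_lt_diam hr (hr1.trans_le hA)
    exact ⟨(x, y), hx, hy, hxy⟩
  have hRpq : ∀ P ⊆ F, P.card = p → ∃ Q ⊆ P, q ≤ Q.card ∧ (⋂ A ∈ Q, R A).Nonempty := by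
    intro P hP hcard
    obtain ⟨Q, hQ, hQcard, hdiam⟩ := hpq P hP hcard
    obtain ⟨z, hz₁, hz₂, hz⟩ := hR hdiam
    exact ⟨Q, hQ, hQcard.ge, z, mem_iInter₂.2 fun A hA => ⟨hz₁ A hA, hz₂ A hA, hz⟩⟩
  obtain ⟨s, hs, z, hz⟩ := exists_le_card_biInter_nonempty hq (fun A hA => hR (hF A hA)) hRpq hi hJ
  rw [mem_iInter₂] at hz
  obtain ⟨j, hj⟩ := Finset.card_pos.1 (hq.trans_le hs)
  exact ⟨s, hs, z.1, mem_iInter₂.2 fun j hj => (hz j hj).1, z.2,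
    mem_iInter₂.2 fun j hj => (hz j hj).2.1, (hz j hj).2.2⟩

lemma exists_affineMap_range_eq_setOf_apply_sub_eq {E : Type*} [NormedAddCommGroup E]
    [NormedSpace ℝ E] [FiniteDimensional ℝ E] [Nontrivial E] {f : StrongDual ℝ E} (hf : f ≠ 0)
    (t : ℝ) :
    ∃ L : (Fin (2 * finrank ℝ E - 1) → ℝ) →ᵃ[ℝ] E × E, range L = {z | f (z.1 - z.2) = t} := by
  have hdim : finrank ℝ (Fin (2 * finrank ℝ E - 1) → ℝ) + 1 = finrank ℝ (E × E) := by
    have := finrank_pos (R := ℝ) (M := E)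
    rw [finrank_fin_fun, finrank_prod]
    omega
  refine exists_affineMap_range_eq hdim
    (φ := (f : E →ₗ[ℝ] ℝ) ∘ₗ (LinearMap.fst ℝ E E - LinearMap.snd ℝ E E)) (fun h => hf ?_) t
  ext u
  simpa using LinearMap.congr_fun h (u, 0)

lemma exists_mem_tuple_apply_sub_eq {E J : Type*} [NormedAddCommGroup E] [NormedSpace ℝ E]
    [Fintype J] {F : Finset (Set E)} {p q : ℕ} (hq : 0 < q)
    (hF : ∀ A ∈ F, Convex ℝ A ∧ 1 ≤ Metric.diam A)
    (hpq : ∀ P ⊆ F, P.card = p →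
      ∃ Q ⊆ P, Q.card = q ∧ 1 ≤ Metric.diam (⋂₀ (Q : Set (Set E))))
    {N : Finset (StrongDual ℝ E)} {r t : ℝ} (hN : ∀ u, ∃ f ∈ N, r * ‖u‖ ≤ f u) (hr : 0 ≤ r)
    (hr1 : r < 1) (ht : 0 ≤ t) (htr : t ≤ r * r) {i : J → Set E} (hi : ∀ j, i j ∈ F)
    (hJ : p * q ≤ Fintype.card J) :
    ∃ f ∈ N, ∃ s : Finset J, q ≤ s.card ∧
      ∃ x ∈ ⋂ j ∈ s, i j, ∃ y ∈ ⋂ j ∈ s, i j, f (x - y) = t := by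
  obtain ⟨s, hs, x, hx, y, hy, hxy⟩ :=
    exists_mem_tuple_dist_lt hq (fun A hA => (hF A hA).2) hpq hr hr1 hi hJ
  have hconv : Convex ℝ (⋂ j ∈ s, i j) := convex_iInter₂ fun j _ => (hF _ (hi j)).1
  obtain ⟨f, hf, x', hx', hfx'⟩ := exists_mem_apply_sub_eq hconv hN hr ht htr hx hy hxy.le
  exact ⟨f, hf, s, hs, x', hx', y, hy, hfx'⟩

lemma exists_finset_le_dist_forall_exists_mem (E : Type*) [NormedAddCommGroup E]
    [NormedSpace ℝ E] [FiniteDimensional ℝ E] [Nontrivial E] (p : ℕ) {q : ℕ}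
    (hq : 2 * finrank ℝ E ≤ q) {δ : ℝ} (hδ0 : 0 < δ) (hδ1 : δ < 1) :
    ∃ c : ℕ, ∀ F : Finset (Set E), (∀ A ∈ F, Convex ℝ A ∧ 1 ≤ Metric.diam A) →
      (∀ P ⊆ F, P.card = p →
        ∃ Q ⊆ P, Q.card = q ∧ 1 ≤ Metric.diam (⋂₀ (Q : Set (Set E)))) →
      ∃ Z : Finset (E × E), Z.card ≤ c ∧ (∀ z ∈ Z, 1 - δ ≤ dist z.1 z.2) ∧
        ∀ A ∈ F, ∃ z ∈ Z, z.1 ∈ A ∧ z.2 ∈ A := by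
  classical
  have hdim := finrank_pos (R := ℝ) (M := E)
  obtain ⟨N, hN1, hN⟩ := exists_finset_forall_mul_norm_le_apply E (r := 1 - δ / 2) (by linarith)
  choose L hL using fun f : N => exists_affineMap_range_eq_setOf_apply_sub_eq
    (norm_ne_zero_iff.1 ((hN1 f f.2).trans_ne one_ne_zero)) (1 - δ)
  have hLdist (f : N) (g) : 1 - δ ≤ dist (L f g).1 (L f g).2 := by
    have hmem : L f g ∈ {z : E × E | f.1 (z.1 - z.2) = 1 - δ} := hL f ▸ mem_range_self g
    calc 1 - δ = f.1 ((L f g).1 - (L f g).2) := hmem.symm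
      _ ≤ ‖f.1‖ * ‖(L f g).1 - (L f g).2‖ := (le_abs_self _).trans (f.1.le_opNorm _)
      _ = dist (L f g).1 (L f g).2 := by rw [hN1 f f.2, one_mul, dist_eq_norm]
  obtain ⟨m, hm⟩ := colored_pq_theorem
    (Fin (2 * finrank ℝ E - 1) → ℝ) N (Fin (p * q))
  refine ⟨Fintype.card N * m, fun F hF hpq => ?_⟩
  obtain ⟨M, hMcard, hM⟩ := hm (K := fun f (A : F) => L f ⁻¹' (A.1 ×ˢ A.1))
    (fun f A => ((hF A A.2).1.prod (hF A A.2).1).affine_preimage (L f)) fun i => by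
      obtain ⟨f, hf, s, hs, x, hx, y, hy, hfxy⟩ := exists_mem_tuple_apply_sub_eq (by omega) hF hpq
        hN (by linarith) (by linarith) (sub_nonneg.2 hδ1.le) (by nlinarith) (fun j => (i j).2)
        (Fintype.card_fin _).ge
      obtain ⟨g, hg⟩ : (x, y) ∈ range (L ⟨f, hf⟩) := hL ⟨f, hf⟩ ▸ hfxy
      refine ⟨⟨f, hf⟩, s, by rw [finrank_fin_fun]; omega, g, mem_iInter₂.2 fun j hj => ?_⟩
      rw [mem_preimage, hg]
      exact ⟨mem_iInter₂.1 hx j hj, mem_iInter₂.1 hy j hj⟩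
  refine ⟨Finset.univ.biUnion fun f => (M f).image (L f), ?_, ?_, fun A hA => ?_⟩
  · exact Finset.card_biUnion_le_card_mul _ _ _ fun f _ =>
      Finset.card_image_le.trans (hMcard f)
  · simp only [Finset.mem_biUnion, Finset.mem_image]
    rintro _ ⟨f, -, g, -, rfl⟩
    exact hLdist f g
  · obtain ⟨f, g, hg, hgA⟩ := hM ⟨A, hA⟩
    exact ⟨L f g, Finset.mem_biUnion.2 ⟨f, Finset.mem_univ f, Finset.mem_image_of_mem _ hg⟩, hgA⟩

end Diameter

end PQDiameter

theorem pq_theorem_for_diameter_general {E : Type*} [NormedAddCommGroup E] [NormedSpace ℝ E]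
    [FiniteDimensional ℝ E] [Nontrivial E] (p : ℕ) {q : ℕ} (hq : 2 * Module.finrank ℝ E ≤ q)
    {δ : ℝ} (hδ0 : 0 < δ) (hδ1 : δ < 1) :
    ∃ c : ℕ, 0 < c ∧ ∀ F : Finset (Set E), (∀ A ∈ F, Convex ℝ A ∧ 1 ≤ Metric.diam A) →
      (∀ P ⊆ F, P.card = p →
        ∃ Q ⊆ P, Q.card = q ∧ 1 ≤ Metric.diam (⋂₀ (Q : Set (Set E)))) →
      ∃ K : Fin c → Set E, (∀ i, Convex ℝ (K i) ∧ 1 - δ ≤ Metric.diam (K i)) ∧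
        ∀ A ∈ F, ∃ i, K i ⊆ A := by
  obtain ⟨c, hc⟩ := PQDiameter.exists_finset_le_dist_forall_exists_mem E p hq hδ0 hδ1
  refine ⟨c + 1, c.succ_pos, fun F hF hpq => ?_⟩
  obtain ⟨Z, hZcard, hZ, hZF⟩ := hc F hF hpq
  obtain ⟨u, hu⟩ := exists_norm_eq E (sub_nonneg.2 hδ1.le)
  have : Nonempty {z : E × E // 1 - δ ≤ dist z.1 z.2} := ⟨(u, 0), by simp [hu]⟩
  obtain ⟨g, hg⟩ := PQDiameter.exists_fin_range_superset (n := c + 1)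
    (s := Z.subtype fun z => 1 - δ ≤ dist z.1 z.2)
    ((Z.card_subtype _).trans_le ((Z.card_filter_le _).trans (hZcard.trans c.le_succ)))
  refine ⟨fun i => segment ℝ (g i).1.1 (g i).1.2, fun i => ⟨convex_segment _ _, ?_⟩,
    fun A hA => ?_⟩
  · calc 1 - δ ≤ dist (g i).1.1 (g i).1.2 := (g i).2
      _ = Metric.diam (segment ℝ (g i).1.1 (g i).1.2) := by
        rw [← convexHull_pair, convexHull_diam, Metric.diam_pair]
  · obtain ⟨z, hz, hz₁, hz₂⟩ := hZF A hA
    obtain ⟨i, hi⟩ := hg (Finset.mem_coe.2 (Finset.mem_subtype.2 hz : ⟨z, hZ z hz⟩ ∈ _))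
    exact ⟨i, by simpa only [hi] using (hF A hA).1.segment_subset hz₁ hz₂⟩

/-- **(p,q) theorem for diameter.**  For positive integers `p ≥ q ≥ 2d` and `0 < δ < 1`,
there is a `c = c(p,q,d,δ)` such that for any finite family `𝓕` of at least `p` compact
convex sets in `ℝ^d`, each of diameter at least one, if among every `p` sets of `𝓕` there
are `q` whose intersection has diameter at least one, then there exist `c` convex sets,
each of diameter at least `1 - δ`, such that every set of `𝓕` contains one of them. -/
theorem pq_theorem_for_diameter (d p q : ℕ) (hd : 0 < d) (hq : 2 * d ≤ q) (hpq : q ≤ p)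
    (δ : ℝ) (hδ0 : 0 < δ) (hδ1 : δ < 1) :
    ∃ c : ℕ, 0 < c ∧
      ∀ F : Finset (Set (EuclideanSpace ℝ (Fin d))),
        p ≤ F.card →
        (∀ A ∈ F, IsCompact A ∧ Convex ℝ A ∧ 1 ≤ Metric.diam A) →
        (∀ P ⊆ F, P.card = p → ∃ Q ⊆ P, Q.card = q ∧
          1 ≤ Metric.diam (⋂₀ (Q : Set (Set (EuclideanSpace ℝ (Fin d)))))) →
        ∃ K : Fin c → Set (EuclideanSpace ℝ (Fin d)),
          (∀ i, Convex ℝ (K i) ∧ 1 - δ ≤ Metric.diam (K i)) ∧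
          ∀ A ∈ F, ∃ i, K i ⊆ A := by
  have : Nonempty (Fin d) := ⟨⟨0, hd⟩⟩
  obtain ⟨c, hc, h⟩ := pq_theorem_for_diameter_general (E := EuclideanSpace ℝ (Fin d)) p
    (q := q) (by rwa [finrank_euclideanSpace_fin]) hδ0 hδ1
  exact ⟨c, hc, fun F _ hF hFpq => h F (fun A hA => (hF A hA).2) hFpq⟩
end

section
/- Let d be a positive integer and 0 < δ < 1. There exists a positive integer r = r(d,δ) such that: for any finite family 𝓕 of at least 2d compact convex sets in ℝ^d, if the intersection of every 2d of them has diameter at least one, then 𝓕 can be partitioned into at most r parts such that the intersection of each part has diameter at least 1 − δ. -/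
/-!
Fix a finite set of norm-one functionals `ℓ` such that every vector `x` satisfies
`(1 - δ / 2) * ‖x‖ ≤ ℓ x` for one of them. A convex set `A` of diameter at least one then contains
`a`, `b` with `ℓ (a - b) = 1 - δ` for some `ℓ`, while a set containing such a pair has diameter at
least `1 - δ`. For fixed `ℓ` the pairs `(a, b) ∈ A × A` with `ℓ (a - b) = 1 - δ` form a closed
convex set in a hyperplane of `E × E`, whose dimension is `2d - 1`, so the hypothesis says that any
`2d` of these sets meet for at least one of the finitely many `ℓ`.

The Alon–Kleitman method, carried out for all `ℓ` at once, bounds the number of points needed to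
pierce every `A`: a fractional Helly theorem and the minimax theorem give a probability measure on
pairs that charges each `A` for some `ℓ`, and a weak ε-net for this measure pierces all of them.
Weak nets come from a selection lemma (some point lies in a positive proportion of the simplices
spanned by the measure), proved from fractional Helly and a Tverberg partition of rough size.
-/

open Module Set

section Mass

variable {ι κ : Type*} {w : ι → ℝ}

/-- The product weight on `κ → ι`: the law of a `κ`-tuple of independent `w`-random indices. -/
def prodWeight [Fintype κ] (w : ι → ℝ) (f : κ → ι) : ℝ :=
  ∏ j, w (f j)

theorem prodWeight_nonneg [Fintype κ] (hw : 0 ≤ w) : 0 ≤ prodWeight (κ := κ) w :=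
  fun _ => Finset.prod_nonneg fun _ _ => hw _

theorem prodWeight_indicator [Fintype κ] (w : ι → ℝ) (S : Set ι) :
    prodWeight (κ := κ) (S.indicator w) = {f | ∀ j, f j ∈ S}.indicator (prodWeight w) := by
  classical
  ext f
  simp [prodWeight, indicator_apply, Finset.prod_ite_zero]

theorem prodWeight_div [Fintype κ] (w : ι → ℝ) (m : ℝ) :
    prodWeight (κ := κ) (fun i => w i / m) = fun f => prodWeight w f / m ^ Fintype.card κ := by
  ext f
  simp [prodWeight, Finset.prod_div_distrib]

variable [Fintype ι] {S T : Set ι}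

/-- The total weight of the set `S` under the weight function `w` on a finite type. -/
noncomputable def mass (w : ι → ℝ) (S : Set ι) : ℝ :=
  ∑ i, S.indicator w i

theorem mass_univ (w : ι → ℝ) : mass w univ = ∑ i, w i := by
  simp [mass]

theorem mass_nonneg (hw : 0 ≤ w) (S : Set ι) : 0 ≤ mass w S :=
  Finset.sum_nonneg fun _ _ => indicator_nonneg (fun i _ => hw i) _

theorem mass_mono (hw : 0 ≤ w) (h : S ⊆ T) : mass w S ≤ mass w T :=
  Finset.sum_le_sum fun i _ => indicator_le_indicator_of_subset h hw i

theorem mass_union_of_disjoint (w : ι → ℝ) (h : Disjoint S T) :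
    mass w (S ∪ T) = mass w S + mass w T := by
  simp [mass, indicator_union_of_disjoint h, Finset.sum_add_distrib]

theorem mass_indicator (w : ι → ℝ) (S T : Set ι) :
    mass (S.indicator w) T = mass w (T ∩ S) := by
  simp [mass, indicator_indicator]

theorem mass_preimage_equiv [Fintype κ] (e : κ ≃ ι) (w : ι → ℝ) (S : Set ι) :
    mass (w ∘ e) (e ⁻¹' S) = mass w S := by
  rw [mass, mass, ← e.sum_comp]
  rfl

theorem exists_mass_div_card_le [Fintype κ] [Nonempty κ] (hw : 0 ≤ w) {T : κ → Set ι}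
    (h : S ⊆ ⋃ j, T j) : ∃ j, mass w S / Fintype.card κ ≤ mass w (T j) := by
  have hsum : mass w S ≤ ∑ j, mass w (T j) := by
    simp only [mass]
    rw [Finset.sum_comm]
    refine Finset.sum_le_sum fun i _ => indicator_apply_le' (fun hi => ?_) (fun _ => ?_)
    · obtain ⟨j, hj⟩ := mem_iUnion.1 (h hi)
      rw [← indicator_of_mem hj w]
      exact Finset.single_le_sum (f := fun j => (T j).indicator w i)
        (fun j _ => indicator_nonneg (fun i _ => hw i) i) (Finset.mem_univ j)
    · exact Finset.sum_nonneg fun j _ => indicator_nonneg (fun i _ => hw i) _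
  by_contra! hlt
  have := Finset.sum_lt_sum_of_nonempty Finset.univ_nonempty fun j _ => hlt j
  rw [Finset.sum_const, Finset.card_univ, nsmul_eq_mul,
    mul_div_cancel₀ _ (Nat.cast_ne_zero.2 Fintype.card_ne_zero)] at this
  exact this.not_ge hsum

theorem exists_le_of_le_sum_mul (hw : w ∈ stdSimplex ℝ ι) {g : ι → ℝ} {b : ℝ}
    (h : b ≤ ∑ i, w i * g i) : ∃ i, b ≤ g i := by
  have : Nonempty ι := by
    by_contra! hι
    simpa using hw.2
  obtain ⟨i, hi⟩ := Finite.exists_max g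
  refine ⟨i, h.trans ?_⟩
  calc ∑ k, w k * g k ≤ ∑ k, w k * g i :=
        Finset.sum_le_sum fun k _ => mul_le_mul_of_nonneg_left (hi k) (hw.1 k)
    _ = g i := by rw [← Finset.sum_mul, hw.2, one_mul]

section Prod

variable [Fintype κ]

theorem sum_prodWeight [DecidableEq κ] (w : ι → ℝ) :
    ∑ f : κ → ι, prodWeight w f = (∑ i, w i) ^ Fintype.card κ := by
  simp only [prodWeight]
  rw [← Fintype.prod_sum, Finset.prod_const, Finset.card_univ]

theorem prodWeight_mem_stdSimplex [DecidableEq κ] (hw : w ∈ stdSimplex ℝ ι) :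
    prodWeight w ∈ stdSimplex ℝ (κ → ι) :=
  ⟨prodWeight_nonneg hw.1, by rw [sum_prodWeight, hw.2, one_pow]⟩

theorem mass_div (w : ι → ℝ) (m : ℝ) (S : Set ι) :
    mass (fun i => w i / m) S = mass w S / m := by
  classical
  simp only [mass, Finset.sum_div, indicator_apply, ite_div, zero_div]

/-- Applies the permutation `π i` to the `i`-th column of a matrix. -/
def permColumns {α : Type*} (π : ι → Equiv.Perm κ) : (κ → ι → α) ≃ (κ → ι → α) where
  toFun F a i := F (π i a) i
  invFun F a i := F ((π i).symm a) i
  left_inv F := by simp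
  right_inv F := by simp

theorem prodWeight_prodWeight_permColumns {α : Type*} (q : α → ℝ)
    (π : ι → Equiv.Perm κ) :
    prodWeight (prodWeight q) ∘ permColumns π = prodWeight (prodWeight q) := by
  ext F
  simp only [Function.comp_apply, prodWeight, permColumns, Equiv.coe_fn_mk]
  rw [Finset.prod_comm, Finset.prod_comm (f := fun a i => q (F a i))]
  exact Finset.prod_congr rfl fun i _ => Equiv.prod_comp (π i) fun a => q (F a i)

end Prod

theorem mass_prodWeight_removeNth {n : ℕ} (w : ι → ℝ) (j : Fin (n + 1))
    (A : (Fin n → ι) → Set ι) :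
    mass (prodWeight w) {f : Fin (n + 1) → ι | f j ∈ A (j.removeNth f)} =
      ∑ g, prodWeight w g * mass w (A g) := by
  classical
  simp only [mass, Finset.mul_sum]
  rw [← (Fin.insertNthEquiv (fun _ => ι) j).sum_comp, Fintype.sum_prod_type_right]
  simp [prodWeight, indicator_apply, Fin.prod_univ_succAbove _ j, mul_comm,
    Fin.insertNthEquiv, Fin.removeNth_insertNth]

end Mass

theorem exists_card_le_of_forall_exists_insert {α : Type*} [DecidableEq α] {p : Finset α → Prop}
    {Φ : Finset α → ℝ} {c : ℝ} (hc : 0 < c) (h0 : ∀ Z, 0 ≤ Φ Z) (h1 : ∀ Z, Φ Z ≤ 1)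
    (h : ∀ Z, ¬ p Z → ∃ z, Φ Z + c ≤ Φ (insert z Z)) :
    ∃ Z : Finset α, Z.card ≤ ⌈1 / c⌉₊ + 1 ∧ p Z := by
  by_contra! hp
  have hgrow : ∀ n ≤ ⌈1 / c⌉₊ + 1, ∃ Z : Finset α, Z.card ≤ n ∧ n * c ≤ Φ Z := by
    intro n
    induction n with
    | zero => exact fun _ => ⟨∅, by simp, by simpa using h0 ∅⟩
    | succ n ih =>
      intro hn
      obtain ⟨Z, hZn, hZ⟩ := ih (by omega)
      obtain ⟨z, hz⟩ := h Z (hp Z (by omega))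
      refine ⟨insert z Z, (Finset.card_insert_le z Z).trans (by omega), ?_⟩
      push_cast
      linarith
  obtain ⟨Z, -, hZ⟩ := hgrow _ le_rfl
  have hlt : 1 < (⌈1 / c⌉₊ + 1 : ℕ) * c := by
    rw [← div_lt_iff₀ hc]
    push_cast
    linarith [Nat.le_ceil (1 / c)]
  linarith [h1 Z]

theorem minimax_stdSimplex {ι P : Type*} [Fintype ι] [Fintype P] [Nonempty ι]
    (M : Matrix ι P ℝ) {a : ℝ}
    (h : ∀ w ∈ stdSimplex ℝ ι, ∃ p, a ≤ (Matrix.vecMul w M) p) :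
    ∃ q ∈ stdSimplex ℝ P, ∀ i, a ≤ M.mulVec q i := by
  classical
  have hι : (stdSimplex ℝ ι).Nonempty := ⟨_, single_mem_stdSimplex ℝ (Classical.arbitrary ι)⟩
  have hP : (stdSimplex ℝ P).Nonempty :=
    let ⟨p, _⟩ := h _ hι.some_mem
    ⟨_, single_mem_stdSimplex ℝ p⟩
  let f : (ι → ℝ) → (P → ℝ) → ℝ := fun w q => dotProduct w (M.mulVec q)
  have hlin_left (q : P → ℝ) : IsLinearMap ℝ fun w => f w q :=
    ⟨fun _ _ => add_dotProduct _ _ _, fun _ _ => smul_dotProduct _ _ _⟩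
  have hlin_right (w : ι → ℝ) : IsLinearMap ℝ fun q => f w q :=
    ⟨fun _ _ => by simp [f, Matrix.mulVec_add], fun _ _ => by simp [f, Matrix.mulVec_smul]⟩
  have hcont_left (q : P → ℝ) : Continuous fun w => f w q := by fun_prop
  have hcont_right (w : ι → ℝ) : Continuous fun q => f w q := by fun_prop
  obtain ⟨w, hw, q, hq, hsaddle⟩ := Sion.exists_isSaddlePointOn
    hι (convex_stdSimplex ℝ ι) (isCompact_stdSimplex ℝ ι)
    (fun q _ => (hcont_left q).lowerSemicontinuous.lowerSemicontinuousOn _)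
    (fun q _ => ((hlin_left q).mk'.convexOn (convex_stdSimplex ℝ ι)).quasiconvexOn)
    (convex_stdSimplex ℝ P) hP (isCompact_stdSimplex ℝ P)
    (fun w _ => (hcont_right w).upperSemicontinuous.upperSemicontinuousOn _)
    (fun w _ => ((hlin_right w).mk'.concaveOn (convex_stdSimplex ℝ P)).quasiconcaveOn)
  obtain ⟨p, hp⟩ := h w hw
  refine ⟨q, hq, fun i => ?_⟩
  calc a ≤ f w (Pi.single p 1) := by simpa [f, Matrix.dotProduct_mulVec] using hp
    _ ≤ f (Pi.single i 1) q :=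
      hsaddle _ (single_mem_stdSimplex ℝ i) _ (single_mem_stdSimplex ℝ p)
    _ = M.mulVec q i := by simp [f]

section Helly

theorem nonempty_iInter_of_forall_ne {𝕜 V κ : Type*} [Field 𝕜] [LinearOrder 𝕜]
    [IsStrictOrderedRing 𝕜] [AddCommGroup V] [Module 𝕜 V] [FiniteDimensional 𝕜 V] [Fintype κ]
    (hκ : finrank 𝕜 V + 1 < Fintype.card κ) {S : κ → Set V} (hS : ∀ k, Convex 𝕜 (S k))
    (h : ∀ k, ∃ x, ∀ l ≠ k, x ∈ S l) : (⋂ k, S k).Nonempty := by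
  suffices (⋂ k ∈ Finset.univ, S k).Nonempty by simpa using this
  refine Convex.helly_theorem' (𝕜 := 𝕜) (fun k _ => hS k) fun I _ hI => ?_
  obtain ⟨k, -, hk⟩ := Finset.exists_mem_notMem_of_card_lt_card
    (s := I) (t := Finset.univ) (by rw [Finset.card_univ]; omega)
  obtain ⟨x, hx⟩ := h k
  exact ⟨x, mem_iInter₂.2 fun l hl => hx l (ne_of_mem_of_not_mem hl hk)⟩

theorem exists_isMinOn_norm {V : Type*} [SeminormedAddCommGroup V] [ProperSpace V] {S : Set V}
    (hS : IsClosed S) (hne : S.Nonempty) : ∃ x ∈ S, IsMinOn norm S x := by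
  obtain ⟨x, hxS, hx⟩ := hS.exists_infDist_eq_dist hne 0
  exact ⟨x, hxS, fun y hy => by simpa [hx] using Metric.infDist_le_dist_of_mem (x := (0 : V)) hy⟩

variable {V : Type*} [NormedAddCommGroup V] [NormedSpace ℝ V] [StrictConvexSpace ℝ V]

theorem eq_of_isMinOn_norm {S : Set V} (hS : Convex ℝ S) {x y : V} (hx : x ∈ S) (hy : y ∈ S)
    (hxmin : IsMinOn norm S x) (hymin : IsMinOn norm S y) : x = y := by
  by_contra hne
  exact (norm_combo_lt_of_ne (r := ‖x‖) le_rfl (hymin hx) hne one_half_pos one_half_pos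
    (add_halves 1)).not_ge (hxmin (hS hx hy one_half_pos.le one_half_pos.le (add_halves 1)))

variable [FiniteDimensional ℝ V]

theorem exists_mem_of_isMinOn_norm {S : Fin (finrank ℝ V + 1) → Set V}
    (hc : ∀ j, IsClosed (S j)) (hS : ∀ j, Convex ℝ (S j)) (hne : (⋂ j, S j).Nonempty)
    {x : Fin (finrank ℝ V + 1) → V} (hx : ∀ j, x j ∈ ⋂ k, S (j.succAbove k))
    (hmin : ∀ j, IsMinOn norm (⋂ k, S (j.succAbove k)) (x j)) : ∃ j, x j ∈ S j := by
  obtain ⟨y, hy, hymin⟩ := exists_isMinOn_norm (isClosed_iInter hc) hne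
  have hyS (j : Fin (finrank ℝ V + 1)) : y ∈ ⋂ k, S (j.succAbove k) :=
    mem_iInter.2 fun k => mem_iInter.1 hy _
  by_contra! hxS
  have hlt (j) : ‖x j‖ < ‖y‖ := by
    refine (hmin j (hyS j)).lt_of_ne fun heq => hxS j ?_
    have : x j = y := eq_of_isMinOn_norm (convex_iInter fun k => hS (j.succAbove k)) (hx j) (hyS j)
      (hmin j) fun z hz => heq ▸ hmin j hz
    exact this ▸ mem_iInter.1 hy j
  -- Helly's theorem now gives a point of `⋂ j, S j` in the open ball of radius `‖y‖`.
  let T : Option (Fin (finrank ℝ V + 1)) → Set V := fun o => o.elim (Metric.ball 0 ‖y‖) S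
  obtain ⟨z, hz⟩ : (⋂ o, T o).Nonempty := by
    refine nonempty_iInter_of_forall_ne (𝕜 := ℝ) (by simp) (Option.rec (convex_ball _ _) hS) ?_
    rintro (_ | j)
    · exact ⟨y, by rintro (_ | j) h; exacts [absurd rfl h, mem_iInter.1 hy j]⟩
    · refine ⟨x j, ?_⟩
      rintro (_ | k) h
      · exact mem_ball_zero_iff.2 (hlt j)
      · obtain ⟨l, rfl⟩ := Fin.exists_succAbove_eq (Option.some_injective _ |>.ne_iff.1 h)
        exact mem_iInter.1 (hx j) l
  exact (mem_ball_zero_iff.1 (mem_iInter.1 hz none)).not_ge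
    (hymin (mem_iInter.2 fun j => mem_iInter.1 hz (some j)))

theorem exists_removeNth_mem_of_nonempty_iInter {ι : Type*} {K : ι → Set V}
    (hc : ∀ i, IsClosed (K i)) (hK : ∀ i, Convex ℝ (K i)) :
    ∃ g : (Fin (finrank ℝ V) → ι) → V, ∀ f : Fin (finrank ℝ V + 1) → ι,
      (⋂ j, K (f j)).Nonempty → ∃ j, g (j.removeNth f) ∈ K (f j) := by
  have hmin (f : Fin (finrank ℝ V) → ι) : ∃ x, (⋂ k, K (f k)).Nonempty →
      x ∈ ⋂ k, K (f k) ∧ IsMinOn norm (⋂ k, K (f k)) x := by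
    by_cases hne : (⋂ k, K (f k)).Nonempty
    · obtain ⟨x, hx⟩ := exists_isMinOn_norm (isClosed_iInter fun k => hc (f k)) hne
      exact ⟨x, fun _ => hx⟩
    · exact ⟨0, fun h => absurd h hne⟩
  choose g hg using hmin
  refine ⟨g, fun f hf => ?_⟩
  have hgf (j : Fin (finrank ℝ V + 1)) := hg (j.removeNth f)
    (hf.mono (iInter_mono' fun k => ⟨j.succAbove k, subset_rfl⟩))
  exact exists_mem_of_isMinOn_norm (S := fun j => K (f j)) (fun _ => hc _) (fun _ => hK _) hf
    (fun j => (hgf j).1) (fun j => (hgf j).2)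

theorem fractional_helly {ι : Type*} [Fintype ι] {w : ι → ℝ} (hw : w ∈ stdSimplex ℝ ι)
    {K : ι → Set V} (hc : ∀ i, IsClosed (K i)) (hK : ∀ i, Convex ℝ (K i)) :
    ∃ x, mass (prodWeight w) {f : Fin (finrank ℝ V + 1) → ι | (⋂ j, K (f j)).Nonempty} /
      (finrank ℝ V + 1) ≤ mass w {i | x ∈ K i} := by
  obtain ⟨g, hg⟩ := exists_removeNth_mem_of_nonempty_iInter hc hK
  have hsub : {f : Fin (finrank ℝ V + 1) → ι | (⋂ j, K (f j)).Nonempty} ⊆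
      ⋃ j : Fin (finrank ℝ V + 1), {f | f j ∈ {i | g (j.removeNth f) ∈ K i}} :=
    fun f hf => mem_iUnion.2 (hg f hf)
  obtain ⟨j, hj⟩ := exists_mass_div_card_le (prodWeight_nonneg hw.1) hsub
  rw [mass_prodWeight_removeNth w j fun f => {i | g f ∈ K i}] at hj
  obtain ⟨f, hf⟩ := exists_le_of_le_sum_mul (prodWeight_mem_stdSimplex hw) hj
  exact ⟨g f, by simpa only [Fintype.card_fin, Nat.cast_add_one] using hf⟩

end Helly

section Tverberg

/-- Every `I`-indexed family of points of `V` can be coloured by `κ` so that the convex hulls of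
all colour classes have a common point. For `κ = Fin r` these are the index sets for which the
conclusion of Tverberg's theorem holds. -/
def IsTverberg (𝕜 V I κ : Type*) [Field 𝕜] [LinearOrder 𝕜] [IsStrictOrderedRing 𝕜]
    [AddCommGroup V] [Module 𝕜 V] : Prop :=
  ∀ y : I → V, ∃ c : I → κ, (⋂ a, convexHull 𝕜 (y '' (c ⁻¹' {a}))).Nonempty

variable {𝕜 V I J κ μ : Type*} [Field 𝕜] [LinearOrder 𝕜] [IsStrictOrderedRing 𝕜]
  [AddCommGroup V] [Module 𝕜 V]

theorem IsTverberg.prod (hI : IsTverberg 𝕜 V I κ) (hJ : IsTverberg 𝕜 V J μ) :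
    IsTverberg 𝕜 V (I × J) (κ × μ) := by
  intro y
  choose c p hp using fun i => hJ fun j => y (i, j)
  obtain ⟨b, z, hz⟩ := hI p
  refine ⟨fun ij => (b ij.1, c ij.1 ij.2), z, mem_iInter.2 fun (a, m) => ?_⟩
  refine convexHull_min ?_ (convex_convexHull 𝕜 _) (mem_iInter.1 hz a)
  rintro _ ⟨i, rfl, rfl⟩
  refine convexHull_mono ?_ (mem_iInter.1 (hp i) m)
  rintro _ ⟨j, rfl, rfl⟩
  exact ⟨(i, j), rfl, rfl⟩

theorem IsTverberg.of_surjective (hI : IsTverberg 𝕜 V I κ) {f : κ → μ} (hf : f.Surjective) :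
    IsTverberg 𝕜 V I μ := by
  intro y
  obtain ⟨c, z, hz⟩ := hI y
  refine ⟨f ∘ c, z, mem_iInter.2 fun a => ?_⟩
  obtain ⟨b, rfl⟩ := hf a
  exact convexHull_mono (image_mono fun i hi => congrArg f hi) (mem_iInter.1 hz b)

theorem IsTverberg.of_equiv (hI : IsTverberg 𝕜 V I κ) (e : I ≃ J) : IsTverberg 𝕜 V J κ := by
  intro y
  obtain ⟨c, z, hz⟩ := hI (y ∘ e)
  refine ⟨c ∘ e.symm, z, mem_iInter.2 fun a => convexHull_mono ?_ (mem_iInter.1 hz a)⟩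
  rintro _ ⟨i, rfl, rfl⟩
  exact ⟨e i, by simp, rfl⟩

variable (𝕜 V) [FiniteDimensional 𝕜 V]

theorem isTverberg_bool : IsTverberg 𝕜 V (Fin (finrank 𝕜 V + 2)) Bool := by
  classical
  intro y
  have hy : ¬ AffineIndependent 𝕜 y := fun h =>
    (h.card_le_finrank_succ.trans (Nat.succ_le_succ (Submodule.finrank_le _))).not_gt (by simp)
  obtain ⟨R, z, hzR, hzRc⟩ := Convex.radon_partition hy
  refine ⟨fun i => decide (i ∈ R), z, mem_iInter.2 (Bool.rec ?_ ?_)⟩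
  · convert hzRc using 3
    ext; simp
  · convert hzR using 3
    ext; simp

theorem exists_isTverberg_fin (n : ℕ) : ∃ m, IsTverberg 𝕜 V (Fin m) (Fin (n + 1)) := by
  induction n with
  | zero =>
    refine ⟨1, fun y => ⟨0, y 0, mem_iInter.2 fun a => subset_convexHull 𝕜 _ ⟨0, ?_, rfl⟩⟩⟩
    exact Subsingleton.elim (α := Fin 1) _ _
  | succ n ih =>
    obtain ⟨m, hm⟩ := ih
    have hprod := (hm.prod (isTverberg_bool 𝕜 V)).of_equiv finProdFinEquiv
    refine ⟨_, hprod.of_surjective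
      (f := fun a => if a.2 then Fin.last _ else a.1.castSucc) fun k => ?_⟩
    induction k using Fin.lastCases with
    | last => exact ⟨(0, true), rfl⟩
    | cast k => exact ⟨(k, false), rfl⟩

end Tverberg

section Selection

theorem le_mass_prodWeight_nonempty_iInter {V I α : Type*} [AddCommGroup V] [Module ℝ V]
    [Fintype I] [DecidableEq I] [Fintype α] {n : ℕ} (hI : IsTverberg ℝ V I (Fin (n + 1)))
    {q : α → ℝ} (hq : q ∈ stdSimplex ℝ α) (x : α → V) :
    1 / Fintype.card (I → Fin (n + 1)) ≤ mass (prodWeight (prodWeight q))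
      {F : Fin (n + 1) → I → α | (⋂ j, convexHull ℝ (range (x ∘ F j))).Nonempty} := by
  set good := {F : Fin (n + 1) → I → α | (⋂ j, convexHull ℝ (range (x ∘ F j))).Nonempty}
  -- A colouring `c` of the row `F 0` whose colour classes have intersecting hulls becomes a good
  -- matrix when, in each column, the entry of row `0` is swapped into row `c i`.
  let e (c : I → Fin (n + 1)) : (Fin (n + 1) → I → α) ≃ (Fin (n + 1) → I → α) :=
    permColumns fun i => Equiv.swap 0 (c i)
  have hgood : univ ⊆ ⋃ c, e c ⁻¹' good := by
    intro F _
    obtain ⟨c, z, hz⟩ := hI fun i => x (F 0 i)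
    refine mem_iUnion.2 ⟨c, z, mem_iInter.2 fun j => convexHull_mono ?_ (mem_iInter.1 hz j)⟩
    rintro _ ⟨i, rfl, rfl⟩
    exact ⟨i, by simp [e, permColumns]⟩
  have hW := prodWeight_mem_stdSimplex (κ := Fin (n + 1)) (prodWeight_mem_stdSimplex (κ := I) hq)
  obtain ⟨c, hc⟩ := exists_mass_div_card_le hW.1 hgood
  rwa [mass_univ, hW.2, ← prodWeight_prodWeight_permColumns q fun i => Equiv.swap 0 (c i),
    mass_preimage_equiv] at hc

theorem exists_le_mass_mem_convexHull (V : Type*) [NormedAddCommGroup V] [NormedSpace ℝ V]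
    [StrictConvexSpace ℝ V] [FiniteDimensional ℝ V] :
    ∃ (m : ℕ) (c : ℝ), 0 < c ∧ ∀ {α : Type*} [Fintype α] (q : α → ℝ),
      q ∈ stdSimplex ℝ α → ∀ x : α → V,
        ∃ z, c ≤ mass (prodWeight q) {f : Fin m → α | z ∈ convexHull ℝ (range (x ∘ f))} := by
  obtain ⟨m, hm⟩ := exists_isTverberg_fin ℝ V (finrank ℝ V)
  refine ⟨m, 1 / Fintype.card (Fin m → Fin (finrank ℝ V + 1)) / (finrank ℝ V + 1), by positivity,
    fun {α} _ q hq x => ?_⟩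
  obtain ⟨z, hz⟩ := fractional_helly (prodWeight_mem_stdSimplex (κ := Fin m) hq)
    (K := fun f => convexHull ℝ (range (x ∘ f)))
    (fun f => ((finite_range _).isCompact_convexHull ℝ).isClosed) fun f => convex_convexHull ℝ _
  refine ⟨z, le_trans ?_ hz⟩
  gcongr
  exact le_mass_prodWeight_nonempty_iInter hm hq x

variable {V I α : Type*} [AddCommGroup V] [Module ℝ V] [Fintype I] [DecidableEq I]
  [Fintype α] {x : α → V} {c : ℝ}

theorem exists_mul_pow_le_mass_mem_convexHull
    (hsel : ∀ q ∈ stdSimplex ℝ α,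
      ∃ z, c ≤ mass (prodWeight q) {f : I → α | z ∈ convexHull ℝ (range (x ∘ f))})
    {q : α → ℝ} (hq : 0 ≤ q) (hpos : 0 < ∑ p, q p) :
    ∃ z, c * (∑ p, q p) ^ Fintype.card I ≤
      mass (prodWeight q) {f : I → α | z ∈ convexHull ℝ (range (x ∘ f))} := by
  obtain ⟨z, hz⟩ := hsel (fun p => q p / ∑ p, q p)
    ⟨fun p => div_nonneg (hq p) hpos.le, by rw [← Finset.sum_div, div_self hpos.ne']⟩
  rw [prodWeight_div, mass_div, le_div_iff₀ (pow_pos hpos _)] at hz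
  exact ⟨z, hz⟩

end Selection

section WeakNet

variable {V I α : Type*} [AddCommGroup V] [Module ℝ V] [Fintype I] [DecidableEq I]
  [Fintype α] {x : α → V} {c : ℝ}

theorem exists_mass_add_le_mass_insert [DecidableEq V]
    (hsel : ∀ q ∈ stdSimplex ℝ α,
      ∃ z, c ≤ mass (prodWeight q) {f : I → α | z ∈ convexHull ℝ (range (x ∘ f))})
    (hc : 0 ≤ c) {q : α → ℝ} (hq : 0 ≤ q) {ε : ℝ} (hε : 0 < ε) {C : Set V} (hC : Convex ℝ C)
    (hCε : ε ≤ mass q (x ⁻¹' C)) {Z : Finset V} (hZ : ∀ z ∈ Z, z ∉ C) :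
    ∃ z, mass (prodWeight q) {f : I → α | ∃ y ∈ Z, y ∈ convexHull ℝ (range (x ∘ f))} +
        c * ε ^ Fintype.card I ≤
      mass (prodWeight q) {f : I → α | ∃ y ∈ insert z Z, y ∈ convexHull ℝ (range (x ∘ f))} := by
  set q' := (x ⁻¹' C).indicator q
  obtain ⟨z, hz⟩ := exists_mul_pow_le_mass_mem_convexHull hsel (q := q')
    (fun p => indicator_nonneg (fun p _ => hq p) p) (hε.trans_le hCε)
  refine ⟨z, ?_⟩
  rw [prodWeight_indicator, mass_indicator] at hz
  set old := {f : I → α | ∃ y ∈ Z, y ∈ convexHull ℝ (range (x ∘ f))}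
  set new := {f : I → α | z ∈ convexHull ℝ (range (x ∘ f))} ∩ {f | ∀ i, f i ∈ x ⁻¹' C}
  have hdisj : Disjoint old new := by
    refine disjoint_left.2 fun f ⟨y, hyZ, hy⟩ hf => hZ y hyZ ?_
    exact convexHull_min (by simpa [range_subset_iff] using hf.2) hC hy
  calc mass (prodWeight q) old + c * ε ^ Fintype.card I
      ≤ mass (prodWeight q) old + mass (prodWeight q) new := by
        gcongr
        exact le_trans (by gcongr; exact hCε) hz
    _ = mass (prodWeight q) (old ∪ new) := (mass_union_of_disjoint _ hdisj).symm
    _ ≤ _ := by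
        refine mass_mono (prodWeight_nonneg hq) (union_subset ?_ fun f hf => ?_)
        · exact fun f ⟨y, hyZ, hy⟩ => ⟨y, Finset.mem_insert_of_mem hyZ, hy⟩
        · exact ⟨z, Finset.mem_insert_self z Z, hf.1⟩

theorem exists_weak_net (V : Type*) [NormedAddCommGroup V] [NormedSpace ℝ V]
    [StrictConvexSpace ℝ V] [FiniteDimensional ℝ V] {ε : ℝ} (hε : 0 < ε) :
    ∃ R : ℕ, ∀ {α : Type*} [Fintype α] (q : α → ℝ), 0 ≤ q → ∑ p, q p ≤ 1 → ∀ x : α → V,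
      ∃ Z : Finset V, Z.card ≤ R ∧
        ∀ C, Convex ℝ C → ε ≤ mass q (x ⁻¹' C) → ∃ z ∈ Z, z ∈ C := by
  classical
  obtain ⟨m, c, hc, hsel⟩ := exists_le_mass_mem_convexHull V
  refine ⟨_, fun {α} _ q hq hq1 x => exists_card_le_of_forall_exists_insert
    (Φ := fun Z => mass (prodWeight q) {f : Fin m → α | ∃ y ∈ Z, y ∈ convexHull ℝ (range (x ∘ f))})
    (c := c * ε ^ Fintype.card (Fin m)) (by positivity)
    (fun Z => mass_nonneg (prodWeight_nonneg hq) _) (fun Z => ?_) fun Z hZ => ?_⟩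
  · calc _ ≤ mass (prodWeight q) univ := mass_mono (prodWeight_nonneg hq) (subset_univ _)
      _ = (∑ p, q p) ^ Fintype.card (Fin m) := by rw [mass_univ, sum_prodWeight]
      _ ≤ 1 := pow_le_one₀ (Finset.sum_nonneg fun p _ => hq p) hq1
  · push Not at hZ
    obtain ⟨C, hC, hCε, hCZ⟩ := hZ
    exact exists_mass_add_le_mass_insert (fun q hq => hsel q hq x) hc.le hq hε hC hCε hCZ

end WeakNet

section Transversal

theorem exists_fractional_transversal {ι Y : Type*} [Fintype ι] [Nonempty ι] {K : ι → Set Y}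
    {a : ℝ} (h : ∀ w ∈ stdSimplex ℝ ι, ∃ y, a ≤ mass w {i | y ∈ K i}) :
    ∃ P : Finset Y, ∃ q ∈ stdSimplex ℝ P, ∀ i, a ≤ mass q {p | ↑p ∈ K i} := by
  classical
  -- Only the set of members containing a point matters, so finitely many points suffice.
  obtain ⟨P, -, hP⟩ := exists_subset_bijOn univ fun y : Y => {i | y ∈ K i}
  lift P to Finset Y using (toFinite _).of_finite_image hP.injOn
  have hmem (y : Y) : ∃ p : P, {i | ↑p ∈ K i} = {i | y ∈ K i} := by
    obtain ⟨p, hp, hpy⟩ := hP.surjOn ⟨y, mem_univ y, rfl⟩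
    exact ⟨⟨p, hp⟩, hpy⟩
  let M : Matrix ι P ℝ := fun i p => if ↑p ∈ K i then 1 else 0
  have hrow (w : ι → ℝ) (p : P) : M.vecMul w p = mass w {i | ↑p ∈ K i} := by
    simp [M, Matrix.vecMul, dotProduct, mass, indicator_apply]
  have hcol (q : P → ℝ) (i : ι) : M.mulVec q i = mass q {p | ↑p ∈ K i} := by
    simp [M, Matrix.mulVec, dotProduct, mass, indicator_apply]
  have hM : ∀ w ∈ stdSimplex ℝ ι, ∃ p, a ≤ M.vecMul w p := fun w hw => by
    obtain ⟨y, hy⟩ := h w hw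
    obtain ⟨p, hp⟩ := hmem y
    exact ⟨p, by rwa [hrow, hp]⟩
  obtain ⟨q, hq, hqM⟩ := minimax_stdSimplex M hM
  exact ⟨P, q, hq, fun i => hcol q i ▸ hqM i⟩

variable {γ V : Type*} [Fintype γ] [Nonempty γ] [NormedAddCommGroup V] [NormedSpace ℝ V]
  [StrictConvexSpace ℝ V] [FiniteDimensional ℝ V]

theorem coloured_fractional_helly {ι : Type*} [Fintype ι] {K : γ → ι → Set V}
    (hc : ∀ v i, IsClosed (K v i)) (hK : ∀ v i, Convex ℝ (K v i))
    (hne : ∀ f : Fin (finrank ℝ V + 1) → ι, ∃ v, (⋂ j, K v (f j)).Nonempty)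
    {w : ι → ℝ} (hw : w ∈ stdSimplex ℝ ι) :
    ∃ z : γ × V, 1 / Fintype.card γ / (finrank ℝ V + 1) ≤ mass w {i | z.2 ∈ K z.1 i} := by
  have hW := prodWeight_mem_stdSimplex (κ := Fin (finrank ℝ V + 1)) hw
  obtain ⟨v, hv⟩ := exists_mass_div_card_le hW.1
    (T := fun v => {f : Fin (finrank ℝ V + 1) → ι | (⋂ j, K v (f j)).Nonempty})
    fun f (_ : f ∈ univ) => mem_iUnion.2 (hne f)
  obtain ⟨x, hx⟩ := fractional_helly hw (hc v) (hK v)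
  refine ⟨(v, x), le_trans ?_ hx⟩
  rw [mass_univ, hW.2] at hv
  gcongr

theorem exists_coloured_transversal (γ V : Type*) [Finite γ] [Nonempty γ] [NormedAddCommGroup V]
    [NormedSpace ℝ V] [StrictConvexSpace ℝ V] [FiniteDimensional ℝ V] :
    ∃ R : ℕ, ∀ {ι : Type*} [Fintype ι] (K : γ → ι → Set V), (∀ v i, IsClosed (K v i)) →
      (∀ v i, Convex ℝ (K v i)) →
      (∀ f : Fin (finrank ℝ V + 1) → ι, ∃ v, (⋂ j, K v (f j)).Nonempty) →
      ∃ Z : Finset (γ × V), Z.card ≤ R ∧ ∀ i, ∃ z ∈ Z, z.2 ∈ K z.1 i := by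
  classical
  have := Fintype.ofFinite γ
  set a : ℝ := 1 / Fintype.card γ / (finrank ℝ V + 1)
  obtain ⟨R, hR⟩ := exists_weak_net V (ε := a / Fintype.card γ) (by positivity)
  refine ⟨Fintype.card γ * R, fun {ι} _ K hc hK hne => ?_⟩
  cases isEmpty_or_nonempty ι
  · exact ⟨∅, by simp, isEmptyElim⟩
  obtain ⟨P, q, hq, hqK⟩ :=
    exists_fractional_transversal (K := fun i => {z : γ × V | z.2 ∈ K z.1 i})
      fun w hw => coloured_fractional_helly hc hK hne hw
  let q' (v : γ) : P → ℝ := {p | p.1.1 = v}.indicator q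
  have hq'sum (v : γ) : ∑ p, q' v p ≤ 1 :=
    (Finset.sum_le_sum fun p _ => indicator_le_self' (fun p _ => hq.1 p) p).trans hq.2.le
  choose Z hZR hZ using fun v => hR (q' v) (fun p => indicator_nonneg (fun p _ => hq.1 p) p)
    (hq'sum v) fun p => p.1.2
  refine ⟨Finset.univ.biUnion fun v => (Z v).image (Prod.mk v),
    Finset.card_biUnion_le_card_mul _ _ _ fun v _ => Finset.card_image_le.trans (hZR v),
    fun i => ?_⟩
  have hsub : {p : P | p.1.2 ∈ K p.1.1 i} ⊆ ⋃ v, {p : P | p.1.2 ∈ K v i} ∩ {p | p.1.1 = v} :=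
    fun p hp => mem_iUnion.2 ⟨p.1.1, hp, rfl⟩
  obtain ⟨v, hv⟩ := exists_mass_div_card_le hq.1 hsub
  rw [← mass_indicator] at hv
  obtain ⟨z, hzZ, hz⟩ := hZ v (K v i) (hK v i)
    ((div_le_div_of_nonneg_right (hqK i) (Nat.cast_nonneg _)).trans hv)
  exact ⟨(v, z), Finset.mem_biUnion.2 ⟨v, Finset.mem_univ v, Finset.mem_image_of_mem _ hzZ⟩, hz⟩

end Transversal

section Hyperplane

theorem exists_affineMap_range_eq {𝕜 V W : Type*} [Field 𝕜] [AddCommGroup V] [Module 𝕜 V]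
    [FiniteDimensional 𝕜 V] [AddCommGroup W] [Module 𝕜 W] [FiniteDimensional 𝕜 W]
    (hVW : finrank 𝕜 V + 1 = finrank 𝕜 W) {L : Module.Dual 𝕜 W} (hL : L ≠ 0) (t : 𝕜) :
    ∃ φ : V →ᵃ[𝕜] W, range φ = {w | L w = t} := by
  have hker := Module.Dual.finrank_ker_add_one_of_ne_zero hL
  obtain ⟨w₀, hw₀⟩ := LinearMap.surjective hL t
  let e : V ≃ₗ[𝕜] LinearMap.ker L := LinearEquiv.ofFinrankEq _ _ (by omega)
  refine ⟨(L.ker.subtype ∘ₗ e.toLinearMap).toAffineMap + AffineMap.const 𝕜 V w₀, ?_⟩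
  ext w
  constructor
  · rintro ⟨v, rfl⟩
    simp [hw₀]
  · intro hw
    have hsub : w - w₀ ∈ LinearMap.ker L := by
      rw [LinearMap.mem_ker, map_sub, hw₀, sub_eq_zero]
      exact hw
    exact ⟨e.symm ⟨w - w₀, hsub⟩, by simp⟩

theorem exists_transversal_in_hyperplanes {γ W : Type*} [Finite γ] [Nonempty γ]
    [NormedAddCommGroup W] [NormedSpace ℝ W] [FiniteDimensional ℝ W] {L : γ → Module.Dual ℝ W}
    (hL : ∀ v, L v ≠ 0) (t : ℝ) :
    ∃ R : ℕ, ∀ {ι : Type*} [Fintype ι] (S : ι → Set W), (∀ i, IsClosed (S i)) →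
      (∀ i, Convex ℝ (S i)) →
      (∀ f : Fin (finrank ℝ W) → ι, ∃ v p, L v p = t ∧ ∀ j, p ∈ S (f j)) →
      ∃ Z : Finset W, Z.card ≤ R ∧ (∀ z ∈ Z, ∃ v, L v z = t) ∧ ∀ i, ∃ z ∈ Z, z ∈ S i := by
  classical
  obtain ⟨v₀⟩ := ‹Nonempty γ›
  let V := EuclideanSpace ℝ (Fin (finrank ℝ (LinearMap.ker (L v₀))))
  have hVW : finrank ℝ V + 1 = finrank ℝ W := by
    rw [finrank_euclideanSpace_fin, Module.Dual.finrank_ker_add_one_of_ne_zero (hL v₀)]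
  choose φ hφ using fun v => exists_affineMap_range_eq (V := V) hVW (hL v) t
  have hφL (v : γ) (x : V) : L v (φ v x) = t := (hφ v).subset (mem_range_self x)
  obtain ⟨R, hR⟩ := exists_coloured_transversal γ V
  refine ⟨R, fun {ι} _ S hc hS hmeet => ?_⟩
  obtain ⟨Z, hZR, hZ⟩ := hR (fun v i => φ v ⁻¹' S i)
    (fun v i => (hc i).preimage (φ v).continuous_of_finiteDimensional)
    (fun v i => (hS i).affine_preimage (φ v)) fun f => by
      obtain ⟨v, p, hp, hpS⟩ := hmeet (f ∘ Fin.cast hVW.symm)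
      obtain ⟨x, rfl⟩ := (hφ v).superset hp
      exact ⟨v, x, mem_iInter.2 fun j => by simpa using hpS (j.cast hVW)⟩
  refine ⟨Z.image fun z => φ z.1 z.2, Finset.card_image_le.trans hZR, ?_, fun i => ?_⟩
  · rw [Finset.forall_mem_image]
    exact fun z _ => ⟨z.1, hφL z.1 z.2⟩
  · obtain ⟨z, hzZ, hz⟩ := hZ i
    exact ⟨_, Finset.mem_image_of_mem _ hzZ, hz⟩

end Hyperplane

section Diameter

theorem exists_finset_dual_forall_mul_norm_le (E : Type*) [NormedAddCommGroup E] [NormedSpace ℝ E]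
    [FiniteDimensional ℝ E] [Nontrivial E] {η : ℝ} (hη : 0 < η) :
    ∃ T : Finset (StrongDual ℝ E), (∀ ℓ ∈ T, ‖ℓ‖ = 1) ∧ ∀ x, ∃ ℓ ∈ T, (1 - η) * ‖x‖ ≤ ℓ x := by
  obtain ⟨T, hT, hTfin, hcover⟩ :=
    (isCompact_sphere (0 : StrongDual ℝ E) 1).finite_cover_balls hη
  lift T to Finset (StrongDual ℝ E) using hTfin
  refine ⟨T, fun ℓ hℓ => mem_sphere_zero_iff_norm.1 (hT hℓ), fun x => ?_⟩
  obtain ⟨g, hg, hgx⟩ := exists_dual_vector' ℝ x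
  obtain ⟨ℓ, hℓT, hℓ⟩ := mem_iUnion₂.1 (hcover (mem_sphere_zero_iff_norm.2 hg))
  refine ⟨ℓ, hℓT, ?_⟩
  calc (1 - η) * ‖x‖ ≤ ‖x‖ - ‖g - ℓ‖ * ‖x‖ := by
        nlinarith [mem_ball_iff_norm.1 hℓ, norm_nonneg x]
    _ ≤ g x - (g - ℓ) x := sub_le_sub hgx.ge ((le_abs_self _).trans ((g - ℓ).le_opNorm x))
    _ = ℓ x := by simp

theorem exists_mem_prod_map_sub_eq {E : Type*} [AddCommGroup E] [Module ℝ E] {C : Set E}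
    (hC : Convex ℝ C) (ℓ : Module.Dual ℝ E) {a b : E} (ha : a ∈ C) (hb : b ∈ C) {t : ℝ}
    (ht : 0 ≤ t) (hle : t ≤ ℓ (a - b)) : ∃ p ∈ C ×ˢ C, ℓ (p.1 - p.2) = t := by
  let L : Module.Dual ℝ (E × E) := ℓ ∘ₗ (LinearMap.fst ℝ E E - LinearMap.snd ℝ E E)
  have hL : (L '' C ×ˢ C).OrdConnected := ((hC.prod hC).linear_image L).ordConnected
  exact hL.out ⟨(a, a), ⟨ha, ha⟩, by simp [L]⟩ ⟨(a, b), ⟨ha, hb⟩, rfl⟩ ⟨ht, hle⟩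

variable {E : Type*} [NormedAddCommGroup E] [NormedSpace ℝ E]

theorem exists_mem_prod_map_sub_eq_of_one_le_ediam {C : Set E} (hC : Convex ℝ C)
    (hdiam : 1 ≤ Metric.ediam C) {δ : ℝ} (hδ0 : 0 < δ) (hδ1 : δ < 1)
    {T : Finset (StrongDual ℝ E)} (hT : ∀ x, ∃ ℓ ∈ T, (1 - δ / 2) * ‖x‖ ≤ ℓ x) :
    ∃ ℓ ∈ T, ∃ p ∈ C ×ˢ C, ℓ (p.1 - p.2) = 1 - δ := by
  obtain ⟨a, ha, b, hb, hab⟩ : ∃ a ∈ C, ∃ b ∈ C, 1 - δ / 2 ≤ ‖a - b‖ := by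
    by_contra! hlt
    have : Metric.ediam C ≤ ENNReal.ofReal (1 - δ / 2) := Metric.ediam_le fun a ha b hb => by
      rw [edist_dist, dist_eq_norm]
      exact ENNReal.ofReal_le_ofReal (hlt a ha b hb).le
    exact (hdiam.trans this).not_gt (ENNReal.ofReal_lt_one.2 (by linarith))
  obtain ⟨ℓ, hℓT, hℓ⟩ := hT (a - b)
  exact ⟨ℓ, hℓT, exists_mem_prod_map_sub_eq hC ℓ.toLinearMap ha hb (by linarith)
    (by nlinarith [show ℓ.toLinearMap (a - b) = ℓ (a - b) from rfl])⟩

theorem ofReal_le_ediam_of_le_map_sub {ℓ : StrongDual ℝ E} (hℓ : ‖ℓ‖ ≤ 1) {S : Set E} {p : E × E}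
    (hp : p ∈ S ×ˢ S) {t : ℝ} (ht : t ≤ ℓ (p.1 - p.2)) : ENNReal.ofReal t ≤ Metric.ediam S := by
  refine le_trans ?_ (Metric.edist_le_ediam_of_mem hp.1 hp.2)
  rw [edist_dist, dist_eq_norm]
  exact ENNReal.ofReal_le_ofReal
    (ht.trans ((le_abs_self _).trans ((ℓ.le_of_opNorm_le hℓ _).trans (one_mul _).le)))

end Diameter

section Partition

theorem exists_partition_of_forall_exists {α β : Type*} {r : β → α → Prop}
    {F : Finset α} {Z : Finset β} (h : ∀ a ∈ F, ∃ z ∈ Z, r z a) :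
    ∃ (k : ℕ) (P : Fin k → Finset α), k ≤ Z.card ∧ (∀ i, P i ⊆ F ∧ (P i).Nonempty) ∧
      (∀ a ∈ F, ∃! i, a ∈ P i) ∧ ∀ i, ∃ z ∈ Z, ∀ a ∈ P i, r z a := by
  classical
  obtain rfl | ⟨a₀, ha₀⟩ := F.eq_empty_or_nonempty
  · exact ⟨0, Fin.elim0, by simp⟩
  have : Nonempty β := (h a₀ ha₀).nonempty
  choose! φ hφZ hφ using h
  let e := (F.image φ).equivFin
  have hmem (i) (a : α) (ha : a ∈ F) : φ a = e.symm i ↔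
      i = e ⟨φ a, Finset.mem_image_of_mem φ ha⟩ := by
    rw [← Equiv.symm_apply_eq, Subtype.ext_iff, eq_comm]
  refine ⟨_, fun i => F.filter fun a => φ a = e.symm i,
    Finset.card_le_card (Finset.image_subset_iff.2 hφZ), fun i => ⟨Finset.filter_subset _ _, ?_⟩,
    fun a ha => ⟨e ⟨φ a, Finset.mem_image_of_mem φ ha⟩, by simp [ha], fun i hi => ?_⟩,
    fun i => ⟨e.symm i, Finset.image_subset_iff.2 hφZ (e.symm i).2, fun a ha => ?_⟩⟩
  · obtain ⟨a, ha, hai⟩ := Finset.mem_image.1 (e.symm i).2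
    exact ⟨a, Finset.mem_filter.2 ⟨ha, hai⟩⟩
  · exact (hmem i a ha).1 (Finset.mem_filter.1 hi).2
  · obtain ⟨haF, hai⟩ := Finset.mem_filter.1 ha
    exact hai ▸ hφ a haF

theorem exists_pairs_of_forall_exists_pair {E : Type*} [NormedAddCommGroup E] [NormedSpace ℝ E]
    [FiniteDimensional ℝ E] {T : Finset (StrongDual ℝ E)} (hT : T.Nonempty)
    (hT0 : ∀ ℓ ∈ T, ℓ ≠ 0) (t : ℝ) :
    ∃ R : ℕ, ∀ {ι : Type*} [Fintype ι] (A : ι → Set E), (∀ i, IsClosed (A i)) →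
      (∀ i, Convex ℝ (A i)) →
      (∀ f : Fin (2 * finrank ℝ E) → ι, ∃ ℓ ∈ T,
        ∃ p ∈ (⋂ j, A (f j)) ×ˢ (⋂ j, A (f j)), ℓ (p.1 - p.2) = t) →
      ∃ Z : Finset (E × E), Z.card ≤ R ∧ (∀ z ∈ Z, ∃ ℓ ∈ T, ℓ (z.1 - z.2) = t) ∧
        ∀ i, ∃ z ∈ Z, z ∈ A i ×ˢ A i := by
  have : Nonempty T := hT.to_subtype
  let L (ℓ : T) : Module.Dual ℝ (E × E) :=
    ℓ.1.toLinearMap ∘ₗ (LinearMap.fst ℝ E E - LinearMap.snd ℝ E E)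
  have hL (ℓ : T) : L ℓ ≠ 0 := fun h => hT0 ℓ ℓ.2 <| by
    ext x
    simpa [L] using LinearMap.congr_fun h (x, 0)
  have hfinrank : finrank ℝ (E × E) = 2 * finrank ℝ E := by rw [finrank_prod, two_mul]
  obtain ⟨R, hR⟩ := exists_transversal_in_hyperplanes hL t
  rw [hfinrank] at hR
  refine ⟨R, fun {ι} _ A hc hA hmeet => ?_⟩
  obtain ⟨Z, hZR, hZL, hZ⟩ := hR (fun i => A i ×ˢ A i) (fun i => (hc i).prod (hc i))
    (fun i => (hA i).prod (hA i)) fun f => by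
      obtain ⟨ℓ, hℓ, p, ⟨hp₁, hp₂⟩, hpt⟩ := hmeet f
      exact ⟨⟨ℓ, hℓ⟩, p, hpt, fun j => ⟨mem_iInter.1 hp₁ j, mem_iInter.1 hp₂ j⟩⟩
  exact ⟨Z, hZR, fun z hz => let ⟨ℓ, hℓ⟩ := hZL z hz; ⟨ℓ, ℓ.2, hℓ⟩, hZ⟩

theorem one_le_ediam_iInter_of_card_le {E : Type*} [PseudoEMetricSpace E] {F : Finset (Set E)}
    {n : ℕ} (hF : n ≤ F.card)
    (hdiam : ∀ G ⊆ F, G.card = n → 1 ≤ Metric.ediam (⋂₀ (G : Set (Set E)))) (f : Fin n → F) :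
    1 ≤ Metric.ediam (⋂ j, (f j : Set E)) := by
  classical
  obtain ⟨G, hfG, hGF, hG⟩ := Finset.exists_subsuperset_card_eq
    (s := Finset.univ.image fun j => (f j : Set E)) (t := F) (n := n)
    (by simp [Finset.image_subset_iff]) (Finset.card_image_le.trans (by simp)) hF
  refine (hdiam G hGF hG).trans (Metric.ediam_mono (subset_iInter fun j => sInter_subset_of_mem ?_))
  exact hfG (Finset.mem_image_of_mem _ (Finset.mem_univ j))

theorem partition_into_parts_with_large_diameter_general (E : Type*) [NormedAddCommGroup E]
    [NormedSpace ℝ E] [FiniteDimensional ℝ E] [Nontrivial E] {δ : ℝ} (hδ0 : 0 < δ) (hδ1 : δ < 1) :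
    ∃ r : ℕ, 0 < r ∧ ∀ F : Finset (Set E), 2 * finrank ℝ E ≤ F.card →
      (∀ A ∈ F, IsClosed A ∧ Convex ℝ A) →
      (∀ G ⊆ F, G.card = 2 * finrank ℝ E → 1 ≤ Metric.ediam (⋂₀ (G : Set (Set E)))) →
      ∃ (k : ℕ) (P : Fin k → Finset (Set E)), k ≤ r ∧ (∀ i, P i ⊆ F ∧ (P i).Nonempty) ∧
        (∀ A ∈ F, ∃! i, A ∈ P i) ∧
        ∀ i, ENNReal.ofReal (1 - δ) ≤ Metric.ediam (⋂₀ (P i : Set (Set E))) := by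
  obtain ⟨T, hTnorm, hT⟩ := exists_finset_dual_forall_mul_norm_le E (half_pos hδ0)
  obtain ⟨R, hR⟩ := exists_pairs_of_forall_exists_pair (let ⟨ℓ, hℓ, _⟩ := hT 0; ⟨ℓ, hℓ⟩)
    (fun ℓ hℓ => norm_ne_zero_iff.1 (hTnorm ℓ hℓ ▸ one_ne_zero)) (1 - δ)
  refine ⟨R + 1, R.succ_pos, fun F hF hFcc hdiam => ?_⟩
  obtain ⟨Z, hZR, hZℓ, hZ⟩ := hR (fun A : F => (A : Set E)) (fun A => (hFcc A A.2).1)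
    (fun A => (hFcc A A.2).2) fun f => exists_mem_prod_map_sub_eq_of_one_le_ediam
      (convex_iInter fun j => (hFcc _ (f j).2).2) (one_le_ediam_iInter_of_card_le hF hdiam f)
      hδ0 hδ1 hT
  obtain ⟨k, P, hk, hP, hPF, hPZ⟩ := exists_partition_of_forall_exists
    (r := fun (z : E × E) A => z ∈ A ×ˢ A) fun A hA => hZ ⟨A, hA⟩
  refine ⟨k, P, (hk.trans hZR).trans R.le_succ, hP, hPF, fun i => ?_⟩
  obtain ⟨z, hzZ, hz⟩ := hPZ i
  obtain ⟨ℓ, hℓT, hℓ⟩ := hZℓ z hzZ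
  have hzP : z ∈ (⋂₀ (P i : Set (Set E))) ×ˢ (⋂₀ (P i : Set (Set E))) :=
    ⟨fun A hA => (hz A hA).1, fun A hA => (hz A hA).2⟩
  exact ofReal_le_ediam_of_le_map_sub (hTnorm ℓ hℓT).le hzP hℓ.ge

end Partition

/-- If the intersection of every `2d` members of a finite family of compact convex sets in
`ℝ^d` has diameter at least one, then the family can be partitioned into at most `r = r(d,δ)`
parts so that the intersection of each part has diameter at least `1 - δ`. -/
theorem partition_into_parts_with_large_diameter (d : ℕ) (hd : 0 < d)
    (δ : ℝ) (hδ0 : 0 < δ) (hδ1 : δ < 1) :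
    ∃ r : ℕ, 0 < r ∧
      ∀ F : Finset (Set (EuclideanSpace ℝ (Fin d))),
        2 * d ≤ F.card →
        (∀ A ∈ F, IsCompact A ∧ Convex ℝ A) →
        (∀ G ⊆ F, G.card = 2 * d →
          1 ≤ Metric.diam (⋂₀ (G : Set (Set (EuclideanSpace ℝ (Fin d)))))) →
        ∃ (k : ℕ) (P : Fin k → Finset (Set (EuclideanSpace ℝ (Fin d)))),
          k ≤ r ∧
          (∀ i, P i ⊆ F ∧ (P i).Nonempty) ∧
          (∀ A ∈ F, ∃! i, A ∈ P i) ∧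
          (∀ i, 1 - δ ≤ Metric.diam (⋂₀ (P i : Set (Set (EuclideanSpace ℝ (Fin d)))))) := by
  have : NeZero d := ⟨hd.ne'⟩
  obtain ⟨r, hr, h⟩ :=
    partition_into_parts_with_large_diameter_general (EuclideanSpace ℝ (Fin d)) hδ0 hδ1
  simp only [finrank_euclideanSpace_fin] at h
  refine ⟨r, hr, fun F hF hFcc hdiam => ?_⟩
  obtain ⟨k, P, hk, hP, hPF, hPdiam⟩ := h F hF (fun A hA => ⟨(hFcc A hA).1.isClosed, (hFcc A hA).2⟩)
    fun G hGF hG => by simpa using ENNReal.ofReal_le_of_le_toReal (hdiam G hGF hG)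
  refine ⟨k, P, hk, hP, hPF, fun i => ?_⟩
  obtain ⟨A, hA⟩ := (hP i).2
  have hbdd : Bornology.IsBounded (⋂₀ (P i : Set (Set (EuclideanSpace ℝ (Fin d))))) :=
    (hFcc A ((hP i).1 hA)).1.isBounded.subset (sInter_subset_of_mem hA)
  exact (ENNReal.ofReal_le_iff_le_toReal hbdd.ediam_ne_top).1 (hPdiam i)
end

section
/- Let S₁, S₂, …, S_{2d} be finite sets of points in ℝ^d and let x, y ∈ ℝ^d be two points such that {x, y} ⊆ conv(S_i) for every 1 ≤ i ≤ 2d. Then there is a choice of points s₁ ∈ S₁, s₂ ∈ S₂, …, s_{2d} ∈ S_{2d} such that {x, y} ⊆ conv{s₁, s₂, …, s_{2d}}. -/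
/-! When `x ≠ y`, half of the sets, together with the fixed point `y`, yields a point `a` of the
hull of chosen points such that `x` lies between `y` and `a`; the other half, together with `x`,
yields a point `b` such that `y` lies between `x` and `b`. The points are then in the order
`a, x, y, b` on a line, so both `x` and `y` lie on the segment from `a` to `b`.

That `x` lies in the hull of a prescribed point `p` and of one point from each of `finrank` sets is
Bárány's pivoting argument. Among all hulls of choices take a point `z` closest to `x`. If `z ≠ x`,
it lies on a supporting hyperplane, so by Carathéodory some chosen point is not needed to represent
`z`, and exchanging that point for one on the far side of the parallel hyperplane through `x` brings
the hull closer to `x`. The argument must never exchange `p`: replacing `p` by a point of the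
segment from `x` to `p` that is closer to `x` than any hull not using `p` forces `p` to be needed.
-/

open Set Module

section Field

variable {𝕜 E : Type*} [Field 𝕜] [LinearOrder 𝕜] [IsStrictOrderedRing 𝕜]
  [AddCommGroup E] [Module 𝕜 E]

theorem exists_mem_convexHull_wbtw_of_mem_convexHull_insert {A : Set E} {x y : E}
    (hx : x ∈ convexHull 𝕜 (insert y A)) (hxy : x ≠ y) :
    ∃ a ∈ convexHull 𝕜 A, Wbtw 𝕜 y x a := by
  rcases A.eq_empty_or_nonempty with rfl | hA
  · simp [hxy] at hx
  · simpa [convexHull_insert hA, mem_segment_iff_wbtw] using hx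

theorem mem_convexHull_insert_of_wbtw {A : Set E} {x p q : E}
    (hx : x ∈ convexHull 𝕜 (insert q A)) (hq : Wbtw 𝕜 x q p) (hxq : x ≠ q) :
    x ∈ convexHull 𝕜 (insert p A) := by
  obtain ⟨a, ha, hqa⟩ := exists_mem_convexHull_wbtw_of_mem_convexHull_insert hx hxq
  exact (convex_convexHull 𝕜 _).segment_subset
    (convexHull_mono (subset_insert p A) ha) (subset_convexHull 𝕜 _ (mem_insert p A))
    (mem_segment_iff_wbtw.2 (hqa.symm.trans_expand_left hq hxq))

theorem mem_convexHull_union_of_mem_convexHull_insert {A B : Set E} {x y : E} (hxy : x ≠ y)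
    (hx : x ∈ convexHull 𝕜 (insert y A)) (hy : y ∈ convexHull 𝕜 (insert x B)) :
    x ∈ convexHull 𝕜 (A ∪ B) := by
  obtain ⟨a, ha, hxa⟩ := exists_mem_convexHull_wbtw_of_mem_convexHull_insert hx hxy
  obtain ⟨b, hb, hyb⟩ := exists_mem_convexHull_wbtw_of_mem_convexHull_insert hy hxy.symm
  exact (convex_convexHull 𝕜 _).segment_subset
    (convexHull_mono subset_union_left ha) (convexHull_mono subset_union_right hb)
    (mem_segment_iff_wbtw.2 (hxa.symm.trans_expand_left hyb hxy))

theorem card_le_finrank_of_affineIndependent_of_apply_eq {K V ι : Type*} [Field K]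
    [AddCommGroup V] [Module K V] [FiniteDimensional K V] [Fintype ι] {a : ι → V}
    (ha : AffineIndependent K a) {f : Dual K V} (hf : f ≠ 0) {c : K} (hfa : ∀ i, f (a i) = c) :
    Fintype.card ι ≤ finrank K V := by
  have hspan : vectorSpan K (range a) ≤ LinearMap.ker f := by
    rw [vectorSpan_def, Submodule.span_le]
    rintro _ ⟨_, ⟨i, rfl⟩, _, ⟨j, rfl⟩, rfl⟩
    simp [hfa]
  calc Fintype.card ι ≤ finrank K (vectorSpan K (range a)) + 1 := ha.card_le_finrank_succ
    _ ≤ finrank K (LinearMap.ker f) + 1 := by gcongr; exact Submodule.finrank_mono hspan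
    _ = finrank K V := Dual.finrank_ker_add_one_of_ne_zero hf

theorem apply_eq_of_sum_smul_eq_of_forall_apply_le {ι : Type*} [Fintype ι] {w : ι → 𝕜}
    {a : ι → E} {z : E} {f : Dual 𝕜 E} (hw : ∀ i, 0 < w i) (hw₁ : ∑ i, w i = 1)
    (hz : ∑ i, w i • a i = z) (hf : ∀ i, f (a i) ≤ f z) (i : ι) : f (a i) = f z := by
  have hsum : ∑ i, w i * (f z - f (a i)) = 0 := by
    simp [mul_sub, ← Finset.sum_mul, hw₁, ← hz]
  have hi := (Finset.sum_eq_zero_iff_of_nonneg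
    fun i _ => mul_nonneg (hw i).le (sub_nonneg.2 (hf i))).1 hsum i (Finset.mem_univ i)
  exact (sub_eq_zero.1 ((mul_eq_zero.1 hi).resolve_left (hw i).ne')).symm

theorem exists_mem_convexHull_image_compl_singleton {ι : Type*} [Fintype ι]
    [FiniteDimensional 𝕜 E] (hι : finrank 𝕜 E < Fintype.card ι) {s : ι → E} {z : E}
    (hz : z ∈ convexHull 𝕜 (range s)) {f : Dual 𝕜 E} (hf : f ≠ 0) (hle : ∀ i, f (s i) ≤ f z) :
    ∃ j, z ∈ convexHull 𝕜 (s '' {j}ᶜ) := by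
  obtain ⟨κ, _, a, w, has, ha, hw, hw₁, hwz⟩ := eq_pos_convex_span_of_mem_convexHull hz
  choose g hg using fun k => has (mem_range_self k)
  have hfa := apply_eq_of_sum_smul_eq_of_forall_apply_le hw hw₁ hwz fun k => hg k ▸ hle (g k)
  have hκ : Fintype.card κ < Fintype.card ι :=
    (card_le_finrank_of_affineIndependent_of_apply_eq ha hf hfa).trans_lt hι
  obtain ⟨j, hj⟩ : ∃ j, ∀ k, g k ≠ j := by
    simpa [Function.Surjective] using fun h : g.Surjective =>
      hκ.not_ge (Fintype.card_le_of_surjective g h)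
  refine ⟨j, hwz ▸ (convex_convexHull 𝕜 _).sum_mem (fun k _ => (hw k).le) hw₁ fun k _ => ?_⟩
  exact subset_convexHull 𝕜 _ ⟨g k, hj k, hg k⟩

end Field

/-- The union of all rainbow polytopes of a family `S` of colour classes, that is, of the convex
hulls of one point from each `S i`. The pivoting argument minimises the distance to `x` over it. -/
def rainbowHull {ι E : Type*} [AddCommGroup E] [Module ℝ E] (S : ι → Set E) : Set E :=
  ⋃ s ∈ univ.pi S, convexHull ℝ (range s)

theorem mem_rainbowHull {ι E : Type*} [AddCommGroup E] [Module ℝ E] {S : ι → Set E} {z : E} :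
    z ∈ rainbowHull S ↔ ∃ s : ι → E, (∀ i, s i ∈ S i) ∧ z ∈ convexHull ℝ (range s) := by
  simp [rainbowHull]

theorem isCompact_rainbowHull {ι E : Type*} [Finite ι] [AddCommGroup E] [Module ℝ E]
    [TopologicalSpace E] [IsTopologicalAddGroup E] [ContinuousSMul ℝ E] {S : ι → Set E}
    (hS : ∀ i, (S i).Finite) : IsCompact (rainbowHull S) :=
  (Finite.pi hS).isCompact_biUnion fun s _ => (finite_range s).isCompact_convexHull ℝ

theorem exists_sbtw_dist_lt {E : Type*} [NormedAddCommGroup E] [NormedSpace ℝ E] {x p : E}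
    (hxp : x ≠ p) {r : ℝ} (hr : 0 < r) : ∃ q, Sbtw ℝ x q p ∧ dist x q < r := by
  have hball : ∀ᶠ ε in nhdsWithin (0 : ℝ) (Ioi 0),
      AffineMap.lineMap x p ε ∈ Metric.ball x r :=
    (AffineMap.lineMap_continuous.tendsto' 0 x (AffineMap.lineMap_apply_zero x p)).mono_left
      nhdsWithin_le_nhds (Metric.ball_mem_nhds x hr)
  obtain ⟨ε, hεr, hε⟩ := (hball.and (Ioo_mem_nhdsGT one_pos)).exists
  exact ⟨_, sbtw_lineMap_iff.2 ⟨hxp, hε⟩, Metric.mem_ball'.1 hεr⟩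

section InnerProductSpace

variable {ι E : Type*} [Fintype ι] [NormedAddCommGroup E] [InnerProductSpace ℝ E]

theorem inner_sub_le_inner_sub_of_isMinOn_dist {K : Set E} (hK : Convex ℝ K) {x z w : E}
    (hz : z ∈ K) (hmin : IsMinOn (dist x) K z) (hw : w ∈ K) :
    inner ℝ (x - z) w ≤ inner ℝ (x - z) z := by
  have hnorm : ‖x - z‖ = ⨅ v : K, ‖x - v‖ := by
    have : Nonempty K := ⟨⟨z, hz⟩⟩
    refine le_antisymm (le_ciInf fun v => ?_) (ciInf_le ⟨0, ?_⟩ (⟨z, hz⟩ : K))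
    · simpa only [dist_eq_norm, mem_ofPred_eq] using hmin v.2
    · exact forall_mem_range.2 fun v => norm_nonneg _
  simpa only [inner_sub_right, sub_nonpos] using
    (norm_eq_iInf_iff_real_inner_le_zero hK hz).1 hnorm w hw

variable [FiniteDimensional ℝ E]

theorem exists_notMem_convexHull_of_isMinOn_dist (hι : finrank ℝ E < Fintype.card ι)
    {S : ι → Set E} {s : ι → E} (hs : ∀ i, s i ∈ S i) {x z : E}
    (hz : z ∈ convexHull ℝ (range s)) (hmin : IsMinOn (dist x) (rainbowHull S) z) (hxz : x ≠ z) :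
    ∃ j, x ∉ convexHull ℝ (S j) ∧ z ∈ convexHull ℝ (s '' {j}ᶜ) := by
  classical
  have support : ∀ t : ι → E, (∀ i, t i ∈ S i) → z ∈ convexHull ℝ (range t) →
      ∀ i, innerₗ E (x - z) (t i) ≤ innerₗ E (x - z) z := fun t ht hzt i =>
    inner_sub_le_inner_sub_of_isMinOn_dist (convex_convexHull ℝ _) hzt
      (hmin.on_subset fun w hw => mem_rainbowHull.2 ⟨t, ht, hw⟩)
      (subset_convexHull ℝ _ (mem_range_self i))
  have hpos : innerₗ E (x - z) z < innerₗ E (x - z) x := by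
    rw [← sub_pos, ← map_sub]
    exact real_inner_self_pos.2 (sub_ne_zero.2 hxz)
  have hne : innerₗ E (x - z) ≠ 0 := by
    intro h
    simp [h] at hpos
  obtain ⟨j, hj⟩ := exists_mem_convexHull_image_compl_singleton hι hz hne (support s hs hz)
  refine ⟨j, fun hx => ?_, hj⟩
  obtain ⟨b, hb, hxb⟩ := ((innerₗ E (x - z)).convexOn convex_univ).exists_ge_of_mem_convexHull
    (subset_univ _) hx
  have hz' : z ∈ convexHull ℝ (range (Function.update s j b)) := by
    refine convexHull_mono ?_ hj
    rintro _ ⟨i, hi, rfl⟩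
    exact ⟨i, Function.update_of_ne hi b s⟩
  have hbz := support _ ((Function.forall_update_iff s _).2 ⟨hb, fun i _ => hs i⟩) hz' j
  rw [Function.update_self] at hbz
  exact (hpos.trans_le hxb).not_ge hbz

theorem colourful_caratheodory_insert_of_dist_lt_rainbowHull
    (hι : finrank ℝ E ≤ Fintype.card ι) {S : ι → Set E} (hS : ∀ i, (S i).Finite) {x q : E}
    (hx : ∀ i, x ∈ convexHull ℝ (S i)) (hq : ∀ w ∈ rainbowHull S, dist x q < dist x w) :
    ∃ s : ι → E, (∀ i, s i ∈ S i) ∧ x ∈ convexHull ℝ (insert q (range s)) := by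
  let T : Option ι → Set E := fun o => o.elim {q} S
  have hT : ∀ o, (T o).Finite := by rintro (_ | i); exacts [finite_singleton q, hS i]
  choose c hc using fun i => convexHull_nonempty_iff.1 ⟨x, hx i⟩
  have hqT : q ∈ rainbowHull T := mem_rainbowHull.2
    ⟨fun o => o.elim q c, by rintro (_ | i); exacts [rfl, hc i],
      subset_convexHull ℝ _ ⟨none, rfl⟩⟩
  obtain ⟨z, hz, hmin⟩ := (isCompact_rainbowHull hT).exists_isMinOn ⟨q, hqT⟩
    (continuous_const.dist continuous_id).continuousOn
  obtain ⟨s, hs, hzs⟩ := mem_rainbowHull.1 hz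
  have hxz : x = z := by
    by_contra hxz
    obtain ⟨_ | i, hxj, hzj⟩ := exists_notMem_convexHull_of_isMinOn_dist
      (by simpa [Nat.lt_succ_iff] using hι) hs hzs hmin hxz
    · have hzS : z ∈ rainbowHull S := by
        rw [← compl_range_some, compl_compl, ← range_comp] at hzj
        exact mem_rainbowHull.2 ⟨s ∘ some, fun i => hs (some i), hzj⟩
      exact (hq z hzS).not_ge (hmin hqT)
    · exact hxj (hx i)
  refine ⟨s ∘ some, fun i => hs (some i), ?_⟩
  rwa [← show s none = q from hs none, ← Option.range_eq, hxz]

theorem colourful_caratheodory_insert_of_finite (hι : finrank ℝ E ≤ Fintype.card ι)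
    {S : ι → Set E} (hS : ∀ i, (S i).Finite) {x : E} (hx : ∀ i, x ∈ convexHull ℝ (S i)) (p : E) :
    ∃ s : ι → E, (∀ i, s i ∈ S i) ∧ x ∈ convexHull ℝ (insert p (range s)) := by
  by_cases hxS : x ∈ rainbowHull S
  · obtain ⟨s, hs, hxs⟩ := mem_rainbowHull.1 hxS
    exact ⟨s, hs, convexHull_mono (subset_insert _ _) hxs⟩
  rcases eq_or_ne x p with rfl | hxp
  · choose c hc using fun i => convexHull_nonempty_iff.1 ⟨x, hx i⟩
    exact ⟨c, hc, subset_convexHull ℝ _ (mem_insert x _)⟩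
  obtain ⟨r, hr, hball⟩ :=
    Metric.isOpen_iff.1 (isCompact_rainbowHull hS).isClosed.isOpen_compl x hxS
  obtain ⟨q, hqp, hqr⟩ := exists_sbtw_dist_lt hxp hr
  have hq : ∀ w ∈ rainbowHull S, dist x q < dist x w := fun w hw =>
    hqr.trans_le (not_lt.1 fun hwr => hball (Metric.mem_ball'.2 hwr) hw)
  obtain ⟨s, hs, hxs⟩ := colourful_caratheodory_insert_of_dist_lt_rainbowHull hι hS hx hq
  exact ⟨s, hs, mem_convexHull_insert_of_wbtw hxs hqp.wbtw hqp.left_ne⟩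

end InnerProductSpace

section Module

variable {ι κ E : Type*} [Fintype ι] [Fintype κ] [AddCommGroup E] [Module ℝ E]
  [FiniteDimensional ℝ E]

theorem colourful_caratheodory_insert (hι : finrank ℝ E ≤ Fintype.card ι) {S : ι → Set E}
    {x : E} (hx : ∀ i, x ∈ convexHull ℝ (S i)) (p : E) :
    ∃ s : ι → E, (∀ i, s i ∈ S i) ∧ x ∈ convexHull ℝ (insert p (range s)) := by
  let e : E ≃ₗ[ℝ] EuclideanSpace ℝ (Fin (finrank ℝ E)) := LinearEquiv.ofFinrankEq _ _ (by simp)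
  let F : ι → Finset E := fun i => Caratheodory.minCardFinsetOfMemConvexHull (hx i)
  obtain ⟨s, hs, hxs⟩ := colourful_caratheodory_insert_of_finite (by simpa using hι)
    (S := fun i => e '' F i) (x := e x) (fun i => (F i).finite_toSet.image e)
    (fun i => e.toLinearMap.image_convexHull (F i) ▸
      mem_image_of_mem e (Caratheodory.mem_minCardFinsetOfMemConvexHull (hx i))) (e p)
  choose t ht hts using hs
  refine ⟨t, fun i => Caratheodory.minCardFinsetOfMemConvexHull_subseteq (hx i) (ht i), ?_⟩
  rw [show s = e ∘ t from funext fun i => (hts i).symm, range_comp, ← image_insert_eq] at hxs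
  rwa [← e.injective.mem_set_image, ← LinearEquiv.coe_coe, LinearMap.image_convexHull]

theorem colourful_caratheodory_two_points_general [Nonempty κ]
    (hι : finrank ℝ E ≤ Fintype.card ι) (hκ : finrank ℝ E ≤ Fintype.card κ)
    (S : ι ⊕ κ → Set E) (x y : E) (hx : ∀ i, x ∈ convexHull ℝ (S (.inl i)))
    (hy : ∀ k, y ∈ convexHull ℝ (S (.inr k))) :
    ∃ s : ι ⊕ κ → E, (∀ i, s i ∈ S i) ∧ {x, y} ⊆ convexHull ℝ (range s) := by
  rcases eq_or_ne x y with rfl | hxy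
  · choose t ht using fun k => convexHull_nonempty_iff.1 ⟨x, hy k⟩
    obtain ⟨k⟩ := ‹Nonempty κ›
    obtain ⟨s, hs, hxs⟩ := colourful_caratheodory_insert hι hx (t k)
    refine ⟨Sum.elim s t, Sum.forall.2 ⟨hs, ht⟩, ?_⟩
    rw [pair_eq_singleton, singleton_subset_iff, Sum.elim_range]
    exact convexHull_mono (insert_subset (.inr ⟨k, rfl⟩) subset_union_left) hxs
  · obtain ⟨s, hs, hxs⟩ := colourful_caratheodory_insert hι hx y
    obtain ⟨t, ht, hyt⟩ := colourful_caratheodory_insert hκ hy x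
    refine ⟨Sum.elim s t, Sum.forall.2 ⟨hs, ht⟩, ?_⟩
    rw [Sum.elim_range]
    refine pair_subset (mem_convexHull_union_of_mem_convexHull_insert hxy hxs hyt) ?_
    rw [union_comm]
    exact mem_convexHull_union_of_mem_convexHull_insert hxy.symm hyt hxs

end Module

/-- **Colourful Carathéodory theorem for two points.**  Given `2d` finite sets of points
`S₁, …, S_{2d}` in `ℝ^d` and two points `x, y` with `{x, y} ⊆ conv(Sᵢ)` for every `i`,
there is a choice `s₁ ∈ S₁, …, s_{2d} ∈ S_{2d}` with `{x, y} ⊆ conv{s₁, …, s_{2d}}`. -/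
theorem colourful_caratheodory_two_points (d : ℕ) (hd : 0 < d)
    (S : Fin (2 * d) → Finset (EuclideanSpace ℝ (Fin d)))
    (x y : EuclideanSpace ℝ (Fin d))
    (hxy : ∀ i, ({x, y} : Set (EuclideanSpace ℝ (Fin d))) ⊆
      convexHull ℝ (S i : Set (EuclideanSpace ℝ (Fin d)))) :
    ∃ s : Fin (2 * d) → EuclideanSpace ℝ (Fin d),
      (∀ i, s i ∈ S i) ∧
      ({x, y} : Set (EuclideanSpace ℝ (Fin d))) ⊆ convexHull ℝ (Set.range s) := by
  have : Nonempty (Fin d) := ⟨⟨0, hd⟩⟩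
  let e : Fin d ⊕ Fin d ≃ Fin (2 * d) := finSumFinEquiv.trans (finCongr (two_mul d).symm)
  obtain ⟨s, hs, hxys⟩ := colourful_caratheodory_two_points_general (by simp) (by simp)
    (fun i => (S (e i) : Set (EuclideanSpace ℝ (Fin d)))) x y
    (fun i => hxy _ (mem_insert x {y})) (fun i => hxy _ (mem_insert_of_mem x rfl))
  exact ⟨s ∘ e.symm, fun i => by simpa using hs (e.symm i), by rwa [e.symm.surjective.range_comp]⟩
end

section
/- Let d be a positive integer and 0 < δ < 1. There exists a positive integer n′ = n′(d,δ) such that: for any n′ finite nonempty families 𝓕₁, 𝓕₂, …, 𝓕_{n′} of compact convex sets in ℝ^d, considered as colour classes, if the intersection of every colourful choice F₁ ∈ 𝓕₁, …, F_{n′} ∈ 𝓕_{n′} has diameter at least one, then there is a colour class 𝓕_i such that the intersection of all sets of 𝓕_i has diameter at least 1 − δ. -/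
/-!
Colourful Helly (Lovász): among the sub-intersections `⋂ i ≠ j, A i (c i)` of all colourful choices
`c`, take one farthest from the origin, with nearest point `p`. If `A j (c j)` is replaced by
another member of class `j`, Helly's theorem yields a point of the new full intersection of norm at
most `‖p‖`; strict convexity of the norm makes it equal to `p`, so `p` lies in every member of
class `j`.

Diameter: a compact set `A` has diameter at least `w > 0` iff some functional `f` of norm at most
one satisfies `f (y - x) ≥ w` for some `x, y ∈ A`. For a fixed `f` and convex `A` the set of such
pairs is convex in `E × E`, and forming it commutes with intersections in `A`, so colourful Helly
applies to it. Losing `δ`, finitely many functionals suffice, and each of them is given its own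
block of `2 * dim E + 1` colour classes.
-/

open Module Set Metric

section Helly

variable {𝕜 E ι : Type*} [Field 𝕜] [LinearOrder 𝕜] [IsStrictOrderedRing 𝕜]
  [AddCommGroup E] [Module 𝕜 E] [FiniteDimensional 𝕜 E] [Fintype ι]

theorem inter_iInter_nonempty_of_forall_inter_iInter_ne (hcard : finrank 𝕜 E < Fintype.card ι)
    {B : Set E} {A : ι → Set E} (hB : Convex 𝕜 B) (hA : ∀ i, Convex 𝕜 (A i))
    (hne : (⋂ i, A i).Nonempty) (hBne : ∀ j, (B ∩ ⋂ (i) (_ : i ≠ j), A i).Nonempty) :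
    (B ∩ ⋂ i, A i).Nonempty := by
  classical
  let G : Option ι → Set E := fun o => o.elim B A
  have hG : ∀ o, Convex 𝕜 (G o) := by rintro (_ | i); exacts [hB, hA i]
  suffices (⋂ o ∈ Finset.univ, G o).Nonempty by
    simpa only [Finset.mem_univ, iInter_true, iInter_option, G, Option.elim] using this
  refine Convex.helly_theorem' (𝕜 := 𝕜) (fun o _ => hG o) fun I _ hI => ?_
  by_cases hnone : none ∈ I
  · obtain ⟨j, hj⟩ : ∃ j, some j ∉ I := by
      by_contra! hall
      have : I = Finset.univ := by ext (_ | i) <;> simp [hnone, hall]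
      rw [this, Finset.card_univ, Fintype.card_option] at hI
      lia
    obtain ⟨x, hxB, hxA⟩ := hBne j
    refine ⟨x, mem_iInter₂.2 ?_⟩
    rintro (_ | i) hi
    · exact hxB
    · exact mem_iInter₂.1 hxA i (by rintro rfl; exact hj hi)
  · obtain ⟨x, hx⟩ := hne
    refine ⟨x, mem_iInter₂.2 ?_⟩
    rintro (_ | i) hi
    · exact absurd hi hnone
    · exact mem_iInter.1 hx i

end Helly

theorem eq_of_norm_le_of_forall_norm_le {V : Type*} [NormedAddCommGroup V] [NormedSpace ℝ V]
    [StrictConvexSpace ℝ V] {K : Set V} (hK : Convex ℝ K) {p q : V} (hp : p ∈ K) (hq : q ∈ K)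
    (hmin : ∀ x ∈ K, ‖p‖ ≤ ‖x‖) (hqp : ‖q‖ ≤ ‖p‖) : q = p := by
  by_contra hne
  have hlt := (norm_midpoint_lt_iff (hqp.antisymm (hmin q hq))).2 hne
  rw [one_div, ← invOf_eq_inv, ← midpoint_eq_smul_add] at hlt
  exact (hlt.trans_le hqp).not_ge (hmin _ (hK.midpoint_mem hq hp))

theorem colourful_helly_of_strictConvexSpace {V ι : Type*} {κ : ι → Type*} [NormedAddCommGroup V]
    [NormedSpace ℝ V] [StrictConvexSpace ℝ V] [FiniteDimensional ℝ V] [Fintype ι]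
    [∀ i, Finite (κ i)] (hcard : finrank ℝ V < Fintype.card ι) {A : ∀ i, κ i → Set V}
    (hclosed : ∀ i k, IsClosed (A i k)) (hconv : ∀ i k, Convex ℝ (A i k))
    (hA : ∀ c : ∀ i, κ i, (⋂ i, A i (c i)).Nonempty) : ∃ i, (⋂ k, A i k).Nonempty := by
  classical
  rcases isEmpty_or_nonempty (∀ i, κ i) with hκ | _
  · obtain ⟨i, _⟩ := isEmpty_pi.1 hκ
    exact ⟨i, by simp only [iInter_of_empty, univ_nonempty]⟩
  have : ProperSpace V := FiniteDimensional.proper_real V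
  have : Nonempty ι := Fintype.card_pos_iff.1 (by lia)
  let S (j : ι) (c : ∀ i, κ i) : Set V := ⋂ (i) (_ : i ≠ j), A i (c i)
  have hSnearest (j c) : ∃ p ∈ S j c, infDist 0 (S j c) = ‖p‖ := by
    have hSclosed : IsClosed (S j c) := isClosed_biInter fun i _ => hclosed i _
    have hSne : (S j c).Nonempty := (hA c).mono fun x hx => mem_iInter₂.2 fun i _ =>
      mem_iInter.1 hx i
    simpa only [dist_zero_left] using hSclosed.exists_infDist_eq_dist hSne 0
  obtain ⟨⟨j, c⟩, hmax⟩ :=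
    Finite.exists_max fun a : ι × (∀ i, κ i) => infDist 0 (S a.1 a.2)
  obtain ⟨p, hpS, hp⟩ := hSnearest j c
  have hpmin : ∀ x ∈ S j c, ‖p‖ ≤ ‖x‖ := fun x hx => by
    simpa only [← hp, dist_zero_left] using infDist_le_dist_of_mem (x := 0) hx
  refine ⟨j, p, mem_iInter.2 fun k => ?_⟩
  let c' := Function.update c j k
  obtain ⟨q, hqp, hq⟩ : (closedBall 0 ‖p‖ ∩ ⋂ i, A i (c' i)).Nonempty := by
    refine inter_iInter_nonempty_of_forall_inter_iInter_ne hcard (convex_closedBall 0 ‖p‖)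
      (fun i => hconv i _) (hA c') fun l => ?_
    obtain ⟨x, hxS, hx⟩ := hSnearest l c'
    exact ⟨x, by simpa only [mem_closedBall_zero_iff, ← hx, ← hp] using hmax (l, c'), hxS⟩
  have hqA : ∀ i, q ∈ A i (c' i) := mem_iInter.1 hq
  have hqS : q ∈ S j c := mem_iInter₂.2 fun i hi => by
    simpa only [c', Function.update_of_ne hi] using hqA i
  have hqp_eq : q = p := eq_of_norm_le_of_forall_norm_le
    (convex_iInter₂ fun i _ => hconv i _) hpS hqS hpmin (mem_closedBall_zero_iff.1 hqp)
  simpa only [c', Function.update_self, hqp_eq] using hqA j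

section NormedSpace

variable {E : Type*} [NormedAddCommGroup E] [NormedSpace ℝ E]

section ColourfulHelly

variable [FiniteDimensional ℝ E] {ι : Type*} {κ : ι → Type*} [Fintype ι]

theorem colourful_helly_of_isClosed [∀ i, Finite (κ i)] (hcard : finrank ℝ E < Fintype.card ι)
    {A : ∀ i, κ i → Set E} (hclosed : ∀ i k, IsClosed (A i k)) (hconv : ∀ i k, Convex ℝ (A i k))
    (hA : ∀ c : ∀ i, κ i, (⋂ i, A i (c i)).Nonempty) : ∃ i, (⋂ k, A i k).Nonempty := by
  let e := (toEuclidean (E := E)).symm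
  obtain ⟨i, x, hx⟩ := colourful_helly_of_strictConvexSpace
    (A := fun i k => e ⁻¹' A i k) (by rwa [finrank_euclideanSpace_fin])
    (fun i k => (hclosed i k).preimage e.continuous)
    (fun i k => (hconv i k).linear_preimage e.toLinearMap)
    (fun c => by simpa only [preimage_iInter] using (hA c).preimage e.surjective)
  rw [← preimage_iInter] at hx
  exact ⟨i, e x, hx⟩

theorem colourful_helly_of_isCompact (hcard : finrank ℝ E < Fintype.card ι)
    {A : ∀ i, κ i → Set E} (hcompact : ∀ i k, IsCompact (A i k))
    (hconv : ∀ i k, Convex ℝ (A i k))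
    (hA : ∀ c : ∀ i, κ i, (⋂ i, A i (c i)).Nonempty) : ∃ i, (⋂ k, A i k).Nonempty := by
  classical
  by_contra! hempty
  have hfinite (i) : ∃ s : Finset (κ i), ⋂ k : s, A i k = ∅ := by
    obtain ⟨k₀⟩ : Nonempty (κ i) := by
      by_contra! hκ
      exact univ_nonempty.ne_empty ((iInter_of_empty _).symm.trans (hempty i))
    obtain ⟨s, hs⟩ := (hcompact i k₀).elim_finite_subfamily_closed (A i)
      (fun k => (hcompact i k).isClosed) (by rw [hempty i, inter_empty])
    refine ⟨insert k₀ s, ?_⟩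
    rw [iInter_subtype]
    simpa only [Finset.mem_insert, iInter_iInter_eq_or_left] using hs
  choose s hs using hfinite
  obtain ⟨i, hi⟩ := colourful_helly_of_isClosed (κ := fun i => s i) (A := fun i k => A i k) hcard
    (fun i k => (hcompact i k).isClosed) (fun i k => hconv i k) (fun c => hA fun i => c i)
  exact hi.ne_empty (hs i)

end ColourfulHelly

/-- The ordered pairs of points of `A` that witness that `A` has width at least `w` in the direction
of the functional `f`. It is kept as a subset of `E × E` so that Helly-type theorems apply to it. -/
def widePairs (f : StrongDual ℝ E) (w : ℝ) (A : Set E) : Set (E × E) :=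
  A ×ˢ A ∩ {p | w ≤ f (p.2 - p.1)}

section WidePairs

variable {f : StrongDual ℝ E} {w : ℝ} {A B : Set E}

theorem widePairs_mono (h : A ⊆ B) : widePairs f w A ⊆ widePairs f w B :=
  inter_subset_inter_left _ (prod_mono h h)

theorem isCompact_widePairs (hA : IsCompact A) : IsCompact (widePairs f w A) :=
  (hA.prod hA).inter_right (isClosed_le continuous_const (by fun_prop))

theorem convex_widePairs (hA : Convex ℝ A) : Convex ℝ (widePairs f w A) :=
  (hA.prod hA).inter <| convex_halfSpace_ge
    (f.toLinearMap ∘ₗ (LinearMap.snd ℝ E E - LinearMap.fst ℝ E E)).isLinear w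

theorem iInter_widePairs {κ : Type*} [Nonempty κ] (A : κ → Set E) :
    ⋂ k, widePairs f w (A k) = widePairs f w (⋂ k, A k) := by
  ext p
  simp only [widePairs, mem_iInter, mem_inter_iff, mem_prod, mem_ofPred_eq, forall_and,
    forall_const]

theorem le_diam_of_widePairs_nonempty (hf : ‖f‖ ≤ 1) (hA : Bornology.IsBounded A)
    (h : (widePairs f w A).Nonempty) : w ≤ diam A := by
  obtain ⟨⟨x, y⟩, ⟨hx, hy⟩, hw⟩ := h
  calc
    w ≤ f (y - x) := hw
    _ ≤ ‖f (y - x)‖ := Real.le_norm_self _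
    _ ≤ ‖y - x‖ := f.le_of_opNorm_le_of_le hf le_rfl |>.trans_eq (one_mul _)
    _ = dist y x := (dist_eq_norm y x).symm
    _ ≤ diam A := dist_le_diam_of_mem hA hy hx

theorem colourful_helly_widePairs [FiniteDimensional ℝ E] {ι : Type*} [Fintype ι]
    (hcard : finrank ℝ (E × E) < Fintype.card ι) (f : StrongDual ℝ E) (w : ℝ)
    {F : ι → Set (Set E)} (hne : ∀ i, (F i).Nonempty)
    (hF : ∀ i, ∀ A ∈ F i, IsCompact A ∧ Convex ℝ A)
    (hwide : ∀ c : ι → Set E, (∀ i, c i ∈ F i) → (widePairs f w (⋂ i, c i)).Nonempty) :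
    ∃ i, (widePairs f w (⋂₀ F i)).Nonempty := by
  have : Nonempty ι := Fintype.card_pos_iff.1 (by lia)
  obtain ⟨i, hi⟩ := colourful_helly_of_isCompact (κ := fun i => F i)
    (A := fun _ A => widePairs f w A) hcard
    (fun i A => isCompact_widePairs (hF i A A.2).1) (fun i A => convex_widePairs (hF i A A.2).2)
    (fun c => by simpa only [iInter_widePairs] using hwide (fun i => c i) fun i => (c i).2)
  have := (hne i).to_subtype
  exact ⟨i, by simpa only [sInter_eq_iInter, iInter_widePairs] using hi⟩

end WidePairs

theorem exists_finset_forall_exists_mul_norm_le [FiniteDimensional ℝ E] {ε : ℝ} (hε : 0 < ε) :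
    ∃ T : Finset (StrongDual ℝ E),
      (∀ f ∈ T, ‖f‖ ≤ 1) ∧ ∀ x : E, ∃ f ∈ T, (1 - ε) * ‖x‖ ≤ f x := by
  have : ProperSpace (StrongDual ℝ E) := FiniteDimensional.proper_real _
  obtain ⟨t, ht, htfin, hcover⟩ :=
    finite_cover_balls_of_compact (isCompact_closedBall (0 : StrongDual ℝ E) 1) hε
  refine ⟨htfin.toFinset, fun f hf => ?_, fun x => ?_⟩
  · exact mem_closedBall_zero_iff.1 (ht (htfin.mem_toFinset.1 hf))
  obtain ⟨g, hg, hgx⟩ := exists_dual_vector'' ℝ x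
  obtain ⟨f, hf, hgf⟩ := mem_iUnion₂.1 (hcover (mem_closedBall_zero_iff.2 hg))
  refine ⟨f, htfin.mem_toFinset.2 hf, ?_⟩
  have hgf_apply : g x - f x ≤ ε * ‖x‖ :=
    (Real.le_norm_self _).trans ((g - f).le_of_opNorm_le (mem_ball_iff_norm.1 hgf).le x)
  have hgx' : g x = ‖x‖ := hgx
  linarith

theorem exists_finset_forall_exists_widePairs_nonempty [FiniteDimensional ℝ E] {δ : ℝ}
    (hδ0 : 0 < δ) (hδ1 : δ < 1) :
    ∃ T : Finset (StrongDual ℝ E), T.Nonempty ∧ (∀ f ∈ T, ‖f‖ ≤ 1) ∧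
      ∀ A : Set E, 1 ≤ diam A → ∃ f ∈ T, (widePairs f (1 - δ) A).Nonempty := by
  obtain ⟨T, hT, hnorming⟩ := exists_finset_forall_exists_mul_norm_le (E := E) (half_pos hδ0)
  refine ⟨T, (hnorming 0).imp fun _ h => h.1, hT, fun A hA => ?_⟩
  obtain ⟨x, hx, y, hy, hxy⟩ : ∃ x ∈ A, ∃ y ∈ A, 1 - δ / 2 < dist y x := by
    by_contra! h
    linarith [diam_le_of_forall_dist_le (by linarith) fun y hy x hx => h x hx y hy]
  obtain ⟨f, hf, hfxy⟩ := hnorming (y - x)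
  refine ⟨f, hf, (x, y), ⟨hx, hy⟩, ?_⟩
  calc
    1 - δ ≤ (1 - δ / 2) * (1 - δ / 2) := by linarith [mul_self_nonneg (δ / 2)]
    _ ≤ (1 - δ / 2) * ‖y - x‖ := by
      rw [← dist_eq_norm]
      exact mul_le_mul_of_nonneg_left hxy.le (by linarith)
    _ ≤ f (y - x) := hfxy

theorem exists_le_diam_sInter_of_widePairs [FiniteDimensional ℝ E] {J : Type*} [Fintype J]
    (hcard : finrank ℝ (E × E) < Fintype.card J) {T : Finset (StrongDual ℝ E)} {v w : ℝ}
    (hT : ∀ f ∈ T, ‖f‖ ≤ 1)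
    (hwide : ∀ A : Set E, v ≤ diam A → ∃ f ∈ T, (widePairs f w A).Nonempty)
    {F : T × J → Set (Set E)} (hne : ∀ i, (F i).Nonempty)
    (hF : ∀ i, ∀ A ∈ F i, IsCompact A ∧ Convex ℝ A)
    (hdiam : ∀ c : T × J → Set E, (∀ i, c i ∈ F i) → v ≤ diam (⋂ i, c i)) :
    ∃ i, w ≤ diam (⋂₀ F i) := by
  by_contra! hsmall
  have hnarrow (f : T) : ∃ c : J → Set E,
      (∀ j, c j ∈ F (f, j)) ∧ ¬ (widePairs f.1 w (⋂ j, c j)).Nonempty := by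
    by_contra! hc
    obtain ⟨j, hj⟩ := colourful_helly_widePairs hcard f.1 w (fun j => hne (f, j))
      (fun j => hF (f, j)) hc
    obtain ⟨A, hA⟩ := hne (f, j)
    have hbdd : Bornology.IsBounded (⋂₀ F (f, j)) :=
      (hF _ A hA).1.isBounded.subset (sInter_subset_of_mem hA)
    exact (hsmall (f, j)).not_ge (le_diam_of_widePairs_nonempty (hT f f.2) hbdd hj)
  choose c hcF hc using hnarrow
  obtain ⟨f, hf, hfwide⟩ := hwide _ (hdiam (fun i => c i.1 i.2) fun i => hcF i.1 i.2)
  have hsub : ⋂ i : T × J, c i.1 i.2 ⊆ ⋂ j, c ⟨f, hf⟩ j :=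
    subset_iInter fun j => iInter_subset (fun i : T × J => c i.1 i.2) (⟨f, hf⟩, j)
  exact hc ⟨f, hf⟩ (hfwide.mono (widePairs_mono hsub))

theorem colourful_helly_for_diameter_general (E : Type*) [NormedAddCommGroup E] [NormedSpace ℝ E]
    [FiniteDimensional ℝ E] {δ : ℝ} (hδ0 : 0 < δ) (hδ1 : δ < 1) :
    ∃ n' : ℕ, 0 < n' ∧
      ∀ F : Fin n' → Set (Set E),
        (∀ i, (F i).Nonempty) →
        (∀ i, ∀ A ∈ F i, IsCompact A ∧ Convex ℝ A) →
        (∀ choice : Fin n' → Set E,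
          (∀ i, choice i ∈ F i) → 1 ≤ diam (⋂ i, choice i)) →
        ∃ i, 1 - δ ≤ diam (⋂₀ F i) := by
  obtain ⟨T, hTne, hT, hwide⟩ :=
    exists_finset_forall_exists_widePairs_nonempty (E := E) hδ0 hδ1
  have := hTne.to_subtype
  let J := Fin (finrank ℝ (E × E) + 1)
  let e := Fintype.equivFin (T × J)
  refine ⟨Fintype.card (T × J), Fintype.card_pos, fun F hne hF hdiam => ?_⟩
  obtain ⟨i, hi⟩ := exists_le_diam_sInter_of_widePairs (J := J) (F := F ∘ e) (by simp [J]) hT hwide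
    (fun i => hne (e i)) (fun i => hF (e i)) fun c hc => by
      rw [← e.symm.surjective.iInter_comp]
      exact hdiam (c ∘ e.symm) fun i => by simpa using hc (e.symm i)
  exact ⟨e i, hi⟩

end NormedSpace

/-- **Colourful Helly theorem for the diameter.**  There is `n' = n'(d, δ)` such that for any
`n'` finite nonempty colour classes of compact convex sets in `ℝ^d`, if the intersection of
every colourful choice has diameter at least one, then some colour class has intersection of
diameter at least `1 - δ`. -/
theorem colourful_helly_for_diameter (d : ℕ) (hd : 0 < d)
    (δ : ℝ) (hδ0 : 0 < δ) (hδ1 : δ < 1) :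
    ∃ n' : ℕ, 0 < n' ∧
      ∀ F : Fin n' → Finset (Set (EuclideanSpace ℝ (Fin d))),
        (∀ i, (F i).Nonempty) →
        (∀ i, ∀ A ∈ F i, IsCompact A ∧ Convex ℝ A) →
        (∀ choice : Fin n' → Set (EuclideanSpace ℝ (Fin d)),
          (∀ i, choice i ∈ F i) → 1 ≤ Metric.diam (⋂ i, choice i)) →
        ∃ i, 1 - δ ≤ Metric.diam (⋂₀ (F i : Set (Set (EuclideanSpace ℝ (Fin d))))) := by
  obtain ⟨n', hn', h⟩ :=
    colourful_helly_for_diameter_general (EuclideanSpace ℝ (Fin d)) hδ0 hδ1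
  exact ⟨n', hn', fun F => h fun i => F i⟩
end

section
/- For every positive integer d ≥ 2 there is a constant C_d > 0 such that for every 0 < δ < 1, the colourful Helly theorem for diameter holds with n′ = ⌈C_d · δ^{−(d−1)/2}⌉ colour classes; that is, for any n′ finite nonempty families 𝓕₁, …, 𝓕_{n′} of compact convex sets in ℝ^d, if the intersection of every colourful choice F₁ ∈ 𝓕₁, …, F_{n′} ∈ 𝓕_{n′} has diameter at least one, then some colour class 𝓕_i satisfies diam(∩𝓕_i) ≥ 1 − δ. -/
/-!
A set of diameter at least `1` contains a pair `(x, y)` with `‖y - x‖ ≥ 1`. Take `O(δ^{-(d-1)/2})`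
directions such that every line makes an angle of cosine at least `1 - δ` with one of them. Then
the set has width at least `1 - δ` in one of these directions, and conversely width at least
`1 - δ` in some direction forces diameter at least `1 - δ`.

For a fixed direction `u`, the pairs `(x, y)` in `A × A` with `⟪u, y - x⟫ ≥ w` form a convex subset
of a space of dimension `2d`, so Bárány's colourful Helly theorem settles the width in direction
`u` with `2d + 1` colour classes. Assign `2d + 1` classes to each direction. If every direction
had a choice from its own classes whose intersection is too narrow, these choices would combine
into a colourful choice too narrow in all directions, hence of diameter less than `1`.
-/

open Module (finrank)
open scoped RealInnerProductSpace

section Helly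

variable {V ι : Type*}

theorem exists_disjoint_iInter_ne {𝕜 : Type*} [Field 𝕜] [LinearOrder 𝕜] [IsStrictOrderedRing 𝕜]
    [AddCommGroup V] [Module 𝕜 V] [FiniteDimensional 𝕜 V] [Finite ι]
    (hι : finrank 𝕜 V + 1 ≤ Nat.card ι) {S : ι → Set V} (hS : ∀ i, Convex 𝕜 (S i))
    (hne : (⋂ i, S i).Nonempty) {B : Set V} (hB : Convex 𝕜 B) (hBS : Disjoint B (⋂ i, S i)) :
    ∃ j, Disjoint B (⋂ i ≠ j, S i) := by
  have := Fintype.ofFinite ι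
  by_contra! hmeet
  let G : Option ι → Set V := fun o => o.elim B S
  have hG : (⋂ o ∈ (Finset.univ : Finset (Option ι)), G o).Nonempty := by
    apply Convex.helly_theorem' (𝕜 := 𝕜)
    · rintro (_ | i) _
      exacts [hB, hS i]
    · intro I _ hI
      obtain ⟨o, ho⟩ : ∃ o, o ∉ I := by
        by_contra! hall
        rw [Finset.eq_univ_iff_forall.2 hall, Finset.card_univ, Fintype.card_option,
          ← Nat.card_eq_fintype_card] at hI
        omega
      rcases o with _ | j
      · obtain ⟨x, hx⟩ := hne
        refine ⟨x, Set.mem_iInter₂.2 ?_⟩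
        rintro (_ | i) hi
        exacts [absurd hi ho, Set.mem_iInter.1 hx i]
      · obtain ⟨x, hxB, hx⟩ := Set.not_disjoint_iff.1 (hmeet j)
        refine ⟨x, Set.mem_iInter₂.2 ?_⟩
        rintro (_ | i) hi
        · exact hxB
        · exact Set.mem_iInter₂.1 hx i (by rintro rfl; exact ho hi)
  obtain ⟨x, hx⟩ := hG
  simp only [Finset.mem_univ, Set.iInter_true, Set.mem_iInter] at hx
  exact Set.disjoint_left.1 hBS (hx none) (Set.mem_iInter.2 fun i => hx (some i))

theorem norm_lt_norm_of_forall_norm_le [NormedAddCommGroup V] [NormedSpace ℝ V]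
    [StrictConvexSpace ℝ V] {K : Set V} (hK : Convex ℝ K) {p q : V} (hp : p ∈ K)
    (hmin : ∀ r ∈ K, ‖p‖ ≤ ‖r‖) (hq : q ∈ K) (hpq : p ≠ q) : ‖p‖ < ‖q‖ := by
  refine (hmin q hq).lt_of_ne fun heq => ?_
  have hmid : ‖p‖ ≤ ‖(1 / 2 : ℝ) • (p + q)‖ := by
    simpa [midpoint_eq_smul_add] using hmin _ (hK.midpoint_mem hp hq)
  exact hmid.not_gt ((norm_midpoint_lt_iff heq).2 hpq)

theorem exists_mem_norm_eq_infDist [SeminormedAddCommGroup V] [ProperSpace V] {K : Set V}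
    (hK : IsClosed K) (hne : K.Nonempty) : ∃ p ∈ K, ‖p‖ = Metric.infDist 0 K := by
  obtain ⟨p, hp, h⟩ := hK.exists_infDist_eq_dist hne 0
  exact ⟨p, hp, by rw [h, dist_zero_left]⟩

theorem infDist_zero_le_norm [SeminormedAddCommGroup V] {K : Set V} {x : V} (hx : x ∈ K) :
    Metric.infDist 0 K ≤ ‖x‖ := by
  simpa using Metric.infDist_le_dist_of_mem (x := 0) hx

variable {α : ι → Type*} [∀ i, Finite (α i)] [∀ i, Nonempty (α i)]
  [NormedAddCommGroup V] [NormedSpace ℝ V] [FiniteDimensional ℝ V] [Finite ι]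

/-- Among all intersections of the sets of a colourful choice with one colour omitted, take one
farthest from the origin, with omitted colour `k` and nearest point `p`. If `p` missed a set of
colour `k`, adding that set would push the nearest point farther away, and by Helly's theorem
omitting a suitable other colour would keep it there. -/
theorem colourful_helly_of_strictConvexSpace_s8 [StrictConvexSpace ℝ V]
    (hι : finrank ℝ V + 1 ≤ Nat.card ι) {S : ∀ i, α i → Set V}
    (hclosed : ∀ i a, IsClosed (S i a)) (hconvex : ∀ i a, Convex ℝ (S i a))
    (hchoice : ∀ c : ∀ i, α i, (⋂ i, S i (c i)).Nonempty) :
    ∃ i, (⋂ a, S i a).Nonempty := by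
  classical
  have : ProperSpace V := FiniteDimensional.proper_real V
  have : Nonempty ι := (Nat.card_pos_iff.1 (by omega)).1
  let K (k : ι) (c : ∀ i, α i) : Set V := ⋂ i ≠ k, S i (c i)
  have K_nonempty k c : (K k c).Nonempty :=
    (hchoice c).mono fun x hx => Set.mem_iInter₂.2 fun i _ => Set.mem_iInter.1 hx i
  obtain ⟨⟨k, c⟩, hmax⟩ :=
    Finite.exists_max fun z : ι × (∀ i, α i) => Metric.infDist 0 (K z.1 z.2)
  obtain ⟨p, hpK, hp⟩ := exists_mem_norm_eq_infDist
    (isClosed_biInter fun i _ => hclosed i (c i)) (K_nonempty k c)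
  refine ⟨k, p, Set.mem_iInter.2 fun a => by_contra fun hpa => ?_⟩
  let c' := Function.update c k a
  obtain ⟨q, hqS, hq⟩ := exists_mem_norm_eq_infDist
    (isClosed_iInter fun i => hclosed i (c' i)) (hchoice c')
  rw [Set.mem_iInter] at hqS
  have hqa : q ∈ S k a := by simpa [c'] using hqS k
  have hqK : q ∈ K k c := Set.mem_iInter₂.2 fun i hi => by simpa [c', hi] using hqS i
  have hpq : ‖p‖ < ‖q‖ :=
    norm_lt_norm_of_forall_norm_le (convex_iInter₂ fun i _ => hconvex i (c i)) hpK
      (fun r hr => hp ▸ infDist_zero_le_norm hr) hqK (by rintro rfl; exact hpa hqa)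
  obtain ⟨j, hj⟩ := exists_disjoint_iInter_ne hι (fun i => hconvex i (c' i)) (hchoice c')
    (convex_ball 0 ‖q‖) <| Set.disjoint_left.2 fun x hxball hx =>
      (mem_ball_zero_iff.1 hxball).not_ge (hq ▸ infDist_zero_le_norm hx)
  have hqj : ‖q‖ ≤ Metric.infDist 0 (K j c') :=
    (Metric.le_infDist (K_nonempty j c')).2 fun x hx => by
      simpa using fun hxq => Set.disjoint_left.1 hj (mem_ball_zero_iff.2 hxq) hx
  exact (hpq.trans_le hqj).not_ge (hp ▸ hmax (j, c'))

theorem colourful_helly (hι : finrank ℝ V + 1 ≤ Nat.card ι) {S : ∀ i, α i → Set V}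
    (hclosed : ∀ i a, IsClosed (S i a)) (hconvex : ∀ i a, Convex ℝ (S i a))
    (hchoice : ∀ c : ∀ i, α i, (⋂ i, S i (c i)).Nonempty) :
    ∃ i, (⋂ a, S i a).Nonempty := by
  let e := toEuclidean (E := V)
  obtain ⟨i, x, hx⟩ := colourful_helly_of_strictConvexSpace_s8 (S := fun i a => e.symm ⁻¹' S i a)
    (by simpa using hι) (fun i a => (hclosed i a).preimage e.symm.continuous)
    (fun i a => (hconvex i a).linear_preimage e.symm.toLinearMap)
    (fun c => by simpa only [Set.preimage_iInter] using
      (hchoice c).preimage e.symm.surjective)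
  exact ⟨i, e.symm x, by simpa using hx⟩

theorem colourful_helly_width (hι : 2 * finrank ℝ V + 1 ≤ Nat.card ι) (φ : V →L[ℝ] ℝ) (w : ℝ)
    {S : ∀ i, α i → Set V} (hclosed : ∀ i a, IsClosed (S i a))
    (hconvex : ∀ i a, Convex ℝ (S i a))
    (hchoice : ∀ c : ∀ i, α i, ∃ x ∈ ⋂ i, S i (c i), ∃ y ∈ ⋂ i, S i (c i), w ≤ φ (y - x)) :
    ∃ i, ∃ x ∈ ⋂ a, S i a, ∃ y ∈ ⋂ a, S i a, w ≤ φ (y - x) := by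
  let ψ : V × V →L[ℝ] ℝ := φ ∘L (ContinuousLinearMap.snd ℝ V V - ContinuousLinearMap.fst ℝ V V)
  let H : Set (V × V) := {z | w ≤ ψ z}
  have H_closed : IsClosed H := isClosed_le continuous_const ψ.continuous
  have H_convex : Convex ℝ H := convex_halfSpace_ge ψ.isLinear w
  obtain ⟨i, ⟨x, y⟩, hxy⟩ := colourful_helly (S := fun i a => S i a ×ˢ S i a ∩ H)
    (by rw [Module.finrank_prod]; omega)
    (fun i a => ((hclosed i a).prod (hclosed i a)).inter H_closed)
    (fun i a => ((hconvex i a).prod (hconvex i a)).inter H_convex)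
    (fun c => by
      obtain ⟨x, hx, y, hy, hw⟩ := hchoice c
      rw [Set.mem_iInter] at hx hy
      exact ⟨(x, y), Set.mem_iInter.2 fun i => ⟨⟨hx i, hy i⟩, hw⟩⟩)
  rw [Set.mem_iInter] at hxy
  exact ⟨i, x, Set.mem_iInter.2 fun a => (hxy a).1.1, y, Set.mem_iInter.2 fun a => (hxy a).1.2,
    (hxy (Classical.arbitrary (α i))).2⟩

end Helly

theorem exists_forall_choice_of_forall_choice_exists {ι T : Type*} {α : ι → Type*} (f : ι → T)
    (P : ∀ t, (∀ i : {i // f i = t}, α i) → Prop)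
    (h : ∀ c : ∀ i, α i, ∃ t, P t fun i => c i) : ∃ t, ∀ c, P t c := by
  by_contra! hbad
  choose c hc using hbad
  obtain ⟨t, ht⟩ := h fun i => c (f i) ⟨i, rfl⟩
  have hglue : (fun i : {i // f i = t} => c (f i) ⟨i, rfl⟩) = c t := by
    funext ⟨i, hi⟩
    subst hi
    rfl
  exact hc t (hglue ▸ ht)

theorem exists_forall_le_card_fiber {ι T : Type*} [Finite ι] [Finite T] [Nonempty T] {m : ℕ}
    (h : m * Nat.card T ≤ Nat.card ι) : ∃ f : ι → T, ∀ t, m ≤ Nat.card {i // f i = t} := by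
  have := Fintype.ofFinite ι
  have := Fintype.ofFinite T
  obtain ⟨e⟩ : Nonempty (Fin m × T ↪ ι) :=
    Function.Embedding.nonempty_of_card_le (by simpa using h)
  let f := Function.extend e Prod.snd fun _ => Classical.arbitrary T
  have hf (s : Fin m) (t : T) : f (e (s, t)) = t := e.injective.extend_apply _ _ (s, t)
  refine ⟨f, fun t => ?_⟩
  have hinj : Function.Injective fun s : Fin m => (⟨e (s, t), hf s t⟩ : {i // f i = t}) :=
    fun s s' hs => by simpa using hs
  simpa using Nat.card_le_card_of_injective _ hinj

theorem exists_le_dist_of_le_ediam {X : Type*} [PseudoMetricSpace X] [ProperSpace X] {s : Set X}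
    (hs : IsClosed s) {r : ℝ} (hr : 0 < r) (h : ENNReal.ofReal r ≤ Metric.ediam s) :
    ∃ x ∈ s, ∃ y ∈ s, r ≤ dist x y := by
  by_contra! hlt
  have hcompact : IsCompact s := Metric.isCompact_of_isClosed_isBounded hs
    (Metric.isBounded_iff.2 ⟨r, fun x hx y hy => (hlt x hx y hy).le⟩)
  have hne : s.Nonempty := by
    rw [Set.nonempty_iff_ne_empty]
    rintro rfl
    simp [hr.not_ge] at h
  obtain ⟨⟨x, y⟩, ⟨hx, hy⟩, hmax⟩ := (hcompact.prod hcompact).exists_isMaxOn (hne.prod hne)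
    continuous_dist.continuousOn
  have hdiam : Metric.ediam s ≤ ENNReal.ofReal (dist x y) :=
    Metric.ediam_le_of_forall_dist_le fun a ha b hb => hmax (Set.mk_mem_prod ha hb)
  exact (hlt x hx y hy).not_ge ((ENNReal.ofReal_le_ofReal_iff dist_nonneg).1 (h.trans hdiam))

section LineCover

variable {E T : Type*} [NormedAddCommGroup E] [InnerProductSpace ℝ E]

/-- A family of directions `u` that approximates every line through the origin: the cosine of the
angle between any line and a suitable line `ℝ ∙ u t` is at least `1 - δ`. The `u t` need not be
unit vectors. -/
structure IsLineCover (δ : ℝ) (u : T → E) : Prop where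
  ne_zero : ∀ t, u t ≠ 0
  exists_le_abs_inner : ∀ v ≠ 0, ∃ t, (1 - δ) * (‖u t‖ * ‖v‖) ≤ |⟪u t, v⟫|

theorem IsLineCover.nonempty [Nontrivial E] {δ : ℝ} {u : T → E} (hu : IsLineCover δ u) :
    Nonempty T :=
  have ⟨_, hv⟩ := exists_ne (0 : E)
  ⟨(hu.exists_le_abs_inner _ hv).choose⟩

theorem IsLineCover.map {E' : Type*} [NormedAddCommGroup E'] [InnerProductSpace ℝ E'] {δ : ℝ}
    {u : T → E} (hu : IsLineCover δ u) (e : E ≃ₗᵢ[ℝ] E') : IsLineCover δ fun t => e (u t) where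
  ne_zero t := e.map_ne_zero_iff.2 (hu.ne_zero t)
  exists_le_abs_inner v hv := by
    obtain ⟨t, ht⟩ := hu.exists_le_abs_inner (e.symm v) (e.symm.map_ne_zero_iff.2 hv)
    refine ⟨t, ?_⟩
    rwa [e.norm_map, e.inner_map_eq_flip, ← e.symm.norm_map v]

theorem IsLineCover.exists_le_inner_sub {δ : ℝ} (hδ : δ ≤ 1) {u : T → E} (hu : IsLineCover δ u)
    {s : Set E} {r : ℝ} (hr : 0 < r) (hs : ∃ x ∈ s, ∃ y ∈ s, r ≤ dist x y) :
    ∃ t, ∃ x ∈ s, ∃ y ∈ s, ‖u t‖ * ((1 - δ) * r) ≤ ⟪u t, y - x⟫ := by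
  obtain ⟨x, hx, y, hy, hxy⟩ := hs
  rw [dist_comm, dist_eq_norm] at hxy
  obtain ⟨t, ht⟩ := hu.exists_le_abs_inner (y - x) (norm_pos_iff.1 (hr.trans_le hxy))
  have hw : ‖u t‖ * ((1 - δ) * r) ≤ |⟪u t, y - x⟫| := calc
    ‖u t‖ * ((1 - δ) * r) = (1 - δ) * (‖u t‖ * r) := by ring
    _ ≤ (1 - δ) * (‖u t‖ * ‖y - x‖) := by gcongr
    _ ≤ |⟪u t, y - x⟫| := ht
  rcases le_abs.1 hw with h | h
  · exact ⟨t, x, hx, y, hy, h⟩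
  · exact ⟨t, y, hy, x, hx, by rwa [← neg_sub y x, inner_neg_right]⟩

theorem le_dist_of_norm_mul_le_inner_sub {u x y : E} (hu : u ≠ 0) {r : ℝ}
    (h : ‖u‖ * r ≤ ⟪u, y - x⟫) : r ≤ dist x y := by
  rw [dist_comm, dist_eq_norm]
  exact le_of_mul_le_mul_left (h.trans (real_inner_le_norm u (y - x))) (norm_pos_iff.2 hu)

theorem colourful_helly_ediam_of_isLineCover [FiniteDimensional ℝ E] [Nontrivial E] [Finite T]
    {δ : ℝ} (hδ : δ ≤ 1) {u : T → E} (hu : IsLineCover δ u) {r : ℝ} (hr : 0 < r)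
    {ι : Type*} [Finite ι] (hι : (2 * finrank ℝ E + 1) * Nat.card T ≤ Nat.card ι)
    {α : ι → Type*} [∀ i, Finite (α i)] [∀ i, Nonempty (α i)] {S : ∀ i, α i → Set E}
    (hclosed : ∀ i a, IsClosed (S i a)) (hconvex : ∀ i a, Convex ℝ (S i a))
    (hchoice : ∀ c : ∀ i, α i, ENNReal.ofReal r ≤ Metric.ediam (⋂ i, S i (c i))) :
    ∃ i, ENNReal.ofReal ((1 - δ) * r) ≤ Metric.ediam (⋂ a, S i a) := by
  have : ProperSpace E := FiniteDimensional.proper_real E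
  have : Nonempty T := hu.nonempty
  obtain ⟨f, hf⟩ := exists_forall_le_card_fiber hι
  let w (t : T) : ℝ := ‖u t‖ * ((1 - δ) * r)
  have hdirection : ∃ t, ∀ c : ∀ i : {i // f i = t}, α i,
      ∃ x ∈ ⋂ i, S i.1 (c i), ∃ y ∈ ⋂ i, S i.1 (c i), w t ≤ ⟪u t, y - x⟫ := by
    refine exists_forall_choice_of_forall_choice_exists f _ fun c => ?_
    obtain ⟨t, x, hx, y, hy, hw⟩ := hu.exists_le_inner_sub hδ hr <|
      exists_le_dist_of_le_ediam (isClosed_iInter fun i => hclosed i (c i)) hr (hchoice c)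
    have hsub : ⋂ i, S i (c i) ⊆ ⋂ i : {i // f i = t}, S i (c i) :=
      Set.subset_iInter fun i => Set.iInter_subset _ i.1
    exact ⟨t, x, hsub hx, y, hsub hy, hw⟩
  obtain ⟨t, ht⟩ := hdirection
  obtain ⟨i, x, hx, y, hy, hw⟩ := colourful_helly_width (hf t) (innerSL ℝ (u t)) (w t)
    (fun i => hclosed i) (fun i => hconvex i) ht
  refine ⟨i, (ENNReal.ofReal_le_ofReal ?_).trans
    (edist_dist x y ▸ Metric.edist_le_ediam_of_mem hx hy)⟩
  exact le_dist_of_norm_mul_le_inner_sub (hu.ne_zero t) hw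

theorem le_inner_of_norm_sub_sq_le {δ : ℝ} {u w : E}
    (h : ‖u - w‖ ^ 2 ≤ 2 * δ * (‖u‖ * ‖w‖)) : (1 - δ) * (‖u‖ * ‖w‖) ≤ ⟪u, w⟫ := by
  linarith [norm_sub_sq_real u w, sq_nonneg (‖u‖ - ‖w‖)]

end LineCover

section Grid

variable {ι : Type*}

/-- Index set of `gridDirection`: a facet `i` of the cube and the remaining coordinates of a
lattice point on that facet. -/
abbrev GridIndex (ι : Type*) (k : ℕ) : Type _ :=
  Σ i : ι, {j // j ≠ i} → Finset.Icc (-k : ℤ) k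

open Classical in
/-- The lattice points on the facets `x i = k` of the cube `[-k, k] ^ ι`. The opposite facets are
left out because only lines matter. -/
noncomputable def gridDirection {k : ℕ} (t : GridIndex ι k) : EuclideanSpace ℝ ι :=
  WithLp.toLp 2 fun j => if h : j = t.1 then (k : ℝ) else (t.2 ⟨j, h⟩ : ℤ)

theorem gridDirection_apply_self {k : ℕ} (t : GridIndex ι k) : gridDirection t t.1 = k := by
  simp [gridDirection]

theorem gridDirection_apply_of_ne {k : ℕ} (t : GridIndex ι k) {j : ι} (hj : j ≠ t.1) :
    gridDirection t j = (t.2 ⟨j, hj⟩ : ℤ) := by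
  simp [gridDirection, hj]

theorem exists_mem_Icc_abs_intCast_sub_le {k : ℕ} {x : ℝ} (hx : |x| ≤ k) :
    ∃ m : Finset.Icc (-k : ℤ) k, |(m : ℤ) - x| ≤ 1 / 2 := by
  have hround := abs_sub_round x
  rw [abs_le] at hx hround
  have hlower : (-k : ℝ) < round x + 1 := by linarith
  have hupper : (round x : ℝ) < k + 1 := by linarith
  norm_cast at hlower hupper
  refine ⟨⟨round x, Finset.mem_Icc.2 ⟨by lia, by lia⟩⟩, ?_⟩
  rw [abs_sub_comm]
  exact abs_sub_round x

theorem card_gridIndex [Finite ι] (k : ℕ) :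
    Nat.card (GridIndex ι k) = Nat.card ι * (2 * k + 1) ^ (Nat.card ι - 1) := by
  classical
  have := Fintype.ofFinite ι
  have hIcc : (k + 1 + k : ℤ).toNat = 2 * k + 1 := by lia
  simp [hIcc]

theorem exists_norm_gridDirection_sub_sq_le [Fintype ι] {k : ℕ} {i : ι} {w : EuclideanSpace ℝ ι}
    (hi : w i = k) (hw : ∀ j, |w j| ≤ k) :
    ∃ m, ‖gridDirection (k := k) ⟨i, m⟩ - w‖ ^ 2 ≤ Nat.card ι / 4 := by
  choose m hm using fun j => exists_mem_Icc_abs_intCast_sub_le (hw j)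
  let u : EuclideanSpace ℝ ι := gridDirection (k := k) ⟨i, fun j => m j⟩
  have hcoord j : (u - w) j ^ 2 ≤ 1 / 4 := by
    rcases eq_or_ne j i with rfl | hj
    · have : u j = k := gridDirection_apply_self _
      norm_num [this, hi]
    · have : u j = (m j : ℤ) := gridDirection_apply_of_ne _ hj
      rw [PiLp.sub_apply, this, ← sq_abs]
      nlinarith [hm j, abs_nonneg ((m j : ℤ) - w j)]
  refine ⟨fun j => m j, ?_⟩
  calc ‖u - w‖ ^ 2 = ∑ j, (u - w) j ^ 2 := EuclideanSpace.real_norm_sq_eq _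
    _ ≤ ∑ _j : ι, 1 / 4 := Finset.sum_le_sum fun j _ => hcoord j
    _ = Nat.card ι / 4 := by simp [div_eq_mul_inv]

theorem exists_ne_zero_smul_apply_eq [Finite ι] {k : ℕ} (hk : 0 < k) {v : EuclideanSpace ℝ ι}
    (hv : v ≠ 0) : ∃ c : ℝ, c ≠ 0 ∧ ∃ i, (c • v) i = k ∧ ∀ j, |(c • v) j| ≤ k := by
  have : Nonempty ι := by
    by_contra! h
    exact hv (Subsingleton.elim _ _)
  obtain ⟨i, hmax⟩ := Finite.exists_max fun j => |v j|
  have hvi : v i ≠ 0 := fun h => hv <| by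
    ext j
    simpa [h] using hmax j
  refine ⟨k / v i, by positivity, i, div_mul_cancel₀ _ hvi, fun j => ?_⟩
  calc |((k / v i : ℝ) • v) j| = k / |v i| * |v j| := by simp [abs_mul, abs_div]
    _ ≤ k / |v i| * |v i| := mul_le_mul_of_nonneg_left (hmax j) (by positivity)
    _ = k := div_mul_cancel₀ _ (abs_ne_zero.2 hvi)

theorem isLineCover_gridDirection [Fintype ι] {k : ℕ} (hk : 0 < k) {δ : ℝ}
    (hδ : Nat.card ι ≤ 8 * δ * k ^ 2) :
    IsLineCover δ (gridDirection (ι := ι) (k := k)) where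
  ne_zero t ht := by
    have := gridDirection_apply_self t
    rw [ht, PiLp.zero_apply] at this
    exact hk.ne' (Nat.cast_eq_zero.1 this.symm)
  exists_le_abs_inner v hv := by
    obtain ⟨c, hc, i, hi, hle⟩ := exists_ne_zero_smul_apply_eq hk hv
    obtain ⟨m, hm⟩ := exists_norm_gridDirection_sub_sq_le hi hle
    let u : EuclideanSpace ℝ ι := gridDirection ⟨i, m⟩
    have hku : k ≤ ‖u‖ := by
      simpa [u, gridDirection_apply_self ⟨i, m⟩] using PiLp.norm_apply_le u i
    have hkw : k ≤ ‖c • v‖ := by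
      simpa only [hi, Real.norm_natCast] using PiLp.norm_apply_le (c • v) i
    have hδ0 : 0 ≤ δ := by
      have : (0 : ℝ) ≤ δ * (8 * k ^ 2) := by linarith [(Nat.card ι).cast_nonneg (α := ℝ)]
      exact nonneg_of_mul_nonneg_left this (by positivity)
    have hclose : ‖u - c • v‖ ^ 2 ≤ 2 * δ * (‖u‖ * ‖c • v‖) := calc
      ‖u - c • v‖ ^ 2 ≤ Nat.card ι / 4 := hm
      _ ≤ 2 * δ * (k * k) := by linarith
      _ ≤ 2 * δ * (‖u‖ * ‖c • v‖) := by gcongr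
    refine ⟨⟨i, m⟩, le_of_mul_le_mul_left ?_ (abs_pos.2 hc)⟩
    calc |c| * ((1 - δ) * (‖u‖ * ‖v‖)) = (1 - δ) * (‖u‖ * ‖c • v‖) := by
          rw [norm_smul, Real.norm_eq_abs]; ring
      _ ≤ |⟪u, c • v⟫| := (le_inner_of_norm_sub_sq_le hclose).trans (le_abs_self _)
      _ = |c| * |⟪u, v⟫| := by rw [inner_smul_right, abs_mul]

end Grid

theorem exists_nat_le_mul_sq_and_le {x δ : ℝ} (hx : 0 < x) (hδ : 0 < δ) (hδ1 : δ ≤ 1) :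
    ∃ k : ℕ, 0 < k ∧ x ≤ 8 * δ * k ^ 2 ∧ 2 * k + 1 ≤ (√x + 3) * (√δ)⁻¹ := by
  have hsqrt : 0 < √(x / δ) := by positivity
  refine ⟨⌈√(x / δ) / 2⌉₊, Nat.ceil_pos.2 (by positivity), ?_, ?_⟩
  · have hle : √(x / δ) ≤ 2 * ⌈√(x / δ) / 2⌉₊ := by linarith [Nat.le_ceil (√(x / δ) / 2)]
    have hsq := (Real.sqrt_le_left (by positivity)).1 hle
    rw [div_le_iff₀ hδ] at hsq
    nlinarith
  · have hlt := Nat.ceil_lt_add_one (half_pos hsqrt).le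
    have hone : 1 ≤ (√δ)⁻¹ := (one_le_inv₀ (by positivity)).2 (Real.sqrt_le_one.2 hδ1)
    have hsplit : √(x / δ) = √x * (√δ)⁻¹ := by rw [Real.sqrt_div hx.le, div_eq_mul_inv]
    rw [add_mul, ← hsplit]
    linarith

theorem exists_isLineCover_card_le {E : Type*} [NormedAddCommGroup E] [InnerProductSpace ℝ E]
    [FiniteDimensional ℝ E] [Nontrivial E] {δ : ℝ} (hδ : 0 < δ) (hδ1 : δ ≤ 1) :
    ∃ (k : ℕ) (u : GridIndex (Fin (finrank ℝ E)) k → E), IsLineCover δ u ∧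
      Nat.card (GridIndex (Fin (finrank ℝ E)) k) ≤
        finrank ℝ E * ((√(finrank ℝ E) + 3) * (√δ)⁻¹) ^ (finrank ℝ E - 1) := by
  have hd : 0 < finrank ℝ E := Module.finrank_pos
  obtain ⟨k, hk, hdk, hkδ⟩ := exists_nat_le_mul_sq_and_le (Nat.cast_pos.2 hd) hδ hδ1
  have hcover := isLineCover_gridDirection (ι := Fin (finrank ℝ E)) hk (by simpa using hdk)
  refine ⟨k, _, hcover.map (stdOrthonormalBasis ℝ E).repr.symm, ?_⟩
  rw [card_gridIndex, Nat.card_fin]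
  push_cast
  gcongr

/-- The constant `C_d`: `2 * d + 1` colours for each of at most `d * ((√d + 3) / √δ) ^ (d - 1)`
grid directions. -/
noncomputable def colourConstant (d : ℕ) : ℝ :=
  (2 * d + 1) * (d * (√d + 3) ^ (d - 1))

theorem colourConstant_pos {d : ℕ} (hd : 0 < d) : 0 < colourConstant d := by
  unfold colourConstant
  positivity

theorem colourConstant_mul_rpow {d : ℕ} (hd : 0 < d) {δ : ℝ} (hδ : 0 ≤ δ) :
    colourConstant d * δ ^ (-(((d : ℝ) - 1) / 2)) =
      (2 * d + 1) * (d * ((√d + 3) * (√δ)⁻¹) ^ (d - 1)) := by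
  have hpow : δ ^ (-(((d : ℝ) - 1) / 2)) = (√δ)⁻¹ ^ (d - 1) := by
    rw [Real.sqrt_eq_rpow, ← Real.rpow_neg hδ, ← Real.rpow_mul_natCast hδ, Nat.cast_pred hd]
    ring_nf
  rw [hpow, colourConstant, mul_pow]
  ring

theorem colourful_helly_for_diameter_optimal_general {E : Type*} [NormedAddCommGroup E]
    [InnerProductSpace ℝ E] [FiniteDimensional ℝ E] [Nontrivial E] {δ : ℝ} (hδ : 0 < δ)
    (hδ1 : δ ≤ 1) {r : ℝ} (hr : 0 < r) {ι : Type*} [Finite ι]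
    (hι : colourConstant (finrank ℝ E) * δ ^ (-(((finrank ℝ E : ℝ) - 1) / 2)) ≤ Nat.card ι)
    {α : ι → Type*} [∀ i, Finite (α i)] [∀ i, Nonempty (α i)] {S : ∀ i, α i → Set E}
    (hclosed : ∀ i a, IsClosed (S i a)) (hconvex : ∀ i a, Convex ℝ (S i a))
    (hchoice : ∀ c : ∀ i, α i, ENNReal.ofReal r ≤ Metric.ediam (⋂ i, S i (c i))) :
    ∃ i, ENNReal.ofReal ((1 - δ) * r) ≤ Metric.ediam (⋂ a, S i a) := by
  obtain ⟨k, u, hu, hcard⟩ := exists_isLineCover_card_le (E := E) hδ hδ1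
  rw [colourConstant_mul_rpow Module.finrank_pos hδ.le] at hι
  have henough : (2 * finrank ℝ E + 1) * Nat.card (GridIndex (Fin (finrank ℝ E)) k) ≤
      (Nat.card ι : ℝ) := (mul_le_mul_of_nonneg_left hcard (by positivity)).trans hι
  exact colourful_helly_ediam_of_isLineCover hδ1 hu hr (by exact_mod_cast henough)
    hclosed hconvex hchoice

/-- **Colourful Helly theorem for the diameter with the asymptotically optimal number of colour
classes.**  For every `d ≥ 2` there is `C_d > 0` such that for every `0 < δ < 1` the colourful
Helly theorem for the diameter holds with `n' = ⌈C_d · δ^{-(d-1)/2}⌉` colour classes. -/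
theorem colourful_helly_for_diameter_optimal (d : ℕ) (hd : 2 ≤ d) :
    ∃ C : ℝ, 0 < C ∧
      ∀ δ : ℝ, 0 < δ → δ < 1 →
        ∀ F : Fin (⌈C * δ ^ (-(((d : ℝ) - 1) / 2))⌉₊) →
            Finset (Set (EuclideanSpace ℝ (Fin d))),
          (∀ i, (F i).Nonempty) →
          (∀ i, ∀ A ∈ F i, IsCompact A ∧ Convex ℝ A) →
          (∀ choice : Fin (⌈C * δ ^ (-(((d : ℝ) - 1) / 2))⌉₊) → Set (EuclideanSpace ℝ (Fin d)),
            (∀ i, choice i ∈ F i) → 1 ≤ Metric.diam (⋂ i, choice i)) →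
          ∃ i, 1 - δ ≤ Metric.diam (⋂₀ (F i : Set (Set (EuclideanSpace ℝ (Fin d))))) := by
  refine ⟨colourConstant d, colourConstant_pos (by lia), fun δ hδ hδ1 F hF hA hchoice => ?_⟩
  have : Nontrivial (EuclideanSpace ℝ (Fin d)) :=
    Module.nontrivial_of_finrank_pos (R := ℝ) (by simp only [finrank_euclideanSpace_fin]; lia)
  have hne i : Nonempty (F i) := (hF i).to_subtype
  obtain ⟨i, hi⟩ := colourful_helly_for_diameter_optimal_general hδ hδ1.le one_pos
    (by simpa using Nat.le_ceil _) (S := fun i (A : F i) => (A : Set (EuclideanSpace ℝ (Fin d))))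
    (fun i A => (hA i A A.2).1.isClosed) (fun i A => (hA i A A.2).2)
    (fun c => ENNReal.ofReal_le_of_le_toReal (hchoice (fun i => c i) fun i => (c i).2))
  obtain ⟨A, hAF⟩ := hF i
  have hbdd : Bornology.IsBounded (⋂ A : F i, (A : Set (EuclideanSpace ℝ (Fin d)))) :=
    (hA i A hAF).1.isBounded.subset (Set.iInter_subset_of_subset ⟨A, hAF⟩ subset_rfl)
  rw [mul_one, ENNReal.ofReal_le_iff_le_toReal hbdd.ediam_ne_top] at hi
  exact ⟨i, by rwa [Set.sInter_eq_iInter]⟩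
end

section
/- Let α > 0, 0 < δ < 1, and let d be a positive integer. Then there is a constant β > 0 depending only on α, d and δ such that: for any finite family 𝓕 of n compact convex sets in ℝ^d (n ≥ 2d), if the intersection of at least α·C(n,2d) of the 2d-element subfamilies of 𝓕 has diameter at least one, then there is a subfamily 𝓕′ ⊆ 𝓕 of cardinality at least βn whose intersection has diameter at least 1 − δ. -/
/-!
Fix a sufficiently fine finite net `N` of unit vectors. If a convex set has diameter at least `1`,
then for some `u ∈ N` it contains points `x` and `y` with `⟪u, x - y⟫ = 1 - δ`. By the pigeonhole
principle one direction `u` serves a positive fraction of the given `2d`-tuples. The pairs `(x, y)`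
with `⟪u, x - y⟫ = 1 - δ` form a hyperplane of `ℝ^d × ℝ^d`, of dimension `2d - 1`, so `2d` is
exactly the tuple size in the fractional Helly theorem on this hyperplane, applied to the traces of
the sets `K ×ˢ K`. A pair common to many of these traces lies in many of the sets `K`, and
`‖x - y‖ ≥ ⟪u, x - y⟫ = 1 - δ`.

For the fractional Helly theorem in dimension `m`, the point `p` of least norm in the intersection
of `m + 1` sets is already the point of least norm in the intersection of some `m` of them, by
Helly's theorem for these sets together with the open ball of radius `‖p‖`. By the pigeonhole
principle one `m`-tuple arises in this way from many `(m + 1)`-tuples, and its point of least norm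
lies in each of the sets by which these tuples extend it.
-/

open Module (finrank)
open scoped Finset InnerProductSpace

section Combinatorics

variable {ι : Type*} [DecidableEq ι] {F : Finset ι} {S : Finset (Finset ι)} {m : ℕ}

theorem mul_choose_le_sq_mul_choose_succ {n : ℕ} (hmn : m + 1 ≤ n) :
    n * n.choose m ≤ (m + 1) ^ 2 * n.choose (m + 1) := by
  obtain ⟨k, rfl⟩ := Nat.exists_eq_add_of_le' hmn
  calc (k + (m + 1)) * (k + (m + 1)).choose m
      ≤ (m + 1) * (k + 1) * (k + (m + 1)).choose m := by gcongr; nlinarith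
    _ = (m + 1) * ((k + (m + 1)).choose m * (k + (m + 1) - m)) := by
        rw [show k + (m + 1) - m = k + 1 by omega]; ring
    _ = (m + 1) ^ 2 * (k + (m + 1)).choose (m + 1) := by
        rw [← Nat.choose_succ_right_eq]; ring

theorem exists_card_fiber_erase_ge (hF : m + 1 ≤ #F) (hS : S ⊆ F.powersetCard (m + 1)) {a : ℝ}
    (ha : 0 ≤ a) (hcard : a * (#F).choose (m + 1) ≤ #S) {e : Finset ι → ι}
    (he : ∀ G ∈ S, e G ∈ G) :
    ∃ J, a / (m + 1) ^ 2 * #F ≤ #{G ∈ S | G.erase (e G) = J} := by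
  have hmaps : ∀ G ∈ S, G.erase (e G) ∈ F.powersetCard m := fun G hG => by
    obtain ⟨hGF, hGcard⟩ := Finset.mem_powersetCard.1 (hS hG)
    refine Finset.mem_powersetCard.2 ⟨(G.erase_subset _).trans hGF, ?_⟩
    rw [Finset.card_erase_of_mem (he G hG), hGcard, Nat.add_sub_cancel]
  have hchoose : (#F * (#F).choose m : ℝ) ≤ (m + 1) ^ 2 * (#F).choose (m + 1) := by
    exact_mod_cast mul_choose_le_sq_mul_choose_succ hF
  obtain ⟨J, -, hJ⟩ := Finset.exists_le_card_fiber_of_nsmul_le_card_of_maps_to hmaps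
    (Finset.powersetCard_nonempty.2 (by omega)) (b := a / (m + 1) ^ 2 * #F) <| by
      calc #(F.powersetCard m) • (a / (m + 1) ^ 2 * #F)
          = a / (m + 1) ^ 2 * (#F * (#F).choose m) := by
            rw [Finset.card_powersetCard, nsmul_eq_mul]; ring
        _ ≤ a / (m + 1) ^ 2 * ((m + 1) ^ 2 * (#F).choose (m + 1)) := by gcongr
        _ = a * (#F).choose (m + 1) := by field_simp
        _ ≤ #S := hcard
  exact ⟨J, hJ⟩

theorem injOn_filter_erase_eq {e : Finset ι → ι} (he : ∀ G ∈ S, e G ∈ G) (J : Finset ι) :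
    Set.InjOn e ({G ∈ S | G.erase (e G) = J} : Finset (Finset ι)) := by
  intro G hG G' hG' hGG'
  obtain ⟨hGS, hGJ⟩ := Finset.mem_filter.1 hG
  obtain ⟨hG'S, hG'J⟩ := Finset.mem_filter.1 hG'
  rw [← Finset.insert_erase (he G hGS), ← Finset.insert_erase (he G' hG'S), hGJ, hG'J, hGG']

end Combinatorics

section Helly

variable {ι 𝕜 E : Type*} [Field 𝕜] [LinearOrder 𝕜] [IsStrictOrderedRing 𝕜] [AddCommGroup E]
  [Module 𝕜 E] [FiniteDimensional 𝕜 E]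

theorem inter_biInter_nonempty_of_forall_erase [DecidableEq ι] {K : ι → Set E} {G : Finset ι}
    {B : Set E} (hG : finrank 𝕜 E + 1 ≤ #G) (hK : ∀ i ∈ G, Convex 𝕜 (K i)) (hB : Convex 𝕜 B)
    (hinter : (⋂ i ∈ G, K i).Nonempty)
    (herase : ∀ i ∈ G, (B ∩ ⋂ j ∈ G.erase i, K j).Nonempty) :
    (B ∩ ⋂ i ∈ G, K i).Nonempty := by
  let C : Option ι → Set E := fun o => o.elim B K
  have hC : ∀ o ∈ G.insertNone, Convex 𝕜 (C o) := by
    rintro (_ | i) hi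
    exacts [hB, hK i (by simpa using hi)]
  obtain ⟨x, hx⟩ := Convex.helly_theorem (s := G.insertNone)
    (hG.trans (by simp)) hC fun I hI hIcard => by
    obtain ⟨o, ho, hoI⟩ := Finset.exists_mem_notMem_of_card_lt_card
      (show #I < #G.insertNone by rw [Finset.card_insertNone]; omega)
    rcases o with _ | i
    · obtain ⟨p, hp⟩ := hinter
      refine ⟨p, Set.mem_iInter₂.2 ?_⟩
      rintro (_ | j) hj
      · exact absurd hj hoI
      · exact Set.mem_iInter₂.1 hp j (by simpa using hI hj)
    · obtain ⟨p, hpB, hp⟩ := herase i (by simpa using ho)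
      refine ⟨p, Set.mem_iInter₂.2 ?_⟩
      rintro (_ | j) hj
      · exact hpB
      · have hji : j ≠ i := by rintro rfl; exact hoI hj
        exact Set.mem_iInter₂.1 hp j (Finset.mem_erase.2 ⟨hji, by simpa using hI hj⟩)
  rw [Set.mem_iInter₂] at hx
  exact ⟨x, hx none (by simp), Set.mem_iInter₂.2 fun i hi => hx (some i) (by simpa using hi)⟩

end Helly

section LeastNorm

/-- `p` is a point of `C` of least norm; it serves as the canonical point of the intersection `C`
of an `m`-tuple of sets in the proof of the fractional Helly theorem. -/
def IsLeastNormPoint {V : Type*} [Norm V] (C : Set V) (p : V) : Prop :=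
  p ∈ C ∧ IsMinOn norm C p

theorem exists_isLeastNormPoint {V : Type*} [NormedAddCommGroup V] [ProperSpace V] {C : Set V}
    (hC : IsClosed C) (hne : C.Nonempty) : ∃ p, IsLeastNormPoint C p := by
  obtain ⟨p, hp, hdist⟩ := hC.exists_infDist_eq_dist hne 0
  refine ⟨p, hp, fun q hq => ?_⟩
  simpa [hdist] using Metric.infDist_le_dist_of_mem (x := (0 : V)) hq

variable {ι V : Type*} [NormedAddCommGroup V] [NormedSpace ℝ V]

theorem IsLeastNormPoint.eq [StrictConvexSpace ℝ V] {C : Set V} (hC : Convex ℝ C) {p q : V}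
    (hp : IsLeastNormPoint C p) (hq : IsLeastNormPoint C q) : p = q := by
  by_contra hne
  have hnorm : ‖p‖ = ‖q‖ := le_antisymm (hp.2 hq.1) (hq.2 hp.1)
  have hmid : (1 / 2 : ℝ) • (p + q) ∈ C := by
    rw [smul_add]
    exact hC hp.1 hq.1 (by norm_num) (by norm_num) (by norm_num)
  exact ((norm_midpoint_lt_iff hnorm).2 hne).not_ge (hp.2 hmid)

theorem IsLeastNormPoint.exists_erase [FiniteDimensional ℝ V] [DecidableEq ι] {K : ι → Set V}
    {G : Finset ι} (hG : finrank ℝ V + 1 ≤ #G) (hK : ∀ i ∈ G, Convex ℝ (K i)) {p : V}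
    (hp : IsLeastNormPoint (⋂ i ∈ G, K i) p) :
    ∃ i ∈ G, IsLeastNormPoint (⋂ j ∈ G.erase i, K j) p := by
  by_contra! hno
  have hcloser : ∀ i ∈ G, (Metric.ball 0 ‖p‖ ∩ ⋂ j ∈ G.erase i, K j).Nonempty := fun i hi => by
    by_contra! hempty
    refine hno i hi ⟨Set.biInter_subset_biInter_left (Finset.erase_subset i G) hp.1,
      fun q hq => show ‖p‖ ≤ ‖q‖ from ?_⟩
    by_contra! hlt
    exact hempty.le ⟨mem_ball_zero_iff.2 hlt, hq⟩
  obtain ⟨q, hqball, hq⟩ := inter_biInter_nonempty_of_forall_erase hG hK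
    (convex_ball 0 ‖p‖) ⟨p, hp.1⟩ hcloser
  exact (mem_ball_zero_iff.1 hqball).not_ge (hp.2 hq)

end LeastNorm

section FractionalHelly

variable {ι : Type*} {F : Finset ι} {S : Finset (Finset ι)} {a : ℝ}

theorem fractional_helly_of_isClosed {V : Type*} [NormedAddCommGroup V] [NormedSpace ℝ V]
    [StrictConvexSpace ℝ V] [FiniteDimensional ℝ V] {K : ι → Set V}
    (hclosed : ∀ i ∈ F, IsClosed (K i)) (hK : ∀ i ∈ F, Convex ℝ (K i))
    (hF : finrank ℝ V + 1 ≤ #F) (hS : S ⊆ F.powersetCard (finrank ℝ V + 1))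
    (hinter : ∀ G ∈ S, (⋂ i ∈ G, K i).Nonempty) (ha : 0 ≤ a)
    (hcard : a * (#F).choose (finrank ℝ V + 1) ≤ #S) :
    ∃ F' ⊆ F, a / (finrank ℝ V + 1) ^ 2 * #F ≤ #F' ∧ (⋂ i ∈ F', K i).Nonempty := by
  classical
  have hSF : ∀ G ∈ S, G ⊆ F := fun G hG => (Finset.mem_powersetCard.1 (hS hG)).1
  have hbase : ∀ G ∈ S, ∃ i ∈ G, ∃ p ∈ ⋂ j ∈ G, K j,
      IsLeastNormPoint (⋂ j ∈ G.erase i, K j) p := fun G hG => by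
    have : ProperSpace V := FiniteDimensional.proper ℝ V
    obtain ⟨p, hp⟩ := exists_isLeastNormPoint
      (isClosed_biInter fun i hi => hclosed i (hSF G hG hi)) (hinter G hG)
    obtain ⟨i, hi, hpi⟩ := hp.exists_erase (Finset.mem_powersetCard.1 (hS hG)).2.ge
      fun i hi => hK i (hSF G hG hi)
    exact ⟨i, hi, p, hp.1, hpi⟩
  have : Nonempty ι := (Finset.card_pos.1 (by omega : 0 < #F)).to_type
  choose! e he p hp hleast using hbase
  obtain ⟨J, hJ⟩ := exists_card_fiber_erase_ge hF hS ha hcard he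
  set T : Finset (Finset ι) := {G ∈ S | G.erase (e G) = J}
  refine ⟨T.image e, Finset.image_subset_iff.2 fun G hG => ?_, ?_, ?_⟩
  · have hGS := (Finset.mem_filter.1 hG).1
    exact hSF G hGS (he G hGS)
  · rwa [Finset.card_image_of_injOn (injOn_filter_erase_eq he J)]
  rcases T.eq_empty_or_nonempty with hempty | ⟨G₀, hG₀⟩
  · simp [hempty]
  obtain ⟨hG₀S, rfl⟩ := Finset.mem_filter.1 hG₀
  have hconvex : Convex ℝ (⋂ j ∈ G₀.erase (e G₀), K j) :=
    convex_iInter₂ fun j hj => hK j (hSF G₀ hG₀S (Finset.mem_of_mem_erase hj))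
  refine ⟨p G₀, Set.mem_iInter₂.2 fun i hi => ?_⟩
  obtain ⟨G, hG, rfl⟩ := Finset.mem_image.1 hi
  obtain ⟨hGS, hGerase⟩ := Finset.mem_filter.1 hG
  have hpG : p G₀ = p G := (hleast G₀ hG₀S).eq hconvex (hGerase ▸ hleast G hGS)
  exact hpG ▸ Set.mem_iInter₂.1 (hp G hGS) (e G) (he G hGS)

variable {E : Type*} [AddCommGroup E] [Module ℝ E] [FiniteDimensional ℝ E] {K : ι → Set E}

theorem fractional_helly_s9 (hK : ∀ i ∈ F, Convex ℝ (K i)) (hF : finrank ℝ E + 1 ≤ #F)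
    (hS : S ⊆ F.powersetCard (finrank ℝ E + 1)) (hinter : ∀ G ∈ S, (⋂ i ∈ G, K i).Nonempty)
    (ha : 0 ≤ a) (hcard : a * (#F).choose (finrank ℝ E + 1) ≤ #S) :
    ∃ F' ⊆ F, a / (finrank ℝ E + 1) ^ 2 * #F ≤ #F' ∧ (⋂ i ∈ F', K i).Nonempty := by
  let V := EuclideanSpace ℝ (Fin (finrank ℝ E))
  have hV : finrank ℝ V = finrank ℝ E := finrank_euclideanSpace_fin
  let φ : E ≃ₗ[ℝ] V := LinearEquiv.ofFinrankEq E V hV.symm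
  choose! x hx using hinter
  -- Closedness is gained by shrinking each `K i` to the convex hull of the chosen points in it.
  let P : ι → Set V := fun i => convexHull ℝ ((φ ∘ x) '' {G | G ∈ S ∧ i ∈ G})
  have hPclosed : ∀ i ∈ F, IsClosed (P i) := fun i _ =>
    ((S.finite_toSet.subset fun _ hG => hG.1).image _).isClosed_convexHull ℝ
  have hPinter : ∀ G ∈ S, (⋂ i ∈ G, P i).Nonempty := fun G hG =>
    ⟨φ (x G), Set.mem_iInter₂.2 fun i hi =>
      subset_convexHull ℝ _ (Set.mem_image_of_mem _ ⟨hG, hi⟩)⟩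
  have hPK : ∀ i ∈ F, P i ⊆ φ.symm ⁻¹' K i := fun i hi => by
    refine convexHull_min ?_ ((hK i hi).linear_preimage φ.symm.toLinearMap)
    rintro _ ⟨G, ⟨hG, hiG⟩, rfl⟩
    simpa using Set.mem_iInter₂.1 (hx G hG) i hiG
  rw [← hV] at hF hS hcard ⊢
  obtain ⟨F', hF'F, hF'card, p, hp⟩ := fractional_helly_of_isClosed hPclosed
    (fun i _ => convex_convexHull ℝ _) hF hS hPinter ha hcard
  exact ⟨F', hF'F, hF'card, φ.symm p, Set.mem_iInter₂.2 fun i hi =>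
    hPK i (hF'F hi) (Set.mem_iInter₂.1 hp i hi)⟩

theorem fractional_helly_inter_hyperplane {ℓ : Module.Dual ℝ E} (hℓ : ℓ ≠ 0) (c : ℝ)
    (hK : ∀ i ∈ F, Convex ℝ (K i)) (hF : finrank ℝ E ≤ #F)
    (hS : S ⊆ F.powersetCard (finrank ℝ E))
    (hinter : ∀ G ∈ S, (ℓ ⁻¹' {c} ∩ ⋂ i ∈ G, K i).Nonempty) (ha : 0 ≤ a)
    (hcard : a * (#F).choose (finrank ℝ E) ≤ #S) :
    ∃ F' ⊆ F, a / finrank ℝ E ^ 2 * #F ≤ #F' ∧ (ℓ ⁻¹' {c} ∩ ⋂ i ∈ F', K i).Nonempty := by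
  have hker : finrank ℝ E = finrank ℝ ℓ.ker + 1 :=
    (Module.Dual.finrank_ker_add_one_of_ne_zero hℓ).symm
  obtain ⟨z, hz⟩ := ℓ.surjective hℓ c
  let L : ι → Set ℓ.ker := fun i => {w | z + (w : E) ∈ K i}
  have hL : ∀ i ∈ F, Convex ℝ (L i) := fun i hi =>
    ((hK i hi).translate_preimage_right z).linear_preimage ℓ.ker.subtype
  have hLinter : ∀ G ∈ S, (⋂ i ∈ G, L i).Nonempty := fun G hG => by
    obtain ⟨y, hyc, hy⟩ := hinter G hG
    have hyz : y - z ∈ ℓ.ker := by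
      rw [LinearMap.mem_ker, map_sub, hz, show ℓ y = c from hyc, sub_self]
    refine ⟨⟨y - z, hyz⟩, Set.mem_iInter₂.2 fun i hi => ?_⟩
    simpa [L] using Set.mem_iInter₂.1 hy i hi
  rw [hker] at hF hS hcard ⊢
  obtain ⟨F', hF'F, hF'card, w, hw⟩ := fractional_helly_s9 hL hF hS hLinter ha hcard
  refine ⟨F', hF'F, by exact_mod_cast hF'card, z + w, ?_, Set.mem_iInter₂.2 fun i hi =>
    Set.mem_iInter₂.1 hw i hi⟩
  simp [hz]

end FractionalHelly

section Directions

variable {V : Type*} [NormedAddCommGroup V] [InnerProductSpace ℝ V]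

theorem one_sub_dist_le_inner {u v : V} (hu : ‖u‖ = 1) : 1 - dist u v ≤ ⟪u, v⟫_ℝ := by
  have hle : ⟪u, u - v⟫_ℝ ≤ ‖u‖ * ‖u - v‖ := real_inner_le_norm u (u - v)
  rw [inner_sub_right, real_inner_self_eq_norm_sq, hu, ← dist_eq_norm] at hle
  linarith

theorem exists_finset_sphere_mul_norm_le_inner (V : Type*) [NormedAddCommGroup V]
    [InnerProductSpace ℝ V] [FiniteDimensional ℝ V] {t : ℝ} (ht : t < 1) :
    ∃ N : Finset V, (∀ u ∈ N, ‖u‖ = 1) ∧ ∀ z ≠ 0, ∃ u ∈ N, t * ‖z‖ ≤ ⟪u, z⟫_ℝ := by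
  have : ProperSpace V := FiniteDimensional.proper ℝ V
  obtain ⟨N, hNsphere, hNfin, hcover⟩ :=
    finite_cover_balls_of_compact (isCompact_sphere (0 : V) 1) (sub_pos.2 ht)
  have hNnorm : ∀ u ∈ N, ‖u‖ = 1 := fun u hu => mem_sphere_zero_iff_norm.1 (hNsphere hu)
  refine ⟨hNfin.toFinset, by simpa using hNnorm, fun z hz => ?_⟩
  have hunit : ‖z‖⁻¹ • z ∈ Metric.sphere (0 : V) 1 := by
    simp [norm_smul, norm_ne_zero_iff.2 hz]
  obtain ⟨u, hu, hdist⟩ := Set.mem_iUnion₂.1 (hcover hunit)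
  rw [Metric.mem_ball'] at hdist
  have hinner : t ≤ ‖z‖⁻¹ * ⟪u, z⟫_ℝ := by
    rw [← real_inner_smul_right]
    linarith [one_sub_dist_le_inner (v := ‖z‖⁻¹ • z) (hNnorm u hu)]
  refine ⟨u, hNfin.mem_toFinset.2 hu, ?_⟩
  rwa [mul_comm, ← le_inv_mul_iff₀ (norm_pos_iff.2 hz)]

theorem exists_inner_sub_eq {K : Set V} (hK : Convex ℝ K) {N : Finset V} {t c : ℝ} (ht : 0 < t)
    (hc : 0 ≤ c) (hN : ∀ z ≠ 0, ∃ u ∈ N, t * ‖z‖ ≤ ⟪u, z⟫_ℝ) (hdiam : c < t * Metric.diam K) :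
    ∃ u ∈ N, ∃ x ∈ K, ∃ y ∈ K, ⟪u, x - y⟫_ℝ = c := by
  obtain ⟨x, hx, y, hy, hxy⟩ : ∃ x ∈ K, ∃ y ∈ K, c / t < dist x y := by
    by_contra! hle
    refine hdiam.not_ge ((le_div_iff₀' ht).1 ?_)
    exact Metric.diam_le_of_forall_dist_le (by positivity) hle
  rw [dist_eq_norm, div_lt_iff₀' ht] at hxy
  obtain ⟨u, hu, hle⟩ := hN (x - y) fun h => by simp [h] at hxy; linarith
  have hcont : ContinuousOn (fun w => ⟪u, x - w⟫_ℝ) K := by fun_prop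
  obtain ⟨w, hw, hwc⟩ := hK.isPreconnected.intermediate_value hx hy hcont
    ⟨by simpa using hc, hxy.le.trans hle⟩
  exact ⟨u, hu, x, hx, w, hw, hwc⟩

theorem exists_common_direction {ι : Type*} {K : ι → Set V} {S : Finset (Finset ι)}
    {N : Finset V} (hNne : N.Nonempty) {t c b : ℝ} (ht : 0 < t) (hc : 0 ≤ c)
    (hN : ∀ z ≠ 0, ∃ u ∈ N, t * ‖z‖ ≤ ⟪u, z⟫_ℝ) (hK : ∀ G ∈ S, ∀ i ∈ G, Convex ℝ (K i))
    (hdiam : ∀ G ∈ S, c < t * Metric.diam (⋂ i ∈ G, K i)) (hb : b ≤ #S) :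
    ∃ u ∈ N, ∃ T ⊆ S, b / #N ≤ #T ∧
      ∀ G ∈ T, ∃ x ∈ ⋂ i ∈ G, K i, ∃ y ∈ ⋂ i ∈ G, K i, ⟪u, x - y⟫_ℝ = c := by
  classical
  have hdir : ∀ G ∈ S, ∃ u ∈ N, ∃ x ∈ ⋂ i ∈ G, K i, ∃ y ∈ ⋂ i ∈ G, K i, ⟪u, x - y⟫_ℝ = c :=
    fun G hG => exists_inner_sub_eq (convex_iInter₂ (hK G hG)) ht hc hN (hdiam G hG)
  choose! f hfN hf using hdir
  have hNcard : (#N : ℝ) ≠ 0 := by exact_mod_cast hNne.card_ne_zero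
  obtain ⟨u, hu, hfiber⟩ := Finset.exists_le_card_fiber_of_nsmul_le_card_of_maps_to hfN hNne
    (b := b / #N) (by rwa [nsmul_eq_mul, mul_div_cancel₀ _ hNcard])
  refine ⟨u, hu, _, Finset.filter_subset _ S, hfiber, fun G hG => ?_⟩
  obtain ⟨hGS, rfl⟩ := Finset.mem_filter.1 hG
  exact hf G hGS

theorem inner_le_diam {C : Set V} (hC : Bornology.IsBounded C) {u x y : V} (hu : ‖u‖ = 1)
    (hx : x ∈ C) (hy : y ∈ C) : ⟪u, x - y⟫_ℝ ≤ Metric.diam C :=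
  calc ⟪u, x - y⟫_ℝ ≤ ‖u‖ * ‖x - y‖ := real_inner_le_norm _ _
    _ = dist x y := by rw [hu, one_mul, dist_eq_norm]
    _ ≤ Metric.diam C := Metric.dist_le_diam_of_mem hC hx hy

end Directions

section Diameter

variable {ι V : Type*} [NormedAddCommGroup V] [InnerProductSpace ℝ V] [FiniteDimensional ℝ V]
  {K : ι → Set V} {F : Finset ι}

theorem fractional_helly_inner_sub_eq {S : Finset (Finset ι)} {a : ℝ} {u : V} (hu : u ≠ 0) (c : ℝ)
    (hK : ∀ i ∈ F, Convex ℝ (K i)) (hF : 2 * finrank ℝ V ≤ #F)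
    (hS : S ⊆ F.powersetCard (2 * finrank ℝ V))
    (hinter : ∀ G ∈ S, ∃ x ∈ ⋂ i ∈ G, K i, ∃ y ∈ ⋂ i ∈ G, K i, ⟪u, x - y⟫_ℝ = c) (ha : 0 ≤ a)
    (hcard : a * (#F).choose (2 * finrank ℝ V) ≤ #S) :
    ∃ F' ⊆ F, a / (2 * finrank ℝ V) ^ 2 * #F ≤ #F' ∧
      ∃ x ∈ ⋂ i ∈ F', K i, ∃ y ∈ ⋂ i ∈ F', K i, ⟪u, x - y⟫_ℝ = c := by
  let ℓ : Module.Dual ℝ (V × V) := innerₛₗ ℝ u ∘ₗ (LinearMap.fst ℝ V V - LinearMap.snd ℝ V V)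
  have hℓ : ℓ ≠ 0 := fun h => hu <| by simpa [ℓ] using LinearMap.congr_fun h (u, 0)
  have hV : 2 * finrank ℝ V = finrank ℝ (V × V) := by rw [Module.finrank_prod, two_mul]
  have hpairs : ∀ G : Finset ι, ⋂ i ∈ G, K i ×ˢ K i = (⋂ i ∈ G, K i) ×ˢ ⋂ i ∈ G, K i :=
    fun G => by ext; simp [forall_and]
  rw [hV] at hF hS hcard
  obtain ⟨F', hF'F, hF'card, ⟨x, y⟩, hxyc, hxy⟩ := fractional_helly_inter_hyperplane hℓ c
    (K := fun i => K i ×ˢ K i) (fun i hi => (hK i hi).prod (hK i hi)) hF hS (fun G hG => by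
      obtain ⟨x, hx, y, hy, hxy⟩ := hinter G hG
      exact ⟨(x, y), hxy, by rw [hpairs]; exact ⟨hx, hy⟩⟩) ha hcard
  rw [hpairs] at hxy
  refine ⟨F', hF'F, ?_, x, hxy.1, y, hxy.2, hxyc⟩
  rw [← hV] at hF'card
  exact_mod_cast hF'card

theorem fractional_helly_for_diameter_general {α δ : ℝ} (hα : 0 < α) (hδ0 : 0 < δ) (hδ1 : δ < 1)
    {d : ℕ} (hd : 0 < d) (hV : finrank ℝ V = d) :
    ∃ β : ℝ, 0 < β ∧ ∀ (K : ι → Set V) (F : Finset ι), 2 * d ≤ #F →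
      (∀ i ∈ F, Bornology.IsBounded (K i) ∧ Convex ℝ (K i)) →
      α * (#F).choose (2 * d) ≤
        {G : Finset ι | G ⊆ F ∧ #G = 2 * d ∧ 1 ≤ Metric.diam (⋂ i ∈ G, K i)}.ncard →
      ∃ F' ⊆ F, β * #F ≤ #F' ∧ 1 - δ ≤ Metric.diam (⋂ i ∈ F', K i) := by
  subst hV
  obtain ⟨N, hNnorm, hN⟩ :=
    exists_finset_sphere_mul_norm_le_inner V (show 1 - δ / 2 < 1 by linarith)
  have hNne : N.Nonempty := by
    have : Nontrivial V := Module.nontrivial_of_finrank_pos hd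
    obtain ⟨z, hz⟩ := exists_ne (0 : V)
    obtain ⟨u, hu, -⟩ := hN z hz
    exact ⟨u, hu⟩
  have hNpos : (0 : ℝ) < #N := by exact_mod_cast hNne.card_pos
  refine ⟨α / #N / (2 * finrank ℝ V) ^ 2, by positivity, fun K F hF hK hcount => ?_⟩
  let S := {G ∈ F.powersetCard (2 * finrank ℝ V) | 1 ≤ Metric.diam (⋂ i ∈ G, K i)}
  have hScoe : {G : Finset ι | G ⊆ F ∧ #G = 2 * finrank ℝ V ∧
      1 ≤ Metric.diam (⋂ i ∈ G, K i)} = S := by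
    ext G
    simp [S, and_assoc]
  rw [hScoe, Set.ncard_coe_finset] at hcount
  have hSF : S ⊆ F.powersetCard (2 * finrank ℝ V) := Finset.filter_subset _ _
  have hSdiam : ∀ G ∈ S, 1 - δ < (1 - δ / 2) * Metric.diam (⋂ i ∈ G, K i) := fun G hG => by
    nlinarith [(Finset.mem_filter.1 hG).2]
  obtain ⟨u, hu, T, hTS, hTcard, hT⟩ := exists_common_direction hNne (by linarith)
    (sub_nonneg.2 hδ1.le) hN
    (fun G hG i hi => (hK i ((Finset.mem_powersetCard.1 (hSF hG)).1 hi)).2) hSdiam hcount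
  obtain ⟨F', hF'F, hF'card, x, hx, y, hy, hxy⟩ := fractional_helly_inner_sub_eq
    (norm_ne_zero_iff.1 (by simp [hNnorm u hu])) (1 - δ) (fun i hi => (hK i hi).2) hF
    (hTS.trans hSF) hT (div_pos hα hNpos).le (by rwa [div_mul_eq_mul_div])
  have hFpos : (0 : ℝ) < #F := by exact_mod_cast (by omega : 0 < #F)
  have hF'pos : (0 : ℝ) < #F' := hF'card.trans_lt' (by positivity)
  obtain ⟨i, hi⟩ := Finset.card_pos.1 (by exact_mod_cast hF'pos)
  have hbdd : Bornology.IsBounded (⋂ i ∈ F', K i) :=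
    (hK i (hF'F hi)).1.subset (Set.biInter_subset_of_mem hi)
  exact ⟨F', hF'F, hF'card, hxy ▸ inner_le_diam hbdd (hNnorm u hu) hx hy⟩

end Diameter

/-- **Fractional Helly theorem for the diameter.**  For `α > 0`, `0 < δ < 1` and a positive
integer `d`, there is `β > 0` depending only on `α`, `d`, `δ` such that: for any finite family
`𝓕` of `n ≥ 2d` compact convex sets in `ℝ^d`, if at least `α · C(n, 2d)` of the `2d`-element
subfamilies have intersection of diameter at least one, then some subfamily of cardinality at
least `β n` has intersection of diameter at least `1 - δ`. -/
theorem fractional_helly_for_diameter (α : ℝ) (hα : 0 < α)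
    (δ : ℝ) (hδ0 : 0 < δ) (hδ1 : δ < 1) (d : ℕ) (hd : 0 < d) :
    ∃ β : ℝ, 0 < β ∧
      ∀ F : Finset (Set (EuclideanSpace ℝ (Fin d))),
        2 * d ≤ F.card →
        (∀ A ∈ F, IsCompact A ∧ Convex ℝ A) →
        α * (F.card.choose (2 * d) : ℝ) ≤
          ({G : Finset (Set (EuclideanSpace ℝ (Fin d))) |
            G ⊆ F ∧ G.card = 2 * d ∧
              1 ≤ Metric.diam (⋂₀ (G : Set (Set (EuclideanSpace ℝ (Fin d)))))}.ncard : ℝ) →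
        ∃ F' ⊆ F, β * (F.card : ℝ) ≤ (F'.card : ℝ) ∧
          1 - δ ≤ Metric.diam (⋂₀ (F' : Set (Set (EuclideanSpace ℝ (Fin d))))) := by
  obtain ⟨β, hβ, h⟩ := fractional_helly_for_diameter_general hα hδ0 hδ1 hd
    finrank_euclideanSpace_fin
  simp only [Set.sInter_eq_biInter, Finset.mem_coe]
  exact ⟨β, hβ, fun F hF hFc => h id F hF fun A hA => ⟨(hFc A hA).1.isBounded, (hFc A hA).2⟩⟩
end
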